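/- arXiv:1203.4450 — 4 statements merged into one kernel-verified Lean document; each statement's English description precedes it below -/
import Mathlib

section
/- Let (R,m) be a Noetherian local ring with infinite residue field k = R/m and let I be an ideal of R. Let x_1,…,x_s,y be a minimal generating set of I, where J=(x_1,…,x_s) is a reduction of I with reduction number r = r_J(I). Assume that x_1,…,x_s is an R-regular sequence and that the initial forms x_1*,…,x_{s-1}* form a gr_I(R)-regular sequence. Then there is a form Y^{r+1} − Σ_i X_i F_i, with F_1,…,F_s ∈ k[X_1,…,X_s,Y] homogeneous of degree r, such that the fiber cone F(I) ≅ k[X_1,…,X_s,Y]/(Y^{r+1} − Σ_i X_i F_i). In particular rt(F(I)) = r_J(I) + 1 = rt(I). -/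
set_option synthInstance.maxHeartbeats 1000000
set_option maxHeartbeats 1000000

open MvPolynomial

section Defs

variable {R : Type*} [CommRing R]

/-- The presentation of the Rees algebra of the ideal generated by `g`,
sending the `i`-th variable to `(g i) · t` inside `R[t]`. -/
noncomputable def reesPres {m : ℕ} (g : Fin m → R) :
    MvPolynomial (Fin m) R →ₐ[R] Polynomial R :=
  aeval fun i => Polynomial.C (g i) * Polynomial.X

/-- `Q`, the ideal of equations of the Rees algebra w.r.t. the generators `g`. -/
noncomputable def presKer {m : ℕ} (g : Fin m → R) : Ideal (MvPolynomial (Fin m) R) :=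
  RingHom.ker (reesPres g)

/-- `Q⟨d⟩`, the subideal of `Q` generated by the homogeneous equations of degree at most `d`. -/
noncomputable def presKerLe {m : ℕ} (g : Fin m → R) (d : ℕ) : Ideal (MvPolynomial (Fin m) R) :=
  Ideal.span {F | F ∈ presKer g ∧ ∃ k ≤ d, F.IsHomogeneous k}

/-- The ideal `I·R(I)` of the Rees algebra `R(I) = R[It] ⊆ R[t]`. -/
noncomputable def grIdeal (I : Ideal R) : Ideal (reesAlgebra I) :=
  Ideal.span ((algebraMap R (reesAlgebra I)) '' (I : Set R))

/-- The associated graded ring `gr_I(R) = ⊕ₙ Iⁿ/Iⁿ⁺¹`, realized as `R(I)/I·R(I)`. -/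
abbrev GrRing (I : Ideal R) := reesAlgebra I ⧸ grIdeal I

variable [IsLocalRing R]

/-- The ideal of equations of the fiber cone `F(I) = ⊕ₙ Iⁿ/mIⁿ` with respect to the
generators `g`, namely the image of `Q` in `k[X₁,…,Xₘ]`, `k = R/m` the residue field. -/
noncomputable def fiberKer {m : ℕ} (g : Fin m → R) :
    Ideal (MvPolynomial (Fin m) (IsLocalRing.ResidueField R)) :=
  Ideal.map (MvPolynomial.map (IsLocalRing.residue R)) (presKer g)

/-- The subideal of `fiberKer g` generated by its homogeneous elements of degree `≤ d`. -/
noncomputable def fiberKerLe {m : ℕ} (g : Fin m → R) (d : ℕ) :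
    Ideal (MvPolynomial (Fin m) (IsLocalRing.ResidueField R)) :=
  Ideal.span {F | F ∈ fiberKer g ∧ ∃ k ≤ d, F.IsHomogeneous k}

end Defs

open MvPolynomial

section P1
open Finset
variable {R : Type*} [CommRing R]

noncomputable def ww (x v : ℕ → R) (i : ℕ) : Polynomial R :=
  Polynomial.C (x i) - Polynomial.X * Polynomial.C (v i)

lemma ww_coeff0 (x v : ℕ → R) (i : ℕ) (a : Polynomial R) :
    (ww x v i * a).coeff 0 = x i * a.coeff 0 := by
  simp [ww, Polynomial.mul_coeff_zero]

lemma ww_sum_coeff0 (x v : ℕ → R) (j : ℕ) (a : ℕ → Polynomial R) :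
    (∑ i ∈ range j, ww x v i * a i).coeff 0 = ∑ i ∈ range j, x i * (a i).coeff 0 := by
  rw [Polynomial.finsetSum_coeff]
  exact Finset.sum_congr rfl fun i _ => ww_coeff0 x v i _

lemma sub_ww_dvd (x v : ℕ → R) (j : ℕ) (z : Polynomial R) (c : ℕ → R)
    (h : z.coeff 0 = ∑ i ∈ range j, x i * c i) :
    ∃ z', z = ∑ i ∈ range j, ww x v i * Polynomial.C (c i) + Polynomial.X * z' := by
  have : Polynomial.X ∣ z - ∑ i ∈ range j, ww x v i * Polynomial.C (c i) := by
    rw [Polynomial.X_dvd_iff, Polynomial.coeff_sub, ww_sum_coeff0, h]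
    simp
  obtain ⟨z', hz'⟩ := this
  exact ⟨z', by rw [← hz']; ring⟩

lemma Zlem (x v : ℕ → R) (t : ℕ)
    (hR : ∀ j < t, ∀ (a : R) (b : ℕ → R), x j * a = ∑ i ∈ range j, x i * b i →
      ∃ c : ℕ → R, a = ∑ i ∈ range j, x i * c i) :
    ∀ j ≤ t, ∀ (z : Polynomial R) (a : ℕ → Polynomial R),
      Polynomial.X * z = ∑ i ∈ range j, ww x v i * a i →
      ∃ a' : ℕ → Polynomial R, z = ∑ i ∈ range j, ww x v i * a' i := by
  intro j
  induction j with
  | zero =>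
    intro _ z a h
    refine ⟨0, ?_⟩
    simp only [range_zero, sum_empty] at h ⊢
    rw [mul_comm] at h
    exact (Polynomial.monic_X.mul_left_eq_zero_iff).1 h
  | succ j ih =>
    intro hj z a h
    rw [sum_range_succ] at h
    have h0 := congrArg (fun p => Polynomial.coeff p 0) h
    simp only [Polynomial.coeff_add, ww_sum_coeff0, ww_coeff0, Polynomial.coeff_X_mul_zero] at h0
    obtain ⟨c, hc⟩ := hR j (by omega) ((a j).coeff 0) (fun i => - (a i).coeff 0) (by
      simp only [mul_neg, sum_neg_distrib]; linear_combination -h0)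
    obtain ⟨a', ha'⟩ := sub_ww_dvd x v j (a j) c hc
    obtain ⟨d, hd⟩ := ih (by omega) (z - ww x v j * a')
      (fun i => a i + Polynomial.C (c i) * ww x v j) (by
        simp only [mul_add, sum_add_distrib]
        have : ∑ i ∈ range j, ww x v i * (Polynomial.C (c i) * ww x v j)
          = (∑ i ∈ range j, ww x v i * Polynomial.C (c i)) * ww x v j := by
          rw [sum_mul]; exact sum_congr rfl fun i _ => by ring
        rw [this]
        linear_combination h + ww x v j * ha')
    refine ⟨fun i => if i = j then a' else d i, ?_⟩
    rw [sum_range_succ, sum_congr rfl (g := fun i => ww x v i * d i), ← hd]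
    · simp
    · intro i hi
      have := mem_range.1 hi
      simp [show i ≠ j by omega]

/-- cancellation up to `u^N` -/
lemma Elem (x v : ℕ → R) (t : ℕ) (q : R)
    (hR : ∀ j < t, ∀ (a : R) (b : ℕ → R), x j * a = ∑ i ∈ range j, x i * b i →
      ∃ c : ℕ → R, a = ∑ i ∈ range j, x i * c i)
    (hq : ∀ (a : R) (b : ℕ → R), q * a = ∑ i ∈ range t, x i * b i →
      ∃ c : ℕ → R, a = ∑ i ∈ range t, x i * c i) (N : ℕ) :
    ∀ (W : Polynomial R) (a : ℕ → Polynomial R),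
      Polynomial.C q * W = ∑ i ∈ range t, ww x v i * a i →
      ∃ (a' : ℕ → Polynomial R) (W' : Polynomial R),
        W = ∑ i ∈ range t, ww x v i * a' i + Polynomial.X ^ N * W' := by
  induction N with
  | zero => intro W a _; exact ⟨0, W, by simp⟩
  | succ N ih =>
    intro W a h
    have h0 := congrArg (fun p => Polynomial.coeff p 0) h
    simp only [ww_sum_coeff0, Polynomial.coeff_C_mul] at h0
    obtain ⟨c, hc⟩ := hq _ _ h0
    obtain ⟨W1, hW1⟩ := sub_ww_dvd x v t W c hc
    obtain ⟨d, hd⟩ := Zlem x v t hR t le_rfl (Polynomial.C q * W1)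
      (fun i => a i - Polynomial.C q * Polynomial.C (c i)) (by
        simp only [mul_sub, sum_sub_distrib]
        have : ∑ i ∈ range t, ww x v i * (Polynomial.C q * Polynomial.C (c i))
          = (∑ i ∈ range t, ww x v i * Polynomial.C (c i)) * Polynomial.C q := by
          rw [sum_mul]; exact sum_congr rfl fun i _ => by ring
        rw [this]
        linear_combination h - Polynomial.C q * hW1)
    obtain ⟨a', W', h'⟩ := ih W1 d hd
    refine ⟨fun i => Polynomial.C (c i) + Polynomial.X * a' i, W', ?_⟩
    simp only [mul_add, sum_add_distrib]
    have : ∑ i ∈ range t, ww x v i * (Polynomial.X * a' i)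
          = (∑ i ∈ range t, ww x v i * a' i) * Polynomial.X := by
          rw [sum_mul]; exact sum_congr rfl fun i _ => by ring
    rw [this, hW1, h']
    ring

lemma Vlem (x v : ℕ → R) (t : ℕ) (A B : Ideal R) (hBA : B ≤ A)
    (hR : ∀ j < t, ∀ (a : R) (b : ℕ → R), x j * a = ∑ i ∈ range j, x i * b i →
      ∃ c : ℕ → R, a = ∑ i ∈ range j, x i * c i)
    (hV : ∀ (b : ℕ → R), ∑ i ∈ range t, x i * b i ∈ A →
      ∃ c : ℕ → R, (∀ i < t, x i * c i ∈ B ∧ v i * c i ∈ B) ∧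
        ∑ i ∈ range t, x i * b i = ∑ i ∈ range t, x i * c i) (N : ℕ) :
    ∀ (a : ℕ → Polynomial R), (∀ m < N, (∑ i ∈ range t, ww x v i * a i).coeff m ∈ A) →
      (∀ m < N, (∑ i ∈ range t, ww x v i * a i).coeff m ∈ B) := by
  induction N with
  | zero => intro a _ m hm; omega
  | succ N ih =>
    intro a h m hm
    have h0 := h 0 (by omega)
    rw [ww_sum_coeff0] at h0
    obtain ⟨c, hcB, hc⟩ := hV _ h0
    have hc' := ww_sum_coeff0 x v t a
    rw [hc] at hc'
    obtain ⟨z, hz⟩ := sub_ww_dvd x v t _ c hc'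
    obtain ⟨d, hd⟩ := Zlem x v t hR t le_rfl z (fun i => a i - Polynomial.C (c i)) (by
        simp only [mul_sub, sum_sub_distrib]
        linear_combination -hz)
    have key : ∀ n, (∑ i ∈ range t, ww x v i * Polynomial.C (c i)).coeff n ∈ B := by
      intro n
      rw [Polynomial.finsetSum_coeff]
      refine Ideal.sum_mem _ fun i hi => ?_
      obtain ⟨h1, h2⟩ := hcB i (mem_range.1 hi)
      rw [Polynomial.coeff_mul_C, ww, Polynomial.coeff_sub, sub_mul]
      refine Ideal.sub_mem _ ?_ ?_
      · rw [Polynomial.coeff_C]; split_ifs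
        · exact h1
        · simp
      · rw [Polynomial.coeff_mul_C, Polynomial.coeff_X]; split_ifs
        · simpa using h2
        · simp
    rw [hz, Polynomial.coeff_add]
    refine Ideal.add_mem _ (key m) ?_
    cases m with
    | zero => simp
    | succ m =>
      rw [Polynomial.coeff_X_mul, hd]
      refine ih d (fun m hm => ?_) m (by omega)
      rw [← hd]
      have := h (m+1) (by omega)
      rw [hz, Polynomial.coeff_add, Polynomial.coeff_X_mul] at this
      exact (Ideal.add_mem_iff_right _ (hBA (key _))).1 this

/-- determinant trick -/
lemma CHlem {B L : Type*} [CommRing B] [CommRing L] [Algebra B L] (𝔭 : Ideal B) [𝔭.IsPrime]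
    (η : L) (r : ℕ) (f p : Polynomial B) (hf : f.Monic) (hfd : f.natDegree = r + 1)
    (hf0 : Polynomial.aeval η f = 0) (hp0 : Polynomial.aeval η p = 0)
    (hpd : p.natDegree ≤ r) (hp : ∃ i, p.coeff i ∉ 𝔭) :
    ∃ (g : B) (b : ℕ → B), g ∉ 𝔭 ∧
      algebraMap B L g * η ^ r = ∑ i ∈ range r, algebraMap B L (b i) * η ^ i := by
  classical
  set π := Ideal.Quotient.mk 𝔭
  set pb := p.map π with hpb
  have hpb0 : pb ≠ 0 := by
    obtain ⟨i, hi⟩ := hp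
    intro h
    apply hi
    have := congrArg (fun q => Polynomial.coeff q i) h
    simpa [hpb, π, Polynomial.coeff_map, Ideal.Quotient.eq_zero_iff_mem] using this
  set d := pb.natDegree with hd
  have hdr : d ≤ r := (Polynomial.natDegree_map_le).trans hpd
  let vv : ℕ → Polynomial B := fun j =>
    if j < d then Polynomial.X ^ j else (Polynomial.X ^ (j - d) * p) %ₘ f
  have hvη : ∀ j, d ≤ j → Polynomial.aeval η (vv j) = 0 := by
    intro j hj
    simp only [vv, if_neg (not_lt.2 hj)]
    have h := congrArg (Polynomial.aeval η) (Polynomial.modByMonic_add_div (Polynomial.X ^ (j - d) * p) f)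
    simpa [hf0, hp0] using h
  let M : Matrix (Fin (r+1)) (Fin (r+1)) B := fun i j => (vv j).coeff i
  have hnt : Nontrivial B := by
    refine ⟨0, 1, fun h => ?_⟩
    exact (Ideal.IsPrime.ne_top (I := 𝔭) inferInstance) ((Ideal.eq_top_iff_one _).2 (h ▸ 𝔭.zero_mem))
  have hdeg : ∀ j : Fin (r+1), (vv j).natDegree < r + 1 := by
    intro j
    simp only [vv]
    split_ifs with h
    · simpa using Nat.le_of_lt_succ j.2
    · exact lt_of_lt_of_eq (Polynomial.natDegree_modByMonic_lt _ hf (by intro h; simp [h] at hfd)) hfd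
  have hmapv : ∀ j : Fin (r+1), ¬ ((j:ℕ) < d) → (vv j).map π = Polynomial.X ^ ((j:ℕ) - d) * pb := by
    intro j hj
    simp only [vv, if_neg hj]
    rw [Polynomial.map_modByMonic _ hf, Polynomial.map_mul, Polynomial.map_pow, Polynomial.map_X,
      (Polynomial.modByMonic_eq_self_iff (hf.map _))]
    apply Polynomial.degree_lt_degree
    rw [hf.natDegree_map, hfd]
    refine lt_of_le_of_lt Polynomial.natDegree_mul_le ?_
    simp only [Polynomial.natDegree_X_pow]
    have := j.2
    rw [← hpb, ← hd]
    omega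
  have hdet : π M.det = ∏ i, π (M i i) := by
    rw [RingHom.map_det]
    rw [Matrix.det_of_isUpperTriangular]
    · rfl
    · intro i j hij
      simp only [id] at hij
      show π ((vv j).coeff i) = 0
      by_cases h : (j:ℕ) < d
      · simp only [vv, if_pos h, Polynomial.coeff_X_pow]
        rw [if_neg (by have := Fin.lt_def.1 hij; omega), map_zero]
      · rw [← Polynomial.coeff_map, hmapv j h]
        apply Polynomial.coeff_eq_zero_of_natDegree_lt
        refine lt_of_le_of_lt Polynomial.natDegree_mul_le ?_
        simp only [Polynomial.natDegree_X_pow]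
        have := Fin.lt_def.1 hij
        omega
  have hdetp : M.det ∉ 𝔭 := by
    rw [← Ideal.Quotient.eq_zero_iff_mem]
    change ¬ (π M.det = 0)
    rw [hdet, Finset.prod_eq_zero_iff]
    rintro ⟨i, -, hi⟩
    change π ((vv i).coeff i) = 0 at hi
    by_cases h : (i:ℕ) < d
    · simp [vv, if_pos h] at hi
    · rw [← Polynomial.coeff_map, hmapv i h] at hi
      have : (i:ℕ) = d + ((i:ℕ) - d) := by omega
      rw [this, show d + ((i:ℕ) - d) - d = (i:ℕ) - d by omega, Polynomial.coeff_X_pow_mul] at hi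
      exact hpb0 (Polynomial.leadingCoeff_eq_zero.1 hi)
  have hsum : Polynomial.C M.det * Polynomial.X ^ r
      = ∑ j : Fin (r+1), Polynomial.C (M.adjugate j (Fin.last r)) * vv j := by
    ext n
    rw [Polynomial.coeff_C_mul, Polynomial.coeff_X_pow, Polynomial.finsetSum_coeff]
    simp only [Polynomial.coeff_C_mul]
    by_cases hn : n < r + 1
    · have := congrFun (congrFun (Matrix.mul_adjugate M) ⟨n, hn⟩) (Fin.last r)
      rw [Matrix.mul_apply] at this
      simp only [M, Matrix.smul_apply, Matrix.one_apply, Fin.ext_iff, Fin.val_last, smul_eq_mul] at this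
      rw [← this]
      exact Finset.sum_congr rfl fun i _ => mul_comm _ _
    · rw [if_neg (by omega), mul_zero, Finset.sum_eq_zero]
      intro i _
      rw [Polynomial.coeff_eq_zero_of_natDegree_lt (by have := hdeg i; omega), mul_zero]
  have hη := congrArg (Polynomial.aeval η) hsum
  rw [map_sum] at hη
  simp only [map_mul, Polynomial.aeval_C, map_pow, Polynomial.aeval_X] at hη
  refine ⟨M.det, fun j => if h : j < d then M.adjugate ⟨j, by omega⟩ (Fin.last r) else 0, hdetp, ?_⟩
  rw [hη, Fin.sum_univ_castSucc, hvη _ (by simpa using hdr), mul_zero, add_zero, Finset.sum_range]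
  refine Finset.sum_congr rfl fun i _ => ?_
  by_cases h : (i:ℕ) < d
  · simp only [dif_pos h]
    simp [vv, h]
    rfl
  · simp only [dif_neg h]
    rw [hvη _ (by simpa using not_lt.1 h)]
    simp
end P1


section P2
open Finset
variable {R : Type*} [CommRing R]

lemma reesPres_hom {m : ℕ} (g : Fin m → R) {n : ℕ} (P : MvPolynomial (Fin m) R)
    (hP : P.IsHomogeneous n) : reesPres g P = Polynomial.C (eval g P) * Polynomial.X ^ n := by
  rw [reesPres, aeval_def, eval₂_eq', eval_eq', map_sum, Finset.sum_mul]
  refine Finset.sum_congr rfl fun d hd => ?_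
  have hdn : ∑ i, d i = n := by
    have := hP (mem_support_iff.1 hd)
    rw [Finsupp.weight_apply, Finsupp.sum_fintype _ _ (by simp)] at this
    simpa using this
  simp only [mul_pow, Finset.prod_mul_distrib, Finset.prod_pow_eq_pow_sum, hdn, map_mul, map_prod,
    map_pow, Polynomial.algebraMap_eq]
  ring

lemma mem_presKer_hom {m : ℕ} (g : Fin m → R) {n : ℕ} (P : MvPolynomial (Fin m) R)
    (hP : P.IsHomogeneous n) : P ∈ presKer g ↔ eval g P = 0 := by
  rw [presKer, RingHom.mem_ker]
  change reesPres g P = 0 ↔ _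
  rw [reesPres_hom g P hP, Polynomial.C_mul_X_pow_eq_monomial, Polynomial.monomial_eq_zero_iff]

lemma comp_mem_presKer {m : ℕ} (g : Fin m → R) (P : MvPolynomial (Fin m) R)
    (hP : P ∈ presKer g) (n : ℕ) : homogeneousComponent n P ∈ presKer g := by
  rw [mem_presKer_hom g _ (homogeneousComponent_isHomogeneous n P)]
  rw [presKer, RingHom.mem_ker] at hP
  change reesPres g P = 0 at hP
  by_cases hn : n ≤ P.totalDegree
  · conv at hP => lhs; rw [← sum_homogeneousComponent P]
    rw [map_sum] at hP
    have := congrArg (fun q => Polynomial.coeff q n) hP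
    simp only [Polynomial.finsetSum_coeff,
      fun i => reesPres_hom g _ (homogeneousComponent_isHomogeneous i P),
      Polynomial.coeff_C_mul, Polynomial.coeff_X_pow, mul_ite, mul_one, mul_zero,
      Polynomial.coeff_zero] at this
    rw [Finset.sum_ite_eq] at this
    simpa [Nat.lt_succ_iff, hn] using this
  · rw [homogeneousComponent_eq_zero _ _ (by omega), map_zero]

lemma mem_span_mul' {ι : Type*} [Fintype ι] (g : ι → R) (A : Ideal R) (z : R)
    (h : z ∈ Ideal.span (Set.range g) * A) : ∃ b : ι → R, (∀ i, b i ∈ A) ∧ z = ∑ i, g i * b i := by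
  rw [mul_comm] at h
  obtain ⟨a, ha, hz⟩ := (Submodule.mem_ideal_smul_span_iff_exists_sum A g z).1 h
  refine ⟨a, ha, ?_⟩
  rw [← hz, Finsupp.sum_fintype _ _ (by simp)]
  exact Finset.sum_congr rfl fun i _ => by rw [smul_eq_mul, mul_comm]

lemma exists_hom_eval {m : ℕ} (g : Fin m → R) (n : ℕ) :
    ∀ z ∈ Ideal.span (Set.range g) ^ n,
      ∃ P : MvPolynomial (Fin m) R, P.IsHomogeneous n ∧ eval g P = z := by
  induction n with
  | zero => intro z _; exact ⟨C z, isHomogeneous_C _ _, by simp⟩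
  | succ n ih =>
    intro z hz
    rw [pow_succ'] at hz
    obtain ⟨b, hb, rfl⟩ := mem_span_mul' g _ z hz
    choose Q hQ hQe using fun i => ih (b i) (hb i)
    refine ⟨∑ i, X i * Q i, ?_, by simp [hQe]⟩
    refine IsHomogeneous.sum _ _ _ fun i _ => ?_
    rw [add_comm]
    exact (isHomogeneous_X _ _).mul (hQ i)

lemma eval_hom_mem {m : ℕ} (g : Fin m → R) (I : Ideal R) (hg : ∀ i, g i ∈ I) (n : ℕ)
    (P : MvPolynomial (Fin m) R) (hP : P.IsHomogeneous n) : eval g P ∈ I ^ n := by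
  rw [eval_eq']
  refine Ideal.sum_mem _ fun d hd => Ideal.mul_mem_left _ _ ?_
  have hdn : ∑ i, d i = n := by
    have := hP (mem_support_iff.1 hd)
    rw [Finsupp.weight_apply, Finsupp.sum_fintype _ _ (by simp)] at this
    simpa using this
  rw [← hdn, ← Finset.prod_pow_eq_pow_sum]
  exact Ideal.prod_mem_prod fun i _ => Ideal.pow_mem_pow (hg i) _

lemma hom_decomp {m : ℕ} (n : ℕ) (P : MvPolynomial (Fin m) R) (hP : P.IsHomogeneous (n+1)) :
    ∃ D : Fin m → MvPolynomial (Fin m) R, (∀ i, (D i).IsHomogeneous n) ∧ P = ∑ i, X i * D i := by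
  classical
  have hmon : ∀ d : Fin m →₀ ℕ, ∃ D : Fin m → MvPolynomial (Fin m) R,
      (∀ i, (D i).IsHomogeneous n) ∧ monomial d (coeff d P) = ∑ i, X i * D i := by
    intro d
    by_cases hd : coeff d P = 0
    · exact ⟨0, fun i => isHomogeneous_zero _ _ _, by simp [hd]⟩
    have hdn : d.degree = n + 1 := by
      have := hP hd
      rwa [Finsupp.degree_eq_weight_one]
    obtain ⟨i, hi⟩ : ∃ i, d i ≠ 0 := by
      by_contra! h
      have : d = 0 := Finsupp.ext h
      simp [this] at hdn
    have hle : Finsupp.single i 1 ≤ d := by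
      rw [Finsupp.single_le_iff]; omega
    refine ⟨Pi.single i (monomial (d - Finsupp.single i 1) (coeff d P)), fun j => ?_, ?_⟩
    · by_cases hj : j = i
      · subst hj
        rw [Pi.single_eq_same]
        apply isHomogeneous_monomial
        have h2 : d.degree = (d - Finsupp.single j 1).degree + (Finsupp.single j 1).degree := by
          rw [← map_add, tsub_add_cancel_of_le hle]
        rw [Finsupp.degree_single] at h2
        omega
      · rw [Pi.single_eq_of_ne hj]; exact isHomogeneous_zero _ _ _
    · rw [Finset.sum_eq_single i]
      · rw [Pi.single_eq_same, X, monomial_mul, one_mul, add_tsub_cancel_of_le hle]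
      · intro j _ hj; rw [Pi.single_eq_of_ne hj, mul_zero]
      · simp
  choose D hD hDe using hmon
  refine ⟨fun i => ∑ d ∈ P.support, D d i, fun i => IsHomogeneous.sum _ _ _ fun d _ => hD d i, ?_⟩
  simp only [Finset.mul_sum]
  rw [Finset.sum_comm]
  conv_lhs => rw [P.as_sum]
  exact Finset.sum_congr rfl fun d _ => hDe d

noncomputable def XX (R : Type*) [CommRing R] (s : ℕ) (i : ℕ) : MvPolynomial (Fin (s+1)) R :=
  if h : i < s then X (Fin.castSucc ⟨i, h⟩) else 0

lemma XX_hom (s i : ℕ) : (XX R s i).IsHomogeneous 1 := by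
  unfold XX; split_ifs
  · exact isHomogeneous_X _ _
  · exact isHomogeneous_zero _ _ _

lemma XX_sum (s : ℕ) (D : ℕ → MvPolynomial (Fin (s+1)) R) :
    ∑ i ∈ range s, XX R s i * D i = ∑ i : Fin s, X i.castSucc * D i := by
  rw [Finset.sum_range]
  exact Finset.sum_congr rfl fun i _ => by simp [XX]

lemma hom_decomp2 {s : ℕ} (n : ℕ) : ∀ (P : MvPolynomial (Fin (s+1)) R) (_ : P.IsHomogeneous n),
    ∃ (c : R) (D : ℕ → MvPolynomial (Fin (s+1)) R), (n = 0 → ∀ i, D i = 0) ∧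
      (∀ i, (D i).IsHomogeneous (n-1)) ∧
      P = C c * X (Fin.last s) ^ n + ∑ i ∈ range s, XX R s i * D i := by
  induction n with
  | zero =>
    intro P hP
    refine ⟨coeff 0 P, 0, fun _ _ => rfl, fun i => isHomogeneous_zero _ _ _, ?_⟩
    have := totalDegree_eq_zero_iff_eq_C.1 (Nat.le_zero.1 hP.totalDegree_le)
    simpa using this
  | succ n ih =>
    intro P hP
    obtain ⟨D, hD, hPD⟩ := hom_decomp n P hP
    obtain ⟨c, E, hE0, hE, hDE⟩ := ih _ (hD (Fin.last s))
    refine ⟨c, fun i => (if h : i < s then D (Fin.castSucc ⟨i, h⟩) else 0)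
      + X (Fin.last s) * E i, by simp, fun i => ?_, ?_⟩
    · refine IsHomogeneous.add ?_ ?_
      · split_ifs
        · exact hD _
        · exact isHomogeneous_zero _ _ _
      · by_cases h : n = 0
        · rw [hE0 h, mul_zero]; exact isHomogeneous_zero _ _ _
        · have := (isHomogeneous_X R (Fin.last s)).mul (hE i)
          rwa [show 1 + (n - 1) = n + 1 - 1 by omega] at this
    · rw [hPD, Fin.sum_univ_castSucc, hDE, XX_sum]
      simp only [mul_add, sum_add_distrib, XX_sum]
      have : ∑ i : Fin s, X i.castSucc * (X (Fin.last s) * E i)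
        = X (Fin.last s) * ∑ i : Fin s, X i.castSucc * E i := by
        rw [mul_sum]; exact Finset.sum_congr rfl fun i _ => by ring
      rw [this]
      simp
      ring

/-- Valabrega--Valla -/
lemma VVlem (x : ℕ → R) (s : ℕ) (I : Ideal R) (hxI : ∀ i, x i ∈ I)
    (hG : ∀ j, j + 1 < s → ∀ (n : ℕ) (a : R) (b : ℕ → R), a ∈ I ^ n → (∀ i, b i ∈ I ^ n) →
      x j * a - ∑ i ∈ range j, x i * b i ∈ I ^ (n+2) →
      ∃ c : ℕ → R, a - ∑ i ∈ range j, x i * c i ∈ I ^ (n+1)) :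
    ∀ j, j < s → ∀ (n : ℕ) (b : ℕ → R), ∑ i ∈ range j, x i * b i ∈ I ^ (n+1) →
      ∃ c : ℕ → R, (∀ i, c i ∈ I ^ n) ∧ ∑ i ∈ range j, x i * b i = ∑ i ∈ range j, x i * c i := by
  intro j
  induction j with
  | zero => intro _ n b _; exact ⟨0, fun i => by simp, by simp⟩
  | succ j ih =>
    intro hj n b hb
    have key : ∀ l ≤ n, ∃ (b' : ℕ → R) (a : R), a ∈ I ^ l ∧
        ∑ i ∈ range (j+1), x i * b i = ∑ i ∈ range j, x i * b' i + x j * a := by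
      intro l
      induction l with
      | zero => intro _; exact ⟨b, b j, by simp, by rw [sum_range_succ]⟩
      | succ l ihl =>
        intro hl
        obtain ⟨b', a, ha, h⟩ := ihl (by omega)
        have hmem : ∑ i ∈ range j, x i * b' i ∈ I ^ (l+1) := by
          have e : ∑ i ∈ range j, x i * b' i = ∑ i ∈ range (j+1), x i * b i - x j * a := by
            rw [h]; ring
          rw [e]
          refine Ideal.sub_mem _ (Ideal.pow_le_pow_right (by omega) hb) ?_
          rw [pow_succ']
          exact Ideal.mul_mem_mul (hxI j) ha
        obtain ⟨c, hc, hce⟩ := ih (by omega) l b' hmem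
        obtain ⟨d, hd⟩ := hG j hj l a (fun i => - c i) ha (fun i => (I^l).neg_mem (hc i)) (by
          simp only [mul_neg, sum_neg_distrib]
          have e : x j * a - - ∑ i ∈ range j, x i * c i = ∑ i ∈ range (j+1), x i * b i := by
            rw [h, hce]; ring
          rw [e]
          exact Ideal.pow_le_pow_right (by omega) hb)
        refine ⟨fun i => b' i + x j * d i, _, hd, ?_⟩
        simp only [mul_add, sum_add_distrib]
        have : ∑ i ∈ range j, x i * (x j * d i) = x j * ∑ i ∈ range j, x i * d i := by
          rw [mul_sum]; exact sum_congr rfl fun i _ => by ring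
        rw [this, h]; ring
    obtain ⟨b', a, ha, h⟩ := key n le_rfl
    obtain ⟨c, hc, hce⟩ := ih (by omega) n b' (by
      have e : ∑ i ∈ range j, x i * b' i = ∑ i ∈ range (j+1), x i * b i - x j * a := by
        rw [h]; ring
      rw [e]
      refine Ideal.sub_mem _ hb ?_
      rw [pow_succ']
      exact Ideal.mul_mem_mul (hxI j) ha)
    refine ⟨fun i => if i = j then a else c i, fun i => ?_, ?_⟩
    · simp only []; split_ifs
      · exact ha
      · exact hc i
    · rw [h, hce, sum_range_succ]
      simp only [if_true]
      congr 1
      refine sum_congr rfl fun i hi => ?_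
      rw [if_neg (by have := mem_range.1 hi; omega)]

lemma Llem {m : ℕ} (g : Fin m → R) (Xs : ℕ → MvPolynomial (Fin m) R)
    (hXs : ∀ i, (Xs i).IsHomogeneous 1) (x : ℕ → R) (hx : ∀ i, x i = eval g (Xs i)) (s n : ℕ)
    (hR : ∀ j < s, ∀ (a : R) (b : ℕ → R), x j * a = ∑ i ∈ range j, x i * b i →
      ∃ c : ℕ → R, a = ∑ i ∈ range j, x i * c i)
    (hV : ∀ j, j < s → ∀ (n : ℕ) (b : ℕ → R),
      ∑ i ∈ range j, x i * b i ∈ Ideal.span (Set.range g) ^ (n+1) →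
      ∃ c : ℕ → R, (∀ i, c i ∈ Ideal.span (Set.range g) ^ n) ∧
        ∑ i ∈ range j, x i * b i = ∑ i ∈ range j, x i * c i) :
    ∀ j ≤ s, ∀ D : ℕ → MvPolynomial (Fin m) R, (∀ i, (D i).IsHomogeneous (n+1)) →
      ∑ i ∈ range j, Xs i * D i ∈ presKer g →
      ∑ i ∈ range j, Xs i * D i ∈ Ideal.span {P | P ∈ presKer g ∧ P.IsHomogeneous (n+1)} := by
  intro j
  induction j with
  | zero => intro _ D _ _; simp
  | succ j ih =>
    intro hj D hD hk
    have hk' := hk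
    rw [mem_presKer_hom g (n := n+2) _ (IsHomogeneous.sum _ _ _ fun i _ => by
      rw [show n + 2 = 1 + (n+1) by ring]; exact (hXs i).mul (hD i))] at hk'
    rw [sum_range_succ, map_add, map_sum] at hk'
    simp only [map_mul, ← hx] at hk'
    obtain ⟨c, hc⟩ := hR j (by omega) (eval g (D j)) (fun i => - eval g (D i)) (by
      simp only [mul_neg, sum_neg_distrib]; linear_combination hk')
    obtain ⟨e, he, hce⟩ := hV j (by omega) n c (by
      rw [← hc]
      exact eval_hom_mem g (Ideal.span (Set.range g))
        (fun i => Ideal.subset_span (Set.mem_range_self i)) _ _ (hD j))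
    choose E hE hEe using fun i => exists_hom_eval g n (e i) (he i)
    have hEh : ∀ i, (Xs i * E i).IsHomogeneous (n+1) := fun i => by
      rw [add_comm n 1]; exact (hXs i).mul (hE i)
    have hT : D j - ∑ i ∈ range j, Xs i * E i ∈ {P | P ∈ presKer g ∧ P.IsHomogeneous (n+1)} := by
      have hh : (D j - ∑ i ∈ range j, Xs i * E i).IsHomogeneous (n+1) :=
        (hD j).sub (IsHomogeneous.sum _ _ _ fun i _ => hEh i)
      refine ⟨?_, hh⟩
      rw [mem_presKer_hom g _ hh]
      simp only [map_sub, map_sum, map_mul, ← hx, hEe]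
      rw [hc, hce, sub_self]
    have hsplit : ∑ i ∈ range (j+1), Xs i * D i
        = Xs j * (D j - ∑ i ∈ range j, Xs i * E i)
          + ∑ i ∈ range j, Xs i * (D i + Xs j * E i) := by
      simp only [mul_add, sum_add_distrib, sum_range_succ]
      have : ∑ i ∈ range j, Xs i * (Xs j * E i) = Xs j * ∑ i ∈ range j, Xs i * E i := by
        rw [mul_sum]; exact sum_congr rfl fun i _ => by ring
      rw [this]; ring
    have h1 := Ideal.mul_mem_left _ (Xs j) (Ideal.subset_span hT)
    have h1k := Ideal.mul_mem_left (presKer g) (Xs j) hT.1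
    rw [hsplit] at hk ⊢
    refine Ideal.add_mem _ h1 (ih (by omega) _ (fun i => (hD i).add ?_) ?_)
    · rw [add_comm n 1]; exact (hXs j).mul (hE i)
    · exact (Ideal.add_mem_iff_right _ h1k).1 hk

lemma Blem {s : ℕ} (g : Fin (s+1) → R) (r : ℕ) (hr : 1 ≤ r) (x : ℕ → R)
    (hx : ∀ i, x i = eval g (XX R s i))
    (hR : ∀ j < s, ∀ (a : R) (b : ℕ → R), x j * a = ∑ i ∈ range j, x i * b i →
      ∃ c : ℕ → R, a = ∑ i ∈ range j, x i * c i)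
    (hV : ∀ j, j < s → ∀ (n : ℕ) (b : ℕ → R),
      ∑ i ∈ range j, x i * b i ∈ Ideal.span (Set.range g) ^ (n+1) →
      ∃ c : ℕ → R, (∀ i, c i ∈ Ideal.span (Set.range g) ^ n) ∧
        ∑ i ∈ range j, x i * b i = ∑ i ∈ range j, x i * c i)
    (F : ℕ → MvPolynomial (Fin (s+1)) R) (hF : ∀ i, (F i).IsHomogeneous r)
    (hfk : X (Fin.last s) ^ (r+1) - ∑ i ∈ range s, XX R s i * F i ∈ presKer g) :
    presKer g ≤ Ideal.span ({X (Fin.last s) ^ (r+1) - ∑ i ∈ range s, XX R s i * F i} ∪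
      {P | P ∈ presKer g ∧ ∃ k ≤ r, P.IsHomogeneous k}) := by
  set f := X (Fin.last s) ^ (r+1) - ∑ i ∈ range s, XX R s i * F i with hf
  set T := Ideal.span ({f} ∪ {P | P ∈ presKer g ∧ ∃ k ≤ r, P.IsHomogeneous k}) with hT
  have main : ∀ n, ∀ P ∈ presKer g, P.IsHomogeneous n → P ∈ T := by
    intro n
    induction n with
    | zero => intro P hP hh; exact Ideal.subset_span (Or.inr ⟨hP, 0, by omega, hh⟩)
    | succ n ih =>
      intro P hP hh
      by_cases hn : n + 1 ≤ r
      · exact Ideal.subset_span (Or.inr ⟨hP, _, hn, hh⟩)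
      obtain ⟨n, rfl⟩ : ∃ n', n = n' + 1 := ⟨n - 1, by omega⟩
      obtain ⟨c, D, -, hD, hPD⟩ := hom_decomp2 _ P hh
      obtain ⟨e, he⟩ : ∃ e, n + 1 = r + e := ⟨n + 1 - r, by omega⟩
      have hP2 : P = C c * X (Fin.last s) ^ e * f
          + ∑ i ∈ range s, XX R s i * (D i + C c * X (Fin.last s) ^ e * F i) := by
        simp only [mul_add, sum_add_distrib]
        have : ∑ i ∈ range s, XX R s i * (C c * X (Fin.last s) ^ e * F i)
            = C c * X (Fin.last s) ^ e * ∑ i ∈ range s, XX R s i * F i := by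
          rw [mul_sum]; exact sum_congr rfl fun i _ => by ring
        rw [this, hPD, hf, show n + 1 + 1 = r + 1 + e by omega]; ring
      have hfT : C c * X (Fin.last s) ^ e * f ∈ T :=
        Ideal.mul_mem_left _ _ (Ideal.subset_span (Or.inl rfl))
      have hfK : C c * X (Fin.last s) ^ e * f ∈ presKer g := Ideal.mul_mem_left _ _ hfk
      rw [hP2] at hP ⊢
      refine Ideal.add_mem _ hfT ?_
      have := Llem g (XX R s) (XX_hom s) x hx s n hR hV s le_rfl
        (fun i => D i + C c * X (Fin.last s) ^ e * F i) (fun i => (hD i).add (by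
          rw [show n + 1 + 1 - 1 = 0 + 1 * e + r by omega]
          exact ((isHomogeneous_C _ _).mul ((isHomogeneous_X _ _).pow e)).mul (hF i)))
        ((Ideal.add_mem_iff_right _ hfK).1 hP)
      refine (Ideal.span_le.2 ?_) this
      rintro Q ⟨hQ1, hQ2⟩
      exact ih Q hQ1 hQ2
  intro P hP
  rw [← sum_homogeneousComponent P]
  exact Ideal.sum_mem _ fun n _ => main n _ (comp_mem_presKer g P hP n)
    (homogeneousComponent_isHomogeneous n P)

end P2


section P3
open Finset
variable {R : Type*} [CommRing R]

def xe {s : ℕ} (x : Fin s → R) (i : ℕ) : R := if h : i < s then x ⟨i, h⟩ else 0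

lemma mem_ofList_take {s : ℕ} (x : Fin s → R) (j : ℕ) (z : R)
    (h : z ∈ Ideal.ofList ((List.ofFn x).take j)) :
    ∃ b : ℕ → R, z = ∑ i ∈ range j, xe x i * b i := by
  unfold Ideal.ofList at h
  induction h using Submodule.span_induction with
  | mem z hz =>
    simp only [Set.mem_ofPred_eq] at hz
    obtain ⟨i, hi, rfl⟩ := List.mem_iff_getElem.1 hz
    simp only [List.length_take, List.length_ofFn, lt_min_iff] at hi
    refine ⟨Pi.single i 1, ?_⟩
    rw [Finset.sum_eq_single i]
    · simp [xe, hi.2]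
    · intro k _ hk; rw [Pi.single_eq_of_ne hk, mul_zero]
    · intro h; exact absurd (mem_range.2 hi.1) h
  | zero => exact ⟨0, by simp⟩
  | add a b _ _ ha hb =>
    obtain ⟨c, rfl⟩ := ha
    obtain ⟨d, rfl⟩ := hb
    exact ⟨c + d, by simp [mul_add, sum_add_distrib]⟩
  | smul a b _ hb =>
    obtain ⟨d, rfl⟩ := hb
    refine ⟨fun i => a * d i, ?_⟩
    rw [smul_eq_mul, mul_sum]
    exact sum_congr rfl fun i _ => by ring

lemma ofList_take_mem {s : ℕ} (x : Fin s → R) (j : ℕ) (b : ℕ → R) :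
    ∑ i ∈ range j, xe x i * b i ∈ Ideal.ofList ((List.ofFn x).take j) := by
  refine Ideal.sum_mem _ fun i hi => Ideal.mul_mem_right _ _ ?_
  unfold xe
  split_ifs with h
  · refine Ideal.subset_span ?_
    simp only [Set.mem_ofPred_eq]
    refine List.mem_iff_getElem.2 ⟨i, ?_, ?_⟩
    · simpa using ⟨mem_range.1 hi, h⟩
    · simp
  · exact Ideal.zero_mem _

lemma reg_elem (rs : List R) (h : RingTheory.Sequence.IsWeaklyRegular R rs) (j : ℕ)
    (hj : j < rs.length) (a : R) (ha : rs[j] * a ∈ Ideal.ofList (rs.take j)) :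
    a ∈ Ideal.ofList (rs.take j) := by
  have h1 := h.regular_mod_prev j hj
  have e : (Ideal.ofList (rs.take j) • ⊤ : Submodule R R) = Ideal.ofList (rs.take j) := by
    simp
  have h2 := @h1 (Submodule.Quotient.mk a) 0 (by
    show rs[j] • (Submodule.Quotient.mk a) = rs[j] • _
    rw [smul_zero, ← Submodule.Quotient.mk_smul, Submodule.Quotient.mk_eq_zero, e]
    exact ha)
  rw [Submodule.Quotient.mk_eq_zero, e] at h2
  exact h2

lemma hR_of {s : ℕ} (x : Fin s → R) (h : RingTheory.Sequence.IsWeaklyRegular R (List.ofFn x)) :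
    ∀ j < s, ∀ (a : R) (b : ℕ → R), xe x j * a = ∑ i ∈ range j, xe x i * b i →
      ∃ c : ℕ → R, a = ∑ i ∈ range j, xe x i * c i := by
  intro j hj a b hab
  apply mem_ofList_take
  apply reg_elem _ h j (by simpa using hj)
  have : (List.ofFn x)[j]'(by simpa using hj) = xe x j := by simp [xe, hj]
  rw [this, hab]
  exact ofList_take_mem x j b

lemma grIdeal_coeff (I : Ideal R) (p : reesAlgebra I) (hp : p ∈ grIdeal I) :
    ∀ n : ℕ, (p : Polynomial R).coeff n ∈ I ^ (n+1) := by
  unfold grIdeal at hp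
  induction hp using Submodule.span_induction with
  | mem z hz =>
    intro n
    obtain ⟨a, ha, rfl⟩ := hz
    change (Polynomial.C a).coeff n ∈ _
    rw [Polynomial.coeff_C]
    split_ifs with h
    · subst h; simpa using ha
    · simp
  | zero => simp
  | add a b _ _ ha hb => intro n; simpa using Ideal.add_mem _ (ha n) (hb n)
  | smul a b _ hb =>
    intro n
    rw [smul_eq_mul]
    push_cast
    rw [Polynomial.coeff_mul]
    refine Ideal.sum_mem _ fun ij hij => ?_
    rw [← mem_antidiagonal.1 hij, add_assoc, pow_add]
    exact Ideal.mul_mem_mul ((mem_reesAlgebra_iff I _).1 a.2 _) (hb _)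

lemma monomial_grIdeal (I : Ideal R) (n : ℕ) (c : R) (hc : c ∈ I ^ (n+1)) :
    ∀ p : reesAlgebra I, (p : Polynomial R) = Polynomial.monomial n c → p ∈ grIdeal I := by
  rw [pow_succ'] at hc
  induction hc using Submodule.mul_induction_on' with
  | mem_mul_mem d hd e he =>
    intro p hp
    have hm : Polynomial.monomial n e ∈ reesAlgebra I := reesAlgebra.monomial_mem.2 he
    have : p = algebraMap R (reesAlgebra I) d * ⟨_, hm⟩ := by
      apply Subtype.ext
      rw [hp]
      change _ = Polynomial.C d * Polynomial.monomial n e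
      rw [Polynomial.C_mul_monomial]
    rw [this]
    exact Ideal.mul_mem_right _ _ (Ideal.subset_span ⟨d, hd, rfl⟩)
  | add a ha b hb iha ihb =>
    intro p hp
    rw [← pow_succ'] at ha hb
    have hma : Polynomial.monomial n a ∈ reesAlgebra I :=
      reesAlgebra.monomial_mem.2 (Ideal.pow_le_pow_right (by omega) ha)
    have hmb : Polynomial.monomial n b ∈ reesAlgebra I :=
      reesAlgebra.monomial_mem.2 (Ideal.pow_le_pow_right (by omega) hb)
    have : p = ⟨_, hma⟩ + ⟨_, hmb⟩ := by
      apply Subtype.ext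
      rw [hp, map_add]
      rfl
    rw [this]
    exact Ideal.add_mem _ (iha _ rfl) (ihb _ rfl)

lemma hG_of (I : Ideal R) {s : ℕ} (x : Fin s → R)
    (ξ : Fin s → reesAlgebra I)
    (hξ : ∀ i, (ξ i : Polynomial R) = Polynomial.C (x i) * Polynomial.X)
    (h : RingTheory.Sequence.IsWeaklyRegular (GrRing I)
      ((List.ofFn fun i => Ideal.Quotient.mk (grIdeal I) (ξ i)).take (s - 1))) :
    ∀ j, j + 1 < s → ∀ (n : ℕ) (a : R) (b : ℕ → R), a ∈ I ^ n → (∀ i, b i ∈ I ^ n) →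
      xe x j * a - ∑ i ∈ range j, xe x i * b i ∈ I ^ (n+2) →
      ∃ c : ℕ → R, a - ∑ i ∈ range j, xe x i * c i ∈ I ^ (n+1) := by
  intro j hj n a b ha hb hab
  have hxe : ∀ i, ((xe ξ i : reesAlgebra I) : Polynomial R)
      = Polynomial.C (xe x i) * Polynomial.X := by
    intro i; unfold xe; split_ifs
    · exact hξ _
    · simp
  have hxem : ∀ i, xe (fun i => Ideal.Quotient.mk (grIdeal I) (ξ i)) i
      = Ideal.Quotient.mk (grIdeal I) (xe ξ i) := by
    intro i; unfold xe; split_ifs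
    · rfl
    · simp
  let A : reesAlgebra I := ⟨Polynomial.monomial n a, reesAlgebra.monomial_mem.2 ha⟩
  let Bb : ℕ → reesAlgebra I := fun i => ⟨Polynomial.monomial n (b i), reesAlgebra.monomial_mem.2 (hb i)⟩
  have hlen : j < ((List.ofFn fun i => Ideal.Quotient.mk (grIdeal I) (ξ i)).take (s - 1)).length := by
    simp; omega
  have key := reg_elem _ h j hlen (Ideal.Quotient.mk _ A)
  rw [List.take_take, min_eq_left (by omega)] at key
  have hget : ((List.ofFn fun i => Ideal.Quotient.mk (grIdeal I) (ξ i)).take (s - 1))[j]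
      = Ideal.Quotient.mk (grIdeal I) (xe ξ j) := by
    rw [← hxem]
    simp [xe, show j < s by omega]
  rw [hget] at key
  have hmem : Ideal.Quotient.mk (grIdeal I) (xe ξ j) * Ideal.Quotient.mk (grIdeal I) A
      = ∑ i ∈ range j, xe (fun i => Ideal.Quotient.mk (grIdeal I) (ξ i)) i
        * Ideal.Quotient.mk (grIdeal I) (Bb i) := by
    simp only [hxem]
    simp only [← map_mul, ← map_sum]
    rw [Ideal.Quotient.eq]
    refine monomial_grIdeal I (n+1) _ hab _ ?_
    push_cast
    simp only [hxe, A, Bb]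
    have hm : ∀ c d : R, Polynomial.C c * Polynomial.X * Polynomial.monomial n d
        = Polynomial.monomial (n+1) (c * d) := by
      intro c d
      rw [mul_assoc, Polynomial.X_mul_monomial, Polynomial.C_mul_monomial]
    simp only [hm, ← map_sum, ← map_sub]
  obtain ⟨γ, hγ⟩ := mem_ofList_take _ j _ (key (by rw [hmem]; exact ofList_take_mem _ _ _))
  choose Γ hΓ using fun i => Ideal.Quotient.mk_surjective (γ i)
  simp only [hxem, ← hΓ] at hγ
  simp only [← map_mul, ← map_sum] at hγ
  rw [Ideal.Quotient.eq] at hγ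
  have := grIdeal_coeff I _ hγ n
  refine ⟨fun i => (Polynomial.X * (Γ i : Polynomial R)).coeff n, ?_⟩
  push_cast at this
  simp only [hxe, A, mul_assoc, Polynomial.coeff_sub, Polynomial.finsetSum_coeff,
    Polynomial.coeff_C_mul, Polynomial.coeff_monomial_same] at this
  exact this
end P3


section P4
open Finset
variable {R : Type*} [CommRing R]

lemma hom_scale {m : ℕ} {A : Type*} [CommRing A] [Algebra R A] (ζ : Fin m → A) (c : A) {n : ℕ}
    (P : MvPolynomial (Fin m) R) (hP : P.IsHomogeneous n) :
    aeval (fun i => c * ζ i) P = c ^ n * aeval ζ P := by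
  rw [aeval_def, eval₂_eq', aeval_def, eval₂_eq', Finset.mul_sum]
  refine Finset.sum_congr rfl fun d hd => ?_
  have hdn : ∑ i, d i = n := by
    have := hP (mem_support_iff.1 hd)
    rw [Finsupp.weight_apply, Finsupp.sum_fintype _ _ (by simp)] at this
    simpa using this
  simp only [mul_pow, Finset.prod_mul_distrib, Finset.prod_pow_eq_pow_sum, hdn]
  ring

noncomputable def sb (t : ℕ) (l : Fin (t+2) → R) (i : Fin (t+2)) : Polynomial (Polynomial R) :=
  if (i : ℕ) < t then Polynomial.C (Polynomial.C (l i) * Polynomial.X)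
  else if (i : ℕ) = t then 1 else Polynomial.X

lemma sb_natDegree (t : ℕ) (l : Fin (t+2) → R) (i : Fin (t+2)) : (sb t l i).natDegree ≤ 1 := by
  unfold sb; split_ifs
  · rw [Polynomial.natDegree_C]; omega
  · simp
  · exact Polynomial.natDegree_X_le

lemma sb_aeval_natDegree (t : ℕ) (l : Fin (t+2) → R) {n : ℕ}
    (P : MvPolynomial (Fin (t+2)) R) (hP : P.IsHomogeneous n) :
    (aeval (sb t l) P).natDegree ≤ n := by
  rw [aeval_def, eval₂_eq']
  refine Polynomial.natDegree_sum_le_of_forall_le _ _ fun d hd => ?_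
  have hdn : ∑ i, d i = n := by
    have := hP (mem_support_iff.1 hd)
    rw [Finsupp.weight_apply, Finsupp.sum_fintype _ _ (by simp)] at this
    simpa using this
  refine Polynomial.natDegree_mul_le.trans ?_
  have h1 : (algebraMap R (Polynomial (Polynomial R)) (coeff d P)).natDegree = 0 := by
    rw [Polynomial.algebraMap_apply]; simp
  rw [h1, zero_add, ← hdn]
  refine (Polynomial.natDegree_prod_le _ _).trans (Finset.sum_le_sum fun i _ => ?_)
  refine Polynomial.natDegree_pow_le.trans ?_
  have := sb_natDegree t l i
  nlinarith

lemma sb_special (t : ℕ) (l : Fin (t+2) → R) {k : Type*} [CommRing k] (ρ : R →+* k)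
    (hl : ρ (l (Fin.castSucc (Fin.last t))) = 1) (P : MvPolynomial (Fin (t+2)) R)
    (h : ∀ i, (Polynomial.mapRingHom ρ) ((aeval (sb t l) P).coeff i) = 0) :
    eval (fun i => ρ (l i)) (MvPolynomial.map ρ P) = 0 := by
  have h1 : ((Polynomial.evalRingHom (ρ (l (Fin.last (t+1))))).comp
    (Polynomial.mapRingHom ((Polynomial.evalRingHom (1 : k)).comp (Polynomial.mapRingHom ρ)))).comp
      ((aeval (sb t l) : MvPolynomial (Fin (t+2)) R →ₐ[R] _) : MvPolynomial (Fin (t+2)) R →+* _)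
      = (eval (fun i => ρ (l i))).comp (MvPolynomial.map ρ) := by
    refine MvPolynomial.ringHom_ext (fun a => ?_) (fun i => ?_)
    · simp [Polynomial.algebraMap_apply]
    · simp only [RingHom.comp_apply, RingHom.coe_coe, aeval_X, map_X, eval_X]
      unfold sb
      split_ifs with h1 h2
      · simp
      · have : i = Fin.castSucc (Fin.last t) := by ext; simpa using h2
        subst this; simp [hl]
      · have : i = Fin.last (t+1) := by ext; simp; omega
        subst this; simp
  have h2 := RingHom.congr_fun h1 P
  rw [RingHom.comp_apply] at h2
  rw [← RingHom.comp_apply, ← h2]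
  have : (Polynomial.mapRingHom ((Polynomial.evalRingHom (1 : k)).comp (Polynomial.mapRingHom ρ)))
      (aeval (sb t l) P) = 0 := by
    ext i
    simp only [Polynomial.coe_mapRingHom, Polynomial.coeff_map, RingHom.comp_apply]
    rw [← Polynomial.coe_mapRingHom, h i]; simp
  simp only [RingHom.comp_apply]
  change Polynomial.evalRingHom _ ((Polynomial.mapRingHom ((Polynomial.evalRingHom (1 : k)).comp (Polynomial.mapRingHom ρ)))
      (aeval (sb t l) P)) = 0
  rw [this, map_zero]

lemma exists_point {k : Type*} [Field k] [Infinite k] {t n : ℕ} (P : MvPolynomial (Fin (t+2)) k)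
    (hP : P.IsHomogeneous n) (hP0 : P ≠ 0) :
    ∃ a : Fin (t+2) → k, a (Fin.castSucc (Fin.last t)) = 1 ∧ eval a P ≠ 0 := by
  by_contra! h
  have hz : P * X (Fin.castSucc (Fin.last t)) = 0 := by
    apply MvPolynomial.funext
    intro a
    rw [map_mul, eval_X, map_zero]
    by_cases ha : a (Fin.castSucc (Fin.last t)) = 0
    · rw [ha, mul_zero]
    · have h1 := h (fun i => (a (Fin.castSucc (Fin.last t)))⁻¹ * a i) (inv_mul_cancel₀ ha)
      have h2 := hom_scale a (a (Fin.castSucc (Fin.last t)))⁻¹ P hP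
      rw [← MvPolynomial.coe_aeval_eq_eval] at h1 ⊢
      simp only [RingHom.coe_coe] at h1 ⊢
      rw [h2] at h1
      rcases mul_eq_zero.1 h1 with h3 | h3
      · exact absurd h3 (pow_ne_zero _ (inv_ne_zero ha))
      · rw [h3, zero_mul]
  rcases mul_eq_zero.1 hz with h1 | h1
  · exact hP0 h1
  · exact X_ne_zero _ h1

lemma Alem [IsLocalRing R] [Infinite (IsLocalRing.ResidueField R)] {t : ℕ} (g : Fin (t+2) → R)
    (r : ℕ) (x : ℕ → R)
    (hx : ∀ i, x i = eval g (XX R (t+1) i))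
    (hR : ∀ j < t + 1, ∀ (a : R) (b : ℕ → R), x j * a = ∑ i ∈ range j, x i * b i →
      ∃ c : ℕ → R, a = ∑ i ∈ range j, x i * c i)
    (I : Ideal R) (hgI : ∀ i, g i ∈ I)
    (hV : ∀ (b : ℕ → R), ∑ i ∈ range t, x i * b i ∈ I ^ (r+1) →
      ∃ c : ℕ → R, (∀ i, c i ∈ I ^ r) ∧
        ∑ i ∈ range t, x i * b i = ∑ i ∈ range t, x i * c i)
    (F : ℕ → MvPolynomial (Fin (t+2)) R) (hF : ∀ i, (F i).IsHomogeneous (r+1))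
    (hfk : X (Fin.last (t+1)) ^ (r+2) - ∑ i ∈ range (t+1), XX R (t+1) i * F i ∈ presKer g)
    (B : Ideal R) (hBI : B ≤ I ^ (r+1)) (hB : ∀ i < t + 1, ∀ b ∈ I ^ r, x i * b ∈ B)
    (hyB : g (Fin.last (t+1)) ^ (r+1) ∉ B)
    (n : ℕ) (hn : n ≤ r + 1) (P : MvPolynomial (Fin (t+2)) R) (hP : P ∈ presKer g)
    (hPh : P.IsHomogeneous n) : MvPolynomial.map (IsLocalRing.residue R) P = 0 := by
  by_contra hP0
  obtain ⟨a, ha1, haP⟩ := exists_point _ (hPh.map _) hP0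
  choose l hl using fun i => IsLocalRing.residue_surjective (a i)
  set ρ := IsLocalRing.residue R
  let 𝔭 : Ideal (Polynomial R) := RingHom.ker (Polynomial.mapRingHom ρ)
  have : 𝔭.IsPrime := RingHom.ker_isPrime _
  set v : ℕ → R := fun i => if h : i < t + 2 then l ⟨i, h⟩ * x t else 0 with hv
  set y := g (Fin.last (t+1)) with hy
  let K : Ideal (Polynomial R) := Ideal.span (ww x v '' (range t : Set ℕ))
  let Q := Polynomial R ⧸ K
  let xq : Q := Ideal.Quotient.mk K (Polynomial.C (x t))
  let L := Localization.Away xq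
  let κ : Polynomial R →+* L := algebraMap (Polynomial R) L
  have hκ : ∀ z, κ z = algebraMap Q L (Ideal.Quotient.mk K z) := fun z => rfl
  let c : L := κ (Polynomial.C (x t))
  have hc : IsUnit c := IsLocalization.Away.algebraMap_isUnit (S := L) xq
  obtain ⟨c', hc'⟩ := hc.exists_right_inv
  let η : L := c' * κ (Polynomial.C y)
  have hcη : c * η = κ (Polynomial.C y) := by
    simp only [η]; rw [← mul_assoc, hc', one_mul]
  have hxg : ∀ i (h : i < t + 1), x i = g (Fin.castSucc ⟨i, h⟩) := by
    intro i h; rw [hx, XX, dif_pos h, eval_X]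
  have hpt : ∀ i, c * Polynomial.aeval η (sb t l i) = κ (Polynomial.C (g i)) := by
    intro i
    unfold sb
    split_ifs with h1 h2
    · rw [Polynomial.aeval_C]
      change c * κ _ = _
      have hi : g i = x i := by rw [hxg i (by omega)]; congr
      have hw : κ (ww x v i) = 0 := by
        rw [hκ, Ideal.Quotient.eq_zero_iff_mem.2, map_zero]
        exact Ideal.subset_span ⟨i, by simpa using h1, rfl⟩
      rw [ww, map_sub, sub_eq_zero] at hw
      rw [hi, hw, ← map_mul]
      congr 1
      simp only [hv, dif_pos i.2, map_mul]
      ring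
    · rw [map_one, mul_one]
      have hi : g i = x t := by
        rw [hxg t (by omega)]; congr; ext; simpa using h2
      rw [hi]
    · rw [Polynomial.aeval_X, hcη]
      have : i = Fin.last (t+1) := by ext; simp; omega
      rw [this]
  have hzero : ∀ (n : ℕ) (P : MvPolynomial (Fin (t+2)) R), P ∈ presKer g → P.IsHomogeneous n →
      Polynomial.aeval η (aeval (sb t l) P) = 0 := by
    intro n P hP hPh
    rw [mem_presKer_hom g P hPh] at hP
    let τ : MvPolynomial (Fin (t+2)) R →+* L :=
      ((Polynomial.aeval η : Polynomial (Polynomial R) →ₐ[Polynomial R] L) : _ →+* L).comp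
        ((aeval (sb t l) : MvPolynomial (Fin (t+2)) R →ₐ[R] Polynomial (Polynomial R)) :
          MvPolynomial (Fin (t+2)) R →+* Polynomial (Polynomial R))
    let _ : Algebra R L := (κ.comp Polynomial.C).toAlgebra
    have e1 : τ = ((aeval (fun i => Polynomial.aeval η (sb t l i)) :
        MvPolynomial (Fin (t+2)) R →ₐ[R] L) : _ →+* L) := by
      refine MvPolynomial.ringHom_ext (fun a => ?_) (fun i => ?_)
      · simp only [τ, RingHom.comp_apply, RingHom.coe_coe, algHom_C]
        rw [Polynomial.algebraMap_apply, Polynomial.algebraMap_apply]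
        simp only [Algebra.algebraMap_self, RingHom.id_apply]
        rw [Polynomial.aeval_C]
        rfl
      · simp [τ]
    have e2 : ((aeval (fun i => c * Polynomial.aeval η (sb t l i)) :
        MvPolynomial (Fin (t+2)) R →ₐ[R] L) : _ →+* L) = (κ.comp Polynomial.C).comp (eval g) := by
      refine MvPolynomial.ringHom_ext (fun a => ?_) (fun i => ?_)
      · simp only [RingHom.coe_coe, algHom_C, RingHom.comp_apply, eval_C]
        rfl
      · simp only [RingHom.coe_coe, aeval_X, RingHom.comp_apply, eval_X]
        exact hpt i
    have h3 := RingHom.congr_fun e2 P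
    rw [RingHom.comp_apply, hP, map_zero, RingHom.coe_coe,
      hom_scale (fun i => Polynomial.aeval η (sb t l i)) c P hPh] at h3
    have h4 := (hc.pow n).mul_right_eq_zero.1 h3
    have h5 := RingHom.congr_fun e1 P
    rw [RingHom.coe_coe, h4] at h5
    exact h5
  set f := X (Fin.last (t+1)) ^ (r+2) - ∑ i ∈ range (t+1), XX R (t+1) i * F i with hf
  have hfh : f.IsHomogeneous (r+2) := by
    refine IsHomogeneous.sub ?_ (IsHomogeneous.sum _ _ _ fun i _ => ?_)
    · simpa using (isHomogeneous_X R (Fin.last (t+1))).pow (r+2)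
    · rw [show r + 2 = 1 + (r+1) by ring]; exact (XX_hom _ _).mul (hF i)
  have hsbl : sb t l (Fin.last (t+1)) = Polynomial.X := by simp [sb]
  have hfe : aeval (sb t l) f = Polynomial.X ^ (r+1+1)
      - ∑ i ∈ range (t+1), aeval (sb t l) (XX R (t+1) i) * aeval (sb t l) (F i) := by
    rw [hf, map_sub, map_pow, aeval_X, hsbl, map_sum]
    simp only [map_mul]
  have hdeg : (∑ i ∈ range (t+1), aeval (sb t l) (XX R (t+1) i) * aeval (sb t l) (F i)).natDegree
      ≤ r + 1 := by
    refine Polynomial.natDegree_sum_le_of_forall_le _ _ fun i hi => ?_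
    refine Polynomial.natDegree_mul_le.trans ?_
    have h1 : (aeval (sb t l) (XX R (t+1) i)).natDegree = 0 := by
      have hi' := mem_range.1 hi
      rw [XX, dif_pos hi', aeval_X, sb]
      split_ifs with h1 h2
      · exact Polynomial.natDegree_C _
      · simp
      · simp at h1 h2; omega
    have := sb_aeval_natDegree t l _ (hF i)
    omega
  obtain ⟨G, b, hG, hGe⟩ := CHlem 𝔭 η (r+1) (aeval (sb t l) f) (aeval (sb t l) P)
    (by rw [hfe]; exact Polynomial.monic_X_pow_sub (lt_of_le_of_lt (Polynomial.degree_le_of_natDegree_le hdeg) (by exact_mod_cast Nat.lt_succ_self _)))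
    (by rw [hfe, Polynomial.natDegree_sub_eq_left_of_natDegree_lt (by
          rw [Polynomial.natDegree_X_pow]; omega), Polynomial.natDegree_X_pow])
    (hzero _ _ hfk hfh) (hzero _ _ hP hPh) ((sb_aeval_natDegree t l P hPh).trans hn)
    (by
      by_contra! hall
      apply haP
      have := sb_special t l ρ (by rw [hl, ha1]) P (fun i => hall i)
      simpa only [hl] using this)
  set W : Polynomial R := G * Polynomial.C (y ^ (r+1))
    - ∑ i ∈ range (r+1), b i * Polynomial.C (x t ^ (r + 1 - i) * y ^ i) with hW
  have hW0 : κ W = 0 := by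
    rw [hW, map_sub, map_sum, sub_eq_zero]
    have : κ (G * Polynomial.C (y ^ (r+1))) = c ^ (r+1) * (κ G * η ^ (r+1)) := by
      rw [map_mul, map_pow Polynomial.C, map_pow κ, ← hcη]; ring
    rw [this]
    change c ^ (r+1) * (algebraMap (Polynomial R) L G * η ^ (r+1)) = _
    rw [hGe, mul_sum]
    refine sum_congr rfl fun i hi => ?_
    have hi' := mem_range.1 hi
    rw [map_mul κ, map_mul Polynomial.C, map_mul κ, map_pow Polynomial.C, map_pow Polynomial.C,
      map_pow κ, map_pow κ, ← hcη]
    change c ^ (r+1) * (κ (b i) * η ^ i) = κ (b i) * (c ^ (r+1-i) * (c * η) ^ i)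
    have : c ^ (r+1) = c ^ (r+1-i) * c ^ i := by rw [← pow_add]; congr 1; omega
    rw [this]; ring
  rw [hκ, IsLocalization.map_eq_zero_iff (Submonoid.powers xq)] at hW0
  obtain ⟨⟨_, e, rfl⟩, he⟩ := hW0
  simp only [xq] at he
  rw [← map_pow, ← map_mul, Ideal.Quotient.eq_zero_iff_mem, ← map_pow] at he
  obtain ⟨a0, ha0⟩ := (Submodule.mem_span_image_finset_iff_exists_fun' (Polynomial R)).1 he
  obtain ⟨j, hj⟩ : ∃ j, ρ (G.coeff j) ≠ 0 := by
    by_contra! hall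
    apply hG
    rw [RingHom.mem_ker]
    ext j
    simpa using hall j
  have hpow : ∀ (e : ℕ) (a : R) (b : ℕ → R), x t ^ e * a = ∑ i ∈ range t, x i * b i →
      ∃ c : ℕ → R, a = ∑ i ∈ range t, x i * c i := by
    intro e
    induction e with
    | zero => intro a b h; exact ⟨b, by simpa using h⟩
    | succ e ih =>
      intro a b h
      obtain ⟨c, hc⟩ := hR t (by omega) (x t ^ e * a) b (by rw [← h]; ring)
      exact ih a c hc
  obtain ⟨a', W', hWW⟩ := Elem x v t (x t ^ e) (fun j hj => hR j (by omega)) (hpow e) (j+1) W a0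
    (by rw [← ha0]; exact sum_congr rfl fun i _ => by rw [smul_eq_mul, mul_comm])
  have hcoeff : ∀ m < j + 1, (∑ i ∈ range t, ww x v i * a' i).coeff m = W.coeff m := by
    intro m hm
    rw [hWW, Polynomial.coeff_add, Polynomial.coeff_X_pow_mul', if_neg (by omega), add_zero]
  have hxI : ∀ i < t + 1, x i ∈ I := fun i hi => by rw [hxg i hi]; exact hgI _
  have hBx : ∀ i < r + 1, x t ^ (r + 1 - i) * y ^ i ∈ B := by
    intro i hi
    have : x t ^ (r + 1 - i) * y ^ i = x t * (x t ^ (r - i) * y ^ i) := by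
      rw [show r + 1 - i = r - i + 1 by omega]; ring
    rw [this]
    refine hB t (by omega) _ ?_
    have e : I ^ r = I ^ (r - i) * I ^ i := by rw [← pow_add]; congr 1; omega
    rw [e]
    exact Ideal.mul_mem_mul (Ideal.pow_mem_pow (hxI t (by omega)) _) (Ideal.pow_mem_pow (hgI _) _)
  have hWc : ∀ m, W.coeff m = G.coeff m * y ^ (r+1)
      - ∑ i ∈ range (r+1), (b i).coeff m * (x t ^ (r + 1 - i) * y ^ i) := by
    intro m
    rw [hW, Polynomial.coeff_sub, Polynomial.coeff_mul_C, Polynomial.finsetSum_coeff]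
    simp only [Polynomial.coeff_mul_C]
  have hsumB : ∀ m, ∑ i ∈ range (r+1), (b i).coeff m * (x t ^ (r + 1 - i) * y ^ i) ∈ B :=
    fun m => Ideal.sum_mem _ fun i hi => Ideal.mul_mem_left _ _ (hBx i (mem_range.1 hi))
  have hfin := Vlem x v t (I ^ (r+1)) B hBI (fun j hj => hR j (by omega)) (by
    intro b hb
    obtain ⟨c, hc, hce⟩ := hV b hb
    refine ⟨c, fun i hi => ⟨hB i (by omega) _ (hc i), ?_⟩, hce⟩
    simp only [hv]
    rw [dif_pos (by omega), mul_assoc]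
    exact Ideal.mul_mem_left _ _ (hB t (by omega) _ (hc i))) (j+1) a' (by
      intro m hm
      rw [hcoeff m hm, hWc]
      exact Ideal.sub_mem _ (Ideal.mul_mem_left _ _ (Ideal.pow_mem_pow (hgI _) _))
        (hBI (hsumB m))) j (by omega)
  rw [hcoeff j (by omega), hWc] at hfin
  have h6 := (Ideal.add_mem _ hfin (hsumB j))
  rw [sub_add_cancel] at h6
  have hu : IsUnit (G.coeff j) := by
    rwa [IsLocalRing.residue_ne_zero_iff_isUnit] at hj
  exact hyB ((Ideal.unit_mul_mem_iff_mem _ hu).1 h6)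
end P4


section P5
open Finset
variable {R : Type*} [CommRing R]

lemma hom_zero_of_mem {k : Type*} [Field k] {m : ℕ} (f P : MvPolynomial (Fin m) k) {d n : ℕ}
    (hf : f.IsHomogeneous d) (hf0 : f ≠ 0) (hP : P.IsHomogeneous n) (hn : n < d)
    (h : P ∈ Ideal.span {f}) : P = 0 := by
  by_contra hP0
  obtain ⟨q, rfl⟩ := Ideal.mem_span_singleton.1 h
  have hq : q ≠ 0 := right_ne_zero_of_mul hP0
  have h1 := hP.totalDegree hP0
  rw [totalDegree_mul_of_isDomain hf0 hq, hf.totalDegree hf0] at h1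
  omega

lemma xe_eval {s : ℕ} (x : Fin s → R) (y : R) (i : ℕ) :
    xe x i = eval (Fin.snoc x y : Fin (s+1) → R) (XX R s i) := by
  unfold xe XX
  split_ifs with h
  · rw [eval_X, Fin.snoc_castSucc]
  · rw [map_zero]

lemma concl [IsLocalRing R] {s : ℕ} (g : Fin (s+1) → R) (r : ℕ)
    (F : ℕ → MvPolynomial (Fin (s+1)) R) (hF : ∀ i, (F i).IsHomogeneous r)
    (hfk : X (Fin.last s) ^ (r+1) - ∑ i ∈ range s, XX R s i * F i ∈ presKer g)
    (hB : presKer g ≤ Ideal.span ({X (Fin.last s) ^ (r+1) - ∑ i ∈ range s, XX R s i * F i} ∪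
      {P | P ∈ presKer g ∧ ∃ k ≤ r, P.IsHomogeneous k}))
    (hA : ∀ n ≤ r, ∀ P ∈ presKer g, P.IsHomogeneous n →
      MvPolynomial.map (IsLocalRing.residue R) P = 0) :
    (∃ F : Fin s → MvPolynomial (Fin (s + 1)) (IsLocalRing.ResidueField R),
      (∀ i, (F i).IsHomogeneous r) ∧
      fiberKer g
        = Ideal.span {X (Fin.last s) ^ (r + 1) - ∑ i, X i.castSucc * F i}) ∧
    IsLeast {N : ℕ | 1 ≤ N ∧ fiberKer g = fiberKerLe g N} (r + 1) ∧
    IsLeast {N : ℕ | 1 ≤ N ∧ presKer g = presKerLe g N} (r + 1) := by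
  set f := X (Fin.last s) ^ (r+1) - ∑ i ∈ range s, XX R s i * F i with hf
  have hfh : f.IsHomogeneous (r+1) := by
    refine IsHomogeneous.sub ?_ (IsHomogeneous.sum _ _ _ fun i _ => ?_)
    · simpa using (isHomogeneous_X R (Fin.last s)).pow (r+1)
    · rw [add_comm r 1]; exact (XX_hom _ _).mul (hF i)
  set fb := MvPolynomial.map (IsLocalRing.residue R) f with hfb
  have hfbh : fb.IsHomogeneous (r+1) := hfh.map _
  have hfbe : fb = X (Fin.last s) ^ (r + 1) - ∑ i : Fin s, X i.castSucc *
      MvPolynomial.map (IsLocalRing.residue R) (F i) := by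
    rw [hfb, hf, XX_sum, map_sub, map_pow, map_X, map_sum]
    simp only [map_mul, map_X]
  have hfb0 : fb ≠ 0 := by
    intro h0
    have h1 := congrArg (eval (Fin.snoc (fun _ : Fin s => (0 : IsLocalRing.ResidueField R)) 1 :
      Fin (s+1) → IsLocalRing.ResidueField R)) h0
    rw [hfbe] at h1
    simp at h1
  have hfib : fiberKer g = Ideal.span {fb} := by
    apply le_antisymm
    · refine (Ideal.map_mono hB).trans ?_
      rw [Ideal.map_span, Ideal.span_le]
      rintro _ ⟨P, hP, rfl⟩
      rcases hP with hP | ⟨hP, k, hk, hPk⟩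
      · rw [Set.mem_singleton_iff] at hP
        subst hP
        exact Ideal.subset_span rfl
      · rw [hA k hk P hP hPk]; exact Ideal.zero_mem _
    · rw [Ideal.span_le, Set.singleton_subset_iff]
      exact Ideal.mem_map_of_mem _ hfk
  refine ⟨⟨fun i => MvPolynomial.map (IsLocalRing.residue R) (F i), fun i => (hF i).map _, ?_⟩,
    ⟨⟨by omega, ?_⟩, ?_⟩, ⟨⟨by omega, ?_⟩, ?_⟩⟩
  · rw [hfib, hfbe]
  · apply le_antisymm
    · rw [hfib, Ideal.span_le, Set.singleton_subset_iff]
      refine Ideal.subset_span ⟨?_, r+1, le_rfl, hfbh⟩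
      rw [hfib]; exact Ideal.subset_span rfl
    · exact Ideal.span_le.2 fun P hP => hP.1
  · rintro N ⟨-, hN⟩
    by_contra hlt
    have h1 : fb ∈ fiberKerLe g N := by
      rw [← hN, hfib]; exact Ideal.subset_span rfl
    have h2 : fiberKerLe g N ≤ ⊥ := by
      refine Ideal.span_le.2 ?_
      rintro P ⟨hP, k, hk, hPk⟩
      rw [hfib] at hP
      exact hom_zero_of_mem fb P hfbh hfb0 hPk (by omega) hP
    exact hfb0 (h2 h1)
  · apply le_antisymm
    · refine hB.trans (Ideal.span_le.2 ?_)
      rintro P (hP | ⟨hP, k, hk, hPk⟩)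
      · rw [Set.mem_singleton_iff] at hP
        subst hP
        exact Ideal.subset_span ⟨hfk, r+1, le_rfl, hfh⟩
      · exact Ideal.subset_span ⟨hP, k, by omega, hPk⟩
    · exact Ideal.span_le.2 fun P hP => hP.1
  · rintro N ⟨-, hN⟩
    by_contra hlt
    have h1 : f ∈ presKerLe g N := by rw [← hN]; exact hfk
    have h2 : presKerLe g N ≤ RingHom.ker (MvPolynomial.map (σ := Fin (s+1)) (IsLocalRing.residue R)) := by
      refine Ideal.span_le.2 ?_
      rintro P ⟨hP, k, hk, hPk⟩
      exact hA k (by omega) P hP hPk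
    exact hfb0 (h2 h1)

lemma main_thm [IsLocalRing R]
    (hk : Infinite (IsLocalRing.ResidueField R))
    (I : Ideal R) {s : ℕ} (x : Fin s → R) (y : R) (g : Fin (s+1) → R) (hg : g = Fin.snoc x y)
    (r : ℕ)
    (J : Ideal R) (hJ : J = Ideal.span (Set.range x))
    (hgen : I = Ideal.span (Set.range g))
    (hmin : I ≠ J)
    (hred : IsLeast {k : ℕ | I ^ (k + 1) = J * I ^ k} r)
    (hreg : RingTheory.Sequence.IsWeaklyRegular R (List.ofFn x))
    (ξ : Fin s → reesAlgebra I)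
    (hξ : ∀ i, (ξ i : Polynomial R) = Polynomial.C (x i) * Polynomial.X)
    (hgrreg : RingTheory.Sequence.IsWeaklyRegular (GrRing I)
      ((List.ofFn fun i => Ideal.Quotient.mk (grIdeal I) (ξ i)).take (s - 1))) :
    (∃ F : Fin s → MvPolynomial (Fin (s + 1)) (IsLocalRing.ResidueField R),
      (∀ i, (F i).IsHomogeneous r) ∧
      fiberKer g
        = Ideal.span {X (Fin.last s) ^ (r + 1) - ∑ i, X i.castSucc * F i}) ∧
    IsLeast {N : ℕ | 1 ≤ N ∧ fiberKer g = fiberKerLe g N} (r + 1) ∧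
    IsLeast {N : ℕ | 1 ≤ N ∧ presKer g = presKerLe g N} (r + 1) := by
  have hR := hR_of x hreg
  have hG := hG_of I x ξ hξ hgrreg
  have hx : ∀ i, xe x i = eval g (XX R s i) := by rw [hg]; exact xe_eval x y
  have hgx : ∀ i : Fin s, g i.castSucc = x i := by intro i; rw [hg, Fin.snoc_castSucc]
  have hgy : g (Fin.last s) = y := by rw [hg, Fin.snoc_last]
  have hgI : ∀ i, g i ∈ I := fun i => by rw [hgen]; exact Ideal.subset_span ⟨i, rfl⟩
  have hxe : ∀ i : Fin s, xe x i = x i := by intro i; simp [xe]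
  have hxI : ∀ i, xe x i ∈ I := by
    intro i
    rw [hx]
    simpa using eval_hom_mem g I hgI 1 _ (XX_hom s i)
  have hxJ : ∀ i < s, xe x i ∈ J := by
    intro i hi
    rw [hxe ⟨i, hi⟩, hJ]; exact Ideal.subset_span ⟨_, rfl⟩
  have hJI : J ≤ I := by
    rw [hJ, Ideal.span_le]
    rintro _ ⟨i, rfl⟩
    rw [← hgx]; exact hgI _
  have hV := VVlem (xe x) s I hxI hG
  obtain ⟨r', rfl⟩ : ∃ r', r = r' + 1 := by
    rcases r with _ | r'
    · exact absurd (by simpa using hred.1) hmin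
    · exact ⟨r', rfl⟩
  have hyJ : y ^ (r'+1) ∉ J * I ^ r' := by
    intro hy
    have hmem : r' ∈ {k : ℕ | I ^ (k + 1) = J * I ^ k} := by
      apply le_antisymm
      · intro z hz
        rw [hgen] at hz
        obtain ⟨P, hP, rfl⟩ := exists_hom_eval g _ z hz
        obtain ⟨c, D, -, hD, rfl⟩ := hom_decomp2 (r'+1) P hP
        simp only [map_add, map_mul, map_sum, eval_C, map_pow, eval_X, hgy, ← hx]
        refine Ideal.add_mem _ (Ideal.mul_mem_left _ _ hy) (Ideal.sum_mem _ fun i hi => ?_)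
        exact Ideal.mul_mem_mul (hxJ i (mem_range.1 hi)) (eval_hom_mem g I hgI r' _ (hD i))
      · rw [pow_succ']
        exact Ideal.mul_mono_left hJI
    have := hred.2 hmem
    omega
  have hyJ1 : y ^ (r'+1+1) ∈ J * I ^ (r'+1) := by
    rw [← hred.1, ← hgy]; exact Ideal.pow_mem_pow (hgI _) _
  rw [hJ] at hyJ1
  obtain ⟨b, hb, hbe⟩ := mem_span_mul' x _ _ hyJ1
  rw [hgen] at hb
  choose F0 hF0 hF0e using fun i => exists_hom_eval g _ (b i) (hb i)
  let F : ℕ → MvPolynomial (Fin (s+1)) R := fun i => if h : i < s then F0 ⟨i, h⟩ else 0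
  have hF : ∀ i, (F i).IsHomogeneous (r'+1) := by
    intro i
    simp only [F]; split_ifs with h
    · exact hF0 _
    · exact isHomogeneous_zero _ _ _
  have hfh : (X (Fin.last s) ^ (r'+1+1) - ∑ i ∈ range s, XX R s i * F i).IsHomogeneous (r'+1+1) := by
    refine IsHomogeneous.sub ?_ (IsHomogeneous.sum _ _ _ fun i _ => ?_)
    · simpa using (isHomogeneous_X R (Fin.last s)).pow (r'+1+1)
    · rw [add_comm (r'+1)]; exact (XX_hom _ _).mul (hF i)
  have hfk : X (Fin.last s) ^ (r'+1+1) - ∑ i ∈ range s, XX R s i * F i ∈ presKer g := by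
    rw [mem_presKer_hom g _ hfh, XX_sum, map_sub, map_pow, eval_X, hgy, hbe, map_sum, sub_eq_zero]
    refine sum_congr rfl fun i _ => ?_
    rw [map_mul, eval_X, hgx]
    simp only [F, dif_pos i.2, Fin.eta, hF0e]
  refine concl g (r'+1) F hF hfk
    (Blem g (r'+1) (by omega) (xe x) hx hR (by rw [← hgen]; exact hV) F hF hfk) ?_
  intro n hn P hP hPh
  rcases s with _ | t
  · obtain ⟨c, D, -, -, rfl⟩ := hom_decomp2 n P hPh
    rw [mem_presKer_hom g _ hPh] at hP
    simp only [range_zero, sum_empty, add_zero, map_mul, eval_C, map_pow, eval_X, hgy] at hP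
    by_cases hc : IsUnit c
    · exfalso
      apply hyJ
      have h0 : y ^ n = 0 := hc.mul_right_eq_zero.1 hP
      have : y ^ (r'+1) = y ^ n * y ^ (r' + 1 - n) := by rw [← pow_add]; congr 1; omega
      rw [this, h0, zero_mul]; exact Ideal.zero_mem _
    · have : IsLocalRing.residue R c = 0 := by
        by_contra h
        exact hc ((IsLocalRing.residue_ne_zero_iff_isUnit _).1 h)
      simp [this]
  · exact Alem g r' (xe x) hx hR I hgI (hV t (by omega) r') F hF hfk (J * I ^ r')
      (by rw [pow_succ']; exact Ideal.mul_mono_left hJI)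
      (fun i hi b hb => Ideal.mul_mem_mul (hxJ i hi) hb) (by rw [hgy]; exact hyJ) n hn P hP hPh
end P5


/-- Heinzer–Kim type result: under the hypotheses of Theorem A, the fiber cone
`F(I)` is presented over `k = R/m` by the single equation `Y^{r+1} − ∑ Xᵢ Fᵢ`,
i.e. `F(I) ≅ k[X₁,…,Xₛ,Y]/(Y^{r+1} − ∑ Xᵢ Fᵢ)`; in particular
`rt(F(I)) = r_J(I) + 1 = rt(I)`. -/
theorem statement6 {R : Type*} [CommRing R] [IsNoetherianRing R] [IsLocalRing R]
    (hk : Infinite (IsLocalRing.ResidueField R))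
    (I : Ideal R) {s : ℕ} (x : Fin s → R) (y : R) (r : ℕ)
    (J : Ideal R) (hJ : J = Ideal.span (Set.range x))
    (hgen : I = Ideal.span (Set.range (Fin.snoc x y)))
    (hmin : ∀ i : Fin (s + 1), I ≠ Ideal.span (Fin.snoc x y '' {j | j ≠ i}))
    (hred : IsLeast {k : ℕ | I ^ (k + 1) = J * I ^ k} r)
    (hreg : RingTheory.Sequence.IsRegular R (List.ofFn x))
    (ξ : Fin s → reesAlgebra I)
    (hξ : ∀ i, (ξ i : Polynomial R) = Polynomial.C (x i) * Polynomial.X)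
    (hgrreg : RingTheory.Sequence.IsRegular (GrRing I)
      ((List.ofFn fun i => Ideal.Quotient.mk (grIdeal I) (ξ i)).take (s - 1))) :
    (∃ F : Fin s → MvPolynomial (Fin (s + 1)) (IsLocalRing.ResidueField R),
      (∀ i, (F i).IsHomogeneous r) ∧
      fiberKer (Fin.snoc x y)
        = Ideal.span {X (Fin.last s) ^ (r + 1) - ∑ i, X i.castSucc * F i}) ∧
    IsLeast {N : ℕ | 1 ≤ N ∧ fiberKer (Fin.snoc x y) = fiberKerLe (Fin.snoc x y) N} (r + 1) ∧
    IsLeast {N : ℕ | 1 ≤ N ∧ presKer (Fin.snoc x y) = presKerLe (Fin.snoc x y) N} (r + 1) := by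
  refine main_thm hk I x y (Fin.snoc x y) rfl r J hJ hgen ?_ hred hreg.toIsWeaklyRegular ξ hξ
    hgrreg.toIsWeaklyRegular
  intro h
  apply hmin (Fin.last s)
  rw [h, hJ]
  congr 1
  ext z
  constructor
  · rintro ⟨i, rfl⟩
    exact ⟨i.castSucc, (Fin.castSucc_lt_last i).ne, Fin.snoc_castSucc ..⟩
  · rintro ⟨j, hj, rfl⟩
    induction j using Fin.lastCases with
    | last => exact absurd rfl hj
    | cast i => exact ⟨i, (Fin.snoc_castSucc (α := fun _ => R) ..).symm⟩
end

section
/- Let (R,m) be a Noetherian local ring, let a,b be an R-regular sequence and let p ≥ 2 be an integer. Set x_1 = a^p, x_2 = b^p, y = ab^{p-1} and I = (x_1,x_2,y). Let V = R[X_1,X_2,Y] and φ : V → R(I) the presentation sending X_1 ↦ x_1 t, X_2 ↦ x_2 t, Y ↦ y t, with Q = ker φ. Then Q is minimally generated by: the two linear forms a^{p-1}Y − b^{p-1}X_1 and bY − aX_2, together with, for each 2 ≤ n ≤ p, the single form a^{p-n}Y^n − b^{p-n}X_1 X_2^{n-1}. In particular rt(I) = p. -/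
open MvPolynomial

section Defs

variable {R : Type*} [CommRing R]

/-- The claimed minimal generating set of the equations of the Rees algebra of
`I = (aᵖ, bᵖ, abᵖ⁻¹)`: the linear forms `aᵖ⁻¹Y − bᵖ⁻¹X₁`, `bY − aX₂` and, for
`2 ≤ n ≤ p`, the forms `aᵖ⁻ⁿYⁿ − bᵖ⁻ⁿX₁X₂ⁿ⁻¹`  (here `X₁ = X 0`, `X₂ = X 1`, `Y = X 2`). -/
noncomputable def gens7 (a b : R) (p : ℕ) : Set (MvPolynomial (Fin 3) R) :=
  insert (C (a ^ (p - 1)) * X 2 - C (b ^ (p - 1)) * X 0)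
    (insert (C b * X 2 - C a * X 1)
      ((fun n => C (a ^ (p - n)) * X 2 ^ n - C (b ^ (p - n)) * (X 0 * X 1 ^ (n - 1))) ''
        Set.Icc 2 p))

end Defs

namespace S7

section
variable {R : Type*} [CommRing R]

open scoped Pointwise in
lemma reg_extract {a b : R} (h : RingTheory.Sequence.IsRegular R [a, b]) :
    (∀ c d, a * c = a * d → c = d) ∧ (∀ c, a ∣ b * c → a ∣ c) ∧ Ideal.span {a, b} ≠ ⊤ := by
  have h1 := (RingTheory.Sequence.isWeaklyRegular_cons_iff R a [b]).1 h.toIsWeaklyRegular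
  have h2 := (RingTheory.Sequence.isWeaklyRegular_singleton_iff _ b).1 h1.2
  refine ⟨fun c d hcd => h1.1 hcd, ?_, ?_⟩
  · intro c hc
    have h3 := (isSMulRegular_quotient_iff_mem_of_smul_mem _ b).1 h2 c
    have key : ∀ x : R, x ∈ (a • (⊤ : Submodule R R)) ↔ a ∣ x := by
      intro x
      rw [Submodule.mem_smul_pointwise_iff_exists]
      constructor
      · rintro ⟨y, -, rfl⟩
        exact ⟨y, rfl⟩
      · rintro ⟨y, rfl⟩
        exact ⟨y, trivial, rfl⟩
    rw [key, key] at h3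
    exact h3 hc
  · intro htop
    apply h.top_ne_smul
    have : Ideal.ofList [a, b] = Ideal.span {a, b} := by
      unfold Ideal.ofList
      congr 1
      ext x
      simp
    rw [this, htop]
    simp

lemma dvd_pow_of {a b : R} (ha : ∀ c d, a * c = a * d → c = d) (hb : ∀ c, a ∣ b * c → a ∣ c)
    (k j : ℕ) : ∀ c, a ^ k ∣ b ^ j * c → a ^ k ∣ c := by
  have h1 : ∀ k c, a ^ k ∣ b * c → a ^ k ∣ c := by
    intro k
    induction k with
    | zero => intro c _; simp
    | succ k ih =>
      intro c hc
      obtain ⟨c', rfl⟩ := hb c ((dvd_pow_self a (Nat.succ_ne_zero k)).trans hc)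
      obtain ⟨r, hr⟩ := hc
      rw [pow_succ']
      apply mul_dvd_mul_left
      apply ih
      refine ⟨r, ha _ _ ?_⟩
      rw [pow_succ'] at hr
      linear_combination hr
  induction j with
  | zero => intro c hc; simpa using hc
  | succ j ih =>
    intro c hc
    apply ih
    apply h1
    rwa [pow_succ', mul_assoc] at hc

lemma pow_cancel {a : R} (ha : ∀ c d, a * c = a * d → c = d) (k : ℕ) :
    ∀ c d, a ^ k * c = a ^ k * d → c = d := by
  induction k with
  | zero => intro c d h; simpa using h
  | succ k ih =>
    intro c d h
    apply ih
    apply ha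
    rw [pow_succ'] at h
    linear_combination h

/-- unified generator -/
noncomputable def ff (a b : R) (p n : ℕ) : MvPolynomial (Fin 3) R :=
  C (a ^ (p - n)) * X 2 ^ n - C (b ^ (p - n)) * (X 0 * X 1 ^ (n - 1))

noncomputable def gg (a b : R) : MvPolynomial (Fin 3) R := C b * X 2 - C a * X 1

lemma mem_gens (a b : R) {p : ℕ} (hp : 2 ≤ p) (x : MvPolynomial (Fin 3) R) :
    x ∈ gens7 a b p ↔ x = gg a b ∨ ∃ n, 1 ≤ n ∧ n ≤ p ∧ x = ff a b p n := by
  unfold gens7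
  simp only [Set.mem_insert_iff, Set.mem_image, Set.mem_Icc]
  constructor
  · rintro (h | h | ⟨n, hn, h⟩)
    · right; exact ⟨1, le_rfl, by omega, by simp [h, ff]⟩
    · left; exact h
    · right; exact ⟨n, by omega, hn.2, by rw [← h, ff]⟩
  · rintro (h | ⟨n, h1, h2, h⟩)
    · right; left; exact h
    · rcases h1.eq_or_lt with rfl | h1
      · left; simp [h, ff]
      · right; right; exact ⟨n, ⟨h1, h2⟩, by rw [h, ff]⟩

abbrev g7 (a b : R) (p : ℕ) : Fin 3 → R := ![a ^ p, b ^ p, a * b ^ (p - 1)]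

lemma coeff_rees {m : ℕ} (g : Fin m → R) (F : MvPolynomial (Fin m) R) (n : ℕ) :
    (reesPres g F).coeff n = eval g (homogeneousComponent n F) := by
  induction F using MvPolynomial.induction_on' with
  | add p q hp hq => simp [hp, hq]
  | monomial d r =>
    have h1 : reesPres g (monomial d r) =
        Polynomial.C (r * d.prod fun i e => g i ^ e) * Polynomial.X ^ d.degree := by
      simp only [reesPres, aeval_monomial, mul_pow, Finsupp.prod_mul, Finsupp.degree,
        Polynomial.algebraMap_eq, map_mul]
      simp [Finsupp.prod, Finset.prod_pow_eq_pow_sum, mul_assoc]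
      rfl
    rw [h1, Polynomial.coeff_C_mul_X_pow,
      homogeneousComponent_of_mem (isHomogeneous_monomial r rfl)]
    split_ifs <;> simp [eval_monomial]

lemma homog_ff (a b : R) (p n : ℕ) (hn : 1 ≤ n) : (ff a b p n).IsHomogeneous n := by
  unfold ff
  apply IsHomogeneous.sub
  · have := (isHomogeneous_C (Fin 3) (a ^ (p - n))).mul ((isHomogeneous_X R (2 : Fin 3)).pow n)
    simpa using this
  · have := (isHomogeneous_C (Fin 3) (b ^ (p - n))).mul ((isHomogeneous_X R (0 : Fin 3)).mul ((isHomogeneous_X R (1 : Fin 3)).pow (n-1)))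
    convert this using 1
    omega

lemma homog_gg (a b : R) : (gg a b).IsHomogeneous 1 := by
  unfold gg
  apply IsHomogeneous.sub
  · simpa using (isHomogeneous_C (Fin 3) b).mul (isHomogeneous_X R (2 : Fin 3))
  · simpa using (isHomogeneous_C (Fin 3) a).mul (isHomogeneous_X R (1 : Fin 3))

lemma mem_ker_of_homog {m : ℕ} (g : Fin m → R) {F : MvPolynomial (Fin m) R} {n : ℕ}
    (hF : F.IsHomogeneous n) (h0 : eval g F = 0) : F ∈ presKer g := by
  rw [presKer, RingHom.mem_ker]
  ext k
  have := coeff_rees g F k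
  rw [homogeneousComponent_of_mem hF] at this
  refine this.trans ?_
  split_ifs <;> simp [h0]

lemma eval_ff (a b : R) {p n : ℕ} (hn : 1 ≤ n) (hnp : n ≤ p) : eval (g7 a b p) (ff a b p n) = 0 := by
  obtain ⟨k, rfl⟩ := Nat.exists_eq_add_of_le hn
  obtain ⟨l, rfl⟩ := Nat.exists_eq_add_of_le hnp
  have e1 : 1 + k + l - (1 + k) = l := by omega
  have e2 : 1 + k + l - 1 = k + l := by omega
  have e3 : 1 + k - 1 = k := by omega
  simp only [ff, g7, map_sub, map_mul, eval_C, map_pow, eval_X, e1, e2, e3]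
  simp
  ring

lemma eval_gg (a b : R) {p : ℕ} (hp : 1 ≤ p) : eval (g7 a b p) (gg a b) = 0 := by
  obtain ⟨k, rfl⟩ := Nat.exists_eq_add_of_le hp
  simp [gg, g7]
  ring

lemma gens_mem_ker (a b : R) {p : ℕ} (hp : 2 ≤ p) {x} (hx : x ∈ gens7 a b p) :
    x ∈ presKer (g7 a b p) ∧ ∃ k ≤ p, x.IsHomogeneous k := by
  rcases (mem_gens a b hp x).1 hx with rfl | ⟨n, h1, h2, rfl⟩
  · exact ⟨mem_ker_of_homog _ (homog_gg a b) (eval_gg a b (by omega)), 1, by omega, homog_gg a b⟩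
  · exact ⟨mem_ker_of_homog _ (homog_ff a b p n h1) (eval_ff a b h1 h2), n, h2, homog_ff a b p n h1⟩

lemma eval_J (a b : R) {p : ℕ} (hp : 2 ≤ p) {x} (hx : x ∈ Ideal.span (gens7 a b p)) :
    eval (g7 a b p) x = 0 := by
  have : Ideal.span (gens7 a b p) ≤ RingHom.ker (eval (g7 a b p)) := by
    rw [Ideal.span_le]
    intro y hy
    rcases (mem_gens a b hp y).1 hy with rfl | ⟨n, h1, h2, rfl⟩
    · exact eval_gg a b (by omega)
    · exact eval_ff a b h1 h2
  exact this hx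

def SS (p n v : ℕ) : Prop := v / p + v % p ≤ n

open Classical in
noncomputable def EE (R : Type*) [CommRing R] (p n v : ℕ) : MvPolynomial (Fin 3) R :=
  if SS p n v then X 0 ^ (v / p) * X 1 ^ (n - v / p - v % p) * X 2 ^ (v % p) else 0

lemma divmod {p i k : ℕ} (hk : k < p) : (p * i + k) / p = i ∧ (p * i + k) % p = k := by
  constructor
  · rw [Nat.mul_add_div (by omega), Nat.div_eq_of_lt hk, add_zero]
  · rw [Nat.mul_add_mod, Nat.mod_eq_of_lt hk]

lemma SS_mk {p n i k : ℕ} (hk : k < p) : SS p n (p * i + k) ↔ i + k ≤ n := by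
  unfold SS
  rw [(divmod hk).1, (divmod hk).2]

lemma EE_mk (R : Type*) [CommRing R] {p i j k : ℕ} (hk : k < p) :
    EE R p (i + j + k) (p * i + k) = X 0 ^ i * X 1 ^ j * X 2 ^ k := by
  unfold EE
  rw [if_pos ((SS_mk hk).2 (by omega)), (divmod hk).1, (divmod hk).2]
  congr 3
  omega

lemma SS_le {p n v : ℕ} (hp : 2 ≤ p) (h : SS p n v) : v ≤ p * n := by
  have h1 := Nat.div_add_mod v p
  unfold SS at h
  calc v = p * (v / p) + v % p := h1.symm
    _ ≤ p * (v / p) + p * (v % p) := by gcongr; exact Nat.le_mul_of_pos_left _ (by omega)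
    _ = p * (v / p + v % p) := by ring
    _ ≤ p * n := by gcongr

lemma SS_exists {p n v : ℕ} (hp : 2 ≤ p) (h : SS p n v) :
    ∃ i j k, k < p ∧ n = i + j + k ∧ v = p * i + k := by
  refine ⟨v / p, n - v / p - v % p, v % p, Nat.mod_lt _ (by omega), ?_, (Nat.div_add_mod v p).symm⟩
  unfold SS at h
  omega

lemma ff_mem (a b : R) {p n : ℕ} (hp : 2 ≤ p) (h1 : 1 ≤ n) (h2 : n ≤ p) :
    ff a b p n ∈ Ideal.span (gens7 a b p) :=
  Ideal.subset_span ((mem_gens a b hp _).2 (Or.inr ⟨n, h1, h2, rfl⟩))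

lemma gg_mem (a b : R) {p : ℕ} (hp : 2 ≤ p) : gg a b ∈ Ideal.span (gens7 a b p) :=
  Ideal.subset_span ((mem_gens a b hp _).2 (Or.inl rfl))

lemma mono_red (a b : R) {p : ℕ} (hp : 2 ≤ p) (n : ℕ) : ∀ k i j, i + j + k = n →
    ∃ v, SS p n v ∧
      (X 0 ^ i * X 1 ^ j * X 2 ^ k - EE R p n v : MvPolynomial (Fin 3) R)
        ∈ Ideal.span (gens7 a b p) := by
  intro k
  induction k using Nat.strong_induction_on with
  | _ k ih =>
    intro i j hn
    by_cases hk : k < p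
    · subst hn
      refine ⟨p * i + k, (SS_mk hk).2 (by omega), ?_⟩
      rw [EE_mk R hk, sub_self]
      exact zero_mem _
    · obtain ⟨l, rfl⟩ := Nat.exists_eq_add_of_le (not_lt.1 hk)
      obtain ⟨v, hv, hm⟩ := ih l (by omega) (i + 1) (j + (p - 1)) (by omega)
      refine ⟨v, hv, ?_⟩
      have h2 := Ideal.mul_mem_left _ (X 0 ^ i * X 1 ^ j * X 2 ^ l)
        (ff_mem a b hp (by omega) (le_refl p))
      convert add_mem h2 hm using 1
      simp only [ff, Nat.sub_self, pow_zero, C_1]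
      ring

lemma step (a b : R) {p : ℕ} (hp : 2 ≤ p) {n v : ℕ} (hv : SS p n v) (hlt : v < p * n) :
    ∃ d, 1 ≤ d ∧ SS p n (v + d) ∧ (∀ w, v < w → w < v + d → ¬ SS p n w) ∧
      (C (a ^ d) * EE R p n v - C (b ^ d) * EE R p n (v + d)) ∈ Ideal.span (gens7 a b p) := by
  obtain ⟨i, j, k, hk, rfl, rfl⟩ := SS_exists hp hv
  rcases Nat.eq_zero_or_pos j with rfl | hj
  · have hk1 : 1 ≤ k := by
      by_contra h0
      obtain rfl : k = 0 := by omega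
      simp at hlt
    have e1 : p * i + k + (p - k) = p * (i + 1) + 0 := by
      rw [mul_add]; omega
    refine ⟨p - k, by omega, ?_, ?_, ?_⟩
    · rw [e1, SS_mk (by omega)]; omega
    · intro w h1 h2 
      obtain ⟨l, rfl⟩ : ∃ l, w = p * i + l := Nat.exists_eq_add_of_le (by omega)
      rw [SS_mk (by omega)]
      omega
    · rw [e1, EE_mk R hk, show i + 0 + k = (i + 1) + (k - 1) + 0 by omega, EE_mk R (by omega)]
      convert Ideal.mul_mem_left _ (X 0 ^ i) (ff_mem a b hp hk1 hk.le) using 1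
      unfold ff
      ring
  · obtain ⟨j, rfl⟩ : ∃ j', j = j' + 1 := ⟨j - 1, by omega⟩
    refine ⟨1, le_rfl, ?_⟩
    have hg := Ideal.mul_mem_left _ (- (X 0 ^ i * X 1 ^ j * X 2 ^ k)) (gg_mem a b hp)
    rcases Nat.lt_or_ge (k + 1) p with hk2 | hk2
    · refine ⟨?_, fun w h1 h2 => by omega, ?_⟩
      · rw [add_assoc (p * i), SS_mk hk2]; omega
      · rw [EE_mk R hk, add_assoc (p * i), show i + (j + 1) + k = i + j + (k + 1) by omega,
          EE_mk R hk2]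
        convert hg using 1
        unfold gg
        simp only [pow_one]
        ring
    · obtain rfl : p = k + 1 := by omega
      have e1 : (k + 1) * i + k + 1 = (k + 1) * (i + 1) + 0 := by ring
      refine ⟨?_, fun w h1 h2 => by omega, ?_⟩
      · rw [e1, SS_mk (by omega)]; omega
      · rw [EE_mk R hk, e1, show i + (j + 1) + k = (i + 1) + (j + k) + 0 by omega,
          EE_mk R (by omega)]
        have hf := Ideal.mul_mem_left _ (C b * X 0 ^ i * X 1 ^ j)
          (ff_mem a b hp (by omega) (le_refl (k + 1)))
        convert add_mem hg hf using 1
        simp only [ff, gg, Nat.sub_self, pow_zero, C_1, pow_one, Nat.add_sub_cancel]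
        ring

lemma eval_EE (a b : R) {p : ℕ} (hp : 2 ≤ p) {n v : ℕ} (hv : SS p n v) :
    eval (g7 a b p) (EE R p n v) = a ^ v * b ^ (p * n - v) := by
  obtain ⟨i, j, k, hk, rfl, rfl⟩ := SS_exists hp hv
  rw [EE_mk R hk]
  obtain ⟨q, rfl⟩ : ∃ q, p = q + 1 := ⟨p - 1, by omega⟩
  have : (q + 1) * (i + j + k) - ((q + 1) * i + k) = (q + 1) * j + q * k := by
    rw [Nat.sub_eq_iff_eq_add (by nlinarith)]
    ring
  rw [this]
  simp [g7]
  ring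

lemma core (a b : R) (ha : ∀ c d, a * c = a * d → c = d) (hb : ∀ c, a ∣ b * c → a ∣ c)
    {p : ℕ} (hp : 2 ≤ p) (n : ℕ) : ∀ m u, u + m = p * n + 1 → ∀ c : ℕ → R,
    (∑ v ∈ Finset.Ico u (p * n + 1), c v * eval (g7 a b p) (EE R p n v) = 0) →
    (∑ v ∈ Finset.Ico u (p * n + 1), C (c v) * EE R p n v) ∈ Ideal.span (gens7 a b p) := by
  intro m
  induction m with
  | zero =>
    intro u hu c _
    rw [Finset.Ico_eq_empty (by omega)]
    simp
  | succ m ih =>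
    intro u hu c hc
    rw [Finset.sum_eq_sum_Ico_succ_bot (by omega)] at hc ⊢
    by_cases hS : SS p n u
    swap
    · have h0 : EE R p n u = 0 := if_neg hS
      rw [h0] at hc ⊢
      simp only [map_zero, mul_zero, zero_add] at hc ⊢
      exact ih (u + 1) (by omega) c hc
    rcases (SS_le hp hS).eq_or_lt with hl | hl
    · rw [← hl] at hc ⊢
      rw [Finset.Ico_self, Finset.sum_empty, add_zero, eval_EE a b hp hS, hl, Nat.sub_self,
        pow_zero, mul_one] at hc
      have : c (p * n) = 0 := by
        apply pow_cancel ha (p * n)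
        rw [mul_zero, mul_comm]; exact hc
      rw [hl, this]
      simp
    · obtain ⟨d, hd1, hSd, hgap, hrel⟩ := step a b hp hS hl
      have hdle := SS_le hp hSd
      have hdvd : a ^ (u + d) ∣ ∑ v ∈ Finset.Ico (u + 1) (p * n + 1),
          c v * eval (g7 a b p) (EE R p n v) := by
        apply Finset.dvd_sum
        intro v hv
        rw [Finset.mem_Ico] at hv
        by_cases hSv : SS p n v
        · rw [eval_EE a b hp hSv]
          have : u + d ≤ v := by
            by_contra hlt
            exact hgap v (by omega) (by omega) hSv
          exact ((pow_dvd_pow a this).mul_right _).mul_left _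
        · have h0 : EE R p n v = 0 := if_neg hSv
          simp [h0]
      have hcu : a ^ d ∣ c u := by
        obtain ⟨s, hs⟩ := hdvd
        apply dvd_pow_of ha hb d (p * n - u)
        refine ⟨-s, ?_⟩
        apply pow_cancel ha u
        rw [hs, eval_EE a b hp hS, pow_add] at hc
        linear_combination hc
      obtain ⟨r, hr⟩ := hcu
      have hmem : u + d ∈ Finset.Ico (u + 1) (p * n + 1) := by
        rw [Finset.mem_Ico]; omega
      have hev := eval_J a b hp hrel
      simp only [map_sub, map_mul, eval_C] at hev
      have := ih (u + 1) (by omega) (fun v => c v + if v = u + d then b ^ d * r else 0) (by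
        simp only [add_mul, Finset.sum_add_distrib, ite_mul, zero_mul]
        rw [Finset.sum_ite_eq' _ (u + d), if_pos hmem]
        rw [hr] at hc
        linear_combination hc - r * hev)
      have h2 := add_mem this (Ideal.mul_mem_left _ (C r) hrel)
      convert h2 using 1
      simp only [C_add, add_mul, Finset.sum_add_distrib]
      have h3 : ∑ x ∈ Finset.Ico (u + 1) (p * n + 1),
          C (if x = u + d then b ^ d * r else 0) * EE R p n x
          = C (b ^ d * r) * EE R p n (u + d) := by
        rw [Finset.sum_eq_single_of_mem (u + d) hmem]
        · simp
        · intro x _ hx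
          simp [hx]
      rw [h3, hr]
      simp only [C_mul]
      ring

lemma repr_mod (a b : R) {p : ℕ} (hp : 2 ≤ p) (n : ℕ) (F : MvPolynomial (Fin 3) R)
    (hF : F.IsHomogeneous n) : ∃ c : ℕ → R,
      F - ∑ v ∈ Finset.Ico 0 (p * n + 1), C (c v) * EE R p n v ∈ Ideal.span (gens7 a b p) := by
  rw [F.as_sum]
  apply Finset.sum_induction _ (fun F => ∃ c : ℕ → R,
      F - ∑ v ∈ Finset.Ico 0 (p * n + 1), C (c v) * EE R p n v ∈ Ideal.span (gens7 a b p))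
  · rintro F G ⟨c, hc⟩ ⟨d, hd⟩
    refine ⟨c + d, ?_⟩
    convert add_mem hc hd using 1
    simp only [Pi.add_apply, C_add, add_mul, Finset.sum_add_distrib]
    ring
  · exact ⟨0, by simp⟩
  · intro d hd
    have hdeg : d 0 + d 1 + d 2 = n := by
      have := hF (mem_support_iff.1 hd)
      rw [Finsupp.weight_apply, Finsupp.sum_fintype _ _ (by simp), Fin.sum_univ_three] at this
      simpa using this
    obtain ⟨v, hv, hm⟩ := mono_red a b hp n (d 2) (d 0) (d 1) hdeg
    have hmem : v ∈ Finset.Ico 0 (p * n + 1) := by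
      have := SS_le hp hv
      rw [Finset.mem_Ico]; omega
    refine ⟨fun x => if x = v then coeff d F else 0, ?_⟩
    rw [Finset.sum_eq_single_of_mem v hmem (by intro x _ hx; simp [hx])]
    convert Ideal.mul_mem_left _ (C (coeff d F)) hm using 1
    rw [monomial_eq, Finsupp.prod_fintype _ _ (by simp), Fin.prod_univ_three]
    simp only [if_true]
    ring

lemma ker_eq (a b : R) (ha : ∀ c d, a * c = a * d → c = d) (hb : ∀ c, a ∣ b * c → a ∣ c)
    {p : ℕ} (hp : 2 ≤ p) : presKer (g7 a b p) = Ideal.span (gens7 a b p) := by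
  apply le_antisymm
  · intro F hF
    rw [presKer, RingHom.mem_ker] at hF
    rw [← sum_homogeneousComponent F]
    apply sum_mem
    intro n _
    have h0 : eval (g7 a b p) (homogeneousComponent n F) = 0 := by
      rw [← coeff_rees, hF, Polynomial.coeff_zero]
    obtain ⟨c, hc⟩ := repr_mod a b hp n _ (homogeneousComponent_isHomogeneous n F)
    have h1 := eval_J a b hp hc
    rw [map_sub, h0, zero_sub, neg_eq_zero, map_sum] at h1
    simp only [map_mul, eval_C] at h1
    have h2 := core a b ha hb hp n (p * n + 1) 0 (by omega) c h1
    simpa using add_mem hc h2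
  · rw [Ideal.span_le]
    intro x hx
    exact (gens_mem_ker a b hp hx).1

/-- `X₁, X₂ ↦ 0`, `Y ↦ T`. -/
noncomputable def psi (R : Type*) [CommRing R] : MvPolynomial (Fin 3) R →ₐ[R] Polynomial R :=
  aeval ![0, 0, Polynomial.X]

noncomputable def psiQ (K : Ideal R) : MvPolynomial (Fin 3) R →+* Polynomial (R ⧸ K) :=
  (Polynomial.mapRingHom (Ideal.Quotient.mk K)).comp (psi R : MvPolynomial (Fin 3) R →+* _)

lemma psiQ_ff (K : Ideal R) (a b : R) (p n : ℕ) :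
    psiQ K (ff a b p n) = Polynomial.C (Ideal.Quotient.mk K (a ^ (p - n))) * Polynomial.X ^ n := by
  simp [psiQ, psi, ff]

lemma psiQ_gg (K : Ideal R) (a b : R) :
    psiQ K (gg a b) = Polynomial.C (Ideal.Quotient.mk K b) * Polynomial.X := by
  simp [psiQ, psi, gg]

lemma not_mem_K [IsLocalRing R] {a b : R} (ha : ∀ c d, a * c = a * d → c = d)
    (hb : ∀ c, a ∣ b * c → a ∣ c) (hne : Ideal.span {a, b} ≠ ⊤) (s : ℕ) :
    a ^ s ∉ Ideal.span {b, a ^ (s + 1)} := by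
  have hle := IsLocalRing.le_maximalIdeal hne
  have ham : a ∈ IsLocalRing.maximalIdeal R := hle (Ideal.subset_span (by simp))
  have hbm : b ∈ IsLocalRing.maximalIdeal R := hle (Ideal.subset_span (by simp))
  intro h
  obtain ⟨x, y, hxy⟩ := Ideal.mem_span_pair.1 h
  have h1 : a ^ s ∣ b ^ 1 * x := ⟨1 - a * y, by rw [pow_succ] at hxy; linear_combination hxy⟩
  obtain ⟨z, rfl⟩ := dvd_pow_of ha hb s 1 x h1
  have h2 : z * b + y * a = 1 := by
    apply pow_cancel ha s
    rw [pow_succ] at hxy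
    linear_combination hxy
  have : (1 : R) ∈ IsLocalRing.maximalIdeal R := by
    rw [← h2]
    exact add_mem (Ideal.mul_mem_left _ _ hbm) (Ideal.mul_mem_left _ _ ham)
  exact (Ideal.ne_top_iff_one _).1 (IsLocalRing.maximalIdeal.isMaximal R).ne_top this

lemma irred_ff [IsLocalRing R] {a b : R} (ha : ∀ c d, a * c = a * d → c = d)
    (hb : ∀ c, a ∣ b * c → a ∣ c) (hne : Ideal.span {a, b} ≠ ⊤) {p : ℕ} (hp : 2 ≤ p)
    {n : ℕ} (h2 : n ≤ p) :
    ff a b p n ∉ Ideal.span (gens7 a b p \ {ff a b p n}) := by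
  set K := Ideal.span {b, a ^ (p - n + 1)} with hK
  have hle : Ideal.span (gens7 a b p \ {ff a b p n}) ≤
      (Ideal.span {(Polynomial.X : Polynomial (R ⧸ K)) ^ (n + 1)}).comap (psiQ K) := by
    rw [Ideal.span_le]
    rintro x ⟨hx, hxn⟩
    simp only [SetLike.mem_coe, Ideal.mem_comap, Ideal.mem_span_singleton]
    rcases (mem_gens a b hp x).1 hx with rfl | ⟨m, m1, m2, rfl⟩
    · rw [psiQ_gg, Ideal.Quotient.eq_zero_iff_mem.2 (Ideal.subset_span (by simp))]
      simp
    · rw [psiQ_ff]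
      rcases lt_trichotomy m n with hmn | rfl | hmn
      · have : a ^ (p - m) ∈ K := by
          apply Ideal.mem_of_dvd _ (pow_dvd_pow a (show p - n + 1 ≤ p - m by omega))
          exact Ideal.subset_span (by simp)
        rw [Ideal.Quotient.eq_zero_iff_mem.2 this]
        simp
      · exact absurd rfl hxn
      · exact (pow_dvd_pow _ hmn).mul_left _
  intro h
  have h3 := hle h
  rw [Ideal.mem_comap, psiQ_ff, Ideal.mem_span_singleton, Polynomial.X_pow_dvd_iff] at h3
  have h4 := h3 n (by omega)
  rw [Polynomial.coeff_C_mul_X_pow, if_pos rfl, Ideal.Quotient.eq_zero_iff_mem] at h4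
  exact not_mem_K ha hb hne _ h4

lemma irred_gg [Nontrivial R] {a b : R} (ha : ∀ c d, a * c = a * d → c = d) {p : ℕ} (hp : 2 ≤ p) :
    gg a b ∉ Ideal.span (gens7 a b p \ {gg a b}) := by
  have hle : Ideal.span (gens7 a b p \ {gg a b}) ≤ RingHom.ker (eval ![(0 : R), 1, 0]) := by
    rw [Ideal.span_le]
    rintro x ⟨hx, hxn⟩
    rcases (mem_gens a b hp x).1 hx with rfl | ⟨m, m1, m2, rfl⟩
    · exact absurd rfl hxn
    · simp [RingHom.mem_ker, ff]
      rw [zero_pow (by omega), mul_zero]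
  intro h
  have h3 := hle h
  simp [RingHom.mem_ker, gg] at h3
  exact zero_ne_one (ha 0 1 (by simp [h3]))

lemma rt_lower [IsLocalRing R] {a b : R} (ha : ∀ c d, a * c = a * d → c = d)
    (hb : ∀ c, a ∣ b * c → a ∣ c) (hne : Ideal.span {a, b} ≠ ⊤) {p : ℕ} (hp : 2 ≤ p)
    {N : ℕ} (h : presKer (g7 a b p) = presKerLe (g7 a b p) N) : p ≤ N := by
  by_contra hN
  set K := Ideal.span {b, a ^ (0 + 1)} with hK
  have h1 : Ideal.span (gens7 a b p) ≤
      (Ideal.span {(Polynomial.X : Polynomial (R ⧸ K)) ^ p}).comap (psiQ K) := by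
    rw [Ideal.span_le]
    intro x hx
    simp only [SetLike.mem_coe, Ideal.mem_comap, Ideal.mem_span_singleton]
    rcases (mem_gens a b hp x).1 hx with rfl | ⟨m, m1, m2, rfl⟩
    · rw [psiQ_gg, Ideal.Quotient.eq_zero_iff_mem.2 (Ideal.subset_span (by simp))]
      simp
    · rw [psiQ_ff]
      rcases m2.lt_or_eq with hmn | rfl
      · have : a ^ (p - m) ∈ K := by
          apply Ideal.mem_of_dvd _ (pow_dvd_pow a (show 0 + 1 ≤ p - m by omega))
          exact Ideal.subset_span (by simp)
        rw [Ideal.Quotient.eq_zero_iff_mem.2 this]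
        simp
      · exact Dvd.intro_left _ rfl
  have h2 : presKerLe (g7 a b p) N ≤ RingHom.ker (psiQ K) := by
    rw [presKerLe, Ideal.span_le]
    rintro F ⟨hF, k, hk, hFk⟩
    rw [ker_eq a b ha hb hp] at hF
    have h3 := h1 hF
    rw [Ideal.mem_comap, Ideal.mem_span_singleton, Polynomial.X_pow_dvd_iff] at h3
    have hdeg : (psi R F).natDegree ≤ k * 1 := by
      apply MvPolynomial.aeval_natDegree_le _ hFk.totalDegree_le
      intro i
      fin_cases i <;> simp [Polynomial.natDegree_X_le]
    have hdeg2 : (psiQ K F).natDegree ≤ k * 1 := Polynomial.natDegree_map_le.trans hdeg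
    rw [SetLike.mem_coe, RingHom.mem_ker]
    ext i
    rcases Nat.lt_or_ge i p with hi | hi
    · simpa using h3 i hi
    · rw [Polynomial.coeff_eq_zero_of_natDegree_lt (by omega), Polynomial.coeff_zero]
  rw [← h, ker_eq a b ha hb hp] at h2
  have h4 := h2 (ff_mem a b hp (by omega) (le_refl p))
  rw [RingHom.mem_ker, psiQ_ff] at h4
  have h5 := congrArg (fun q => Polynomial.coeff q p) h4
  simp only [Polynomial.coeff_C_mul_X_pow, if_true, Polynomial.coeff_zero, Nat.sub_self] at h5
  rw [Ideal.Quotient.eq_zero_iff_mem] at h5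
  exact not_mem_K ha hb hne 0 h5

end

end S7

/-- For a regular sequence `a,b` in a Noetherian local ring and `p ≥ 2`, the ideal of
equations of the Rees algebra of `I = (aᵖ, bᵖ, abᵖ⁻¹)` is minimally generated by the
forms in `gens7 a b p`; in particular `rt(I) = p`. -/
theorem statement7 {R : Type*} [CommRing R] [IsNoetherianRing R] [IsLocalRing R]
    (a b : R) (hreg : RingTheory.Sequence.IsRegular R [a, b])
    (p : ℕ) (hp : 2 ≤ p) :
    presKer ![a ^ p, b ^ p, a * b ^ (p - 1)] = Ideal.span (gens7 a b p) ∧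
    (∀ f ∈ gens7 a b p,
      presKer ![a ^ p, b ^ p, a * b ^ (p - 1)] ≠ Ideal.span (gens7 a b p \ {f})) ∧
    IsLeast {N : ℕ | 1 ≤ N ∧
      presKer ![a ^ p, b ^ p, a * b ^ (p - 1)]
        = presKerLe ![a ^ p, b ^ p, a * b ^ (p - 1)] N} p := by
  obtain ⟨ha, hb, hne⟩ := S7.reg_extract hreg
  have hker := S7.ker_eq a b ha hb hp
  refine ⟨hker, ?_, ⟨by omega, ?_⟩, ?_⟩
  · intro f hf heq
    have hmem : f ∈ Ideal.span (gens7 a b p \ {f}) := by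
      rw [← heq]
      exact (S7.gens_mem_ker a b hp hf).1
    rcases (S7.mem_gens a b hp f).1 hf with rfl | ⟨n, h1, h2, rfl⟩
    · exact S7.irred_gg ha hp hmem
    · exact S7.irred_ff ha hb hne hp h2 hmem
  · apply le_antisymm
    · rw [hker, Ideal.span_le]
      intro x hx
      exact Ideal.subset_span (S7.gens_mem_ker a b hp hx)
    · rw [presKerLe, Ideal.span_le]
      rintro x ⟨hx, -⟩
      exact hx
  · rintro N ⟨-, hN⟩
    exact S7.rt_lower ha hb hne hp hN
end

section
/- Let (R,m) be a Noetherian local ring, let a,b be an R-regular sequence and let p ≥ 5 be an odd integer. Set x_1 = a^p, x_2 = b^p, y = a^2 b^{p-2}, J = (x_1,x_2) and I = (x_1,x_2,y). Then: (i) (JI^n : y^{n+1}) = (a^{p-2n-2}, b^2) for 1 ≤ n ≤ (p−3)/2, (JI^n : y^{n+1}) = (a,b) for (p−1)/2 ≤ n ≤ p−2, and (JI^n : y^{n+1}) = R for n ≥ p−1; in particular J is a reduction of I with reduction number r_J(I) = p−1. (ii) ((x_1 I^{n-1} : x_2) ∩ I^{n-1})/(x_1 I^{n-2}) = 0 for all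 n ≥ 2. (iii) rt(I) = p. -/
open MvPolynomial

section Helpers

variable {R : Type*} [CommRing R]

/-- working form of permutable regularity -/
structure GoodPair (a b : R) : Prop where
  a0 : ∀ x, a * x = 0 → x = 0
  b0 : ∀ x, b * x = 0 → x = 0
  ab : ∀ x, a ∣ x * b → a ∣ x
  ba : ∀ x, b ∣ x * a → b ∣ x

lemma reg_aux (a b : R) (h : RingTheory.Sequence.IsRegular R [a, b]) :
    (∀ x, a * x = 0 → x = 0) ∧ (∀ x, a ∣ x * b → a ∣ x) := by
  constructor
  · have h0 := h.toIsWeaklyRegular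
    rw [RingTheory.Sequence.isWeaklyRegular_cons_iff] at h0
    intro x hx
    exact (isSMulRegular_iff_right_eq_zero_of_smul.mp h0.1) x (by simpa using hx)
  · have h1 := h.toIsWeaklyRegular.regular_mod_prev 1 (by simp)
    rw [isSMulRegular_iff_right_eq_zero_of_smul] at h1
    intro x hx
    have := h1 (Submodule.Quotient.mk x) (by
      rw [← Submodule.Quotient.mk_smul, Submodule.Quotient.mk_eq_zero]
      simpa [Ideal.mem_span_singleton, mul_comm] using hx)
    rw [Submodule.Quotient.mk_eq_zero] at this
    simpa [Ideal.mem_span_singleton] using this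

lemma reg_ne_top (a b : R) (h : RingTheory.Sequence.IsRegular R [a, b]) :
    Ideal.span {a, b} ≠ ⊤ := by
  have := h.top_ne_smul
  intro h1
  apply this
  rw [Ideal.ofList_cons, Ideal.ofList_singleton, ← Ideal.span_union]
  simp [Set.pair_comm b a, h1]

lemma reg_good [IsNoetherianRing R] [IsLocalRing R] (a b : R)
    (h : RingTheory.Sequence.IsRegular R [a, b]) : GoodPair a b := by
  have h2 := reg_aux b a (IsLocalRing.isRegular_of_perm h (List.Perm.swap b a []))
  have h1 := reg_aux a b h
  exact ⟨h1.1, h2.1, h1.2, h2.2⟩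

lemma GoodPair.symm {a b : R} (h : GoodPair a b) : GoodPair b a := ⟨h.b0, h.a0, h.ba, h.ab⟩

lemma GoodPair.apow {a b : R} (h : GoodPair a b) (u : ℕ) (x : R) (hx : a ^ u * x = 0) : x = 0 := by
  induction u with
  | zero => simpa using hx
  | succ u ih => exact ih (h.a0 _ (by rw [← hx]; ring))

lemma GoodPair.acancel {a b : R} (h : GoodPair a b) (u : ℕ) {x y : R}
    (hx : a ^ u * x = a ^ u * y) : x = y :=
  sub_eq_zero.mp (h.apow u _ (by rw [mul_sub, hx, sub_self]))

lemma GoodPair.dvd {a b : R} (h : GoodPair a b) (u v : ℕ) :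
    ∀ c, a ^ u ∣ c * b ^ v → a ^ u ∣ c := by
  have h1 : ∀ v c, a ∣ c * b ^ v → a ∣ c := by
    intro v
    induction v with
    | zero => intro c hc; simpa using hc
    | succ v ih => intro c hc; exact ih c (h.ab _ (by rw [mul_assoc, ← pow_succ]; exact hc))
  induction u with
  | zero => intro c _; simp
  | succ u ih =>
    intro c hc
    obtain ⟨c', rfl⟩ := h1 v c (dvd_trans (dvd_pow_self a (by simp)) hc)
    rw [pow_succ']
    apply mul_dvd_mul_left
    apply ih
    obtain ⟨d, hd⟩ := hc
    refine ⟨d, ?_⟩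
    have := h.acancel 1 (x := c' * b ^ v) (y := a ^ u * d) (by
      rw [pow_one]; rw [pow_succ] at hd; linear_combination hd)
    exact this

/-- the colon lemma -/
lemma GoodPair.colon {a b : R} (h : GoodPair a b) {u v g k : ℕ} {c : R}
    (hc : c * (a ^ u * b ^ v) ∈ Ideal.span {a ^ (u + g), b ^ (v + k)}) :
    c ∈ Ideal.span {a ^ g, b ^ k} := by
  obtain ⟨r, s, hrs⟩ := Ideal.mem_span_pair.mp hc
  have h1 : a ^ u ∣ s := h.dvd u (v + k) s ⟨c * b ^ v - r * a ^ g, by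
    rw [pow_add a] at hrs; linear_combination hrs⟩
  obtain ⟨s', rfl⟩ := h1
  have h2 : c * b ^ v = r * a ^ g + s' * b ^ (v + k) :=
    h.acancel u (by rw [pow_add a] at hrs; linear_combination -hrs)
  have h3 : b ^ v ∣ r := h.symm.dvd v g r ⟨c - s' * b ^ k, by
    rw [pow_add b] at h2; linear_combination -h2⟩
  obtain ⟨r', rfl⟩ := h3
  have h4 : c = r' * a ^ g + s' * b ^ k :=
    h.symm.acancel v (by rw [pow_add b] at h2; linear_combination h2)
  exact Ideal.mem_span_pair.mpr ⟨r', s', h4.symm⟩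

/-- monomial ideals -/
def mono (a b : R) (S : Set (ℕ × ℕ)) : Ideal R :=
  Ideal.span ((fun q : ℕ × ℕ => a ^ q.1 * b ^ q.2) '' S)

lemma mono_mem {a b : R} {S : Set (ℕ × ℕ)} {u v : ℕ} (h : (u, v) ∈ S) :
    a ^ u * b ^ v ∈ mono a b S := Ideal.subset_span ⟨(u, v), h, rfl⟩

lemma mono_mem' {a b : R} {S : Set (ℕ × ℕ)} {u v u' v' : ℕ} (h : (u, v) ∈ S)
    (hu : u ≤ u') (hv : v ≤ v') : a ^ u' * b ^ v' ∈ mono a b S :=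
  Ideal.mem_of_dvd _ (mul_dvd_mul (pow_dvd_pow a hu) (pow_dvd_pow b hv)) (mono_mem h)

lemma mono_le {a b : R} {S : Set (ℕ × ℕ)} {K : Ideal R}
    (h : ∀ u v, (u, v) ∈ S → a ^ u * b ^ v ∈ K) : mono a b S ≤ K := by
  rw [mono, Ideal.span_le]
  rintro _ ⟨⟨u, v⟩, hq, rfl⟩
  exact h u v hq

lemma mono_mono {a b : R} {S T : Set (ℕ × ℕ)} (h : S ⊆ T) : mono a b S ≤ mono a b T :=
  Ideal.span_mono (Set.image_mono h)

open Pointwise in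
lemma mono_mul (a b : R) (S T : Set (ℕ × ℕ)) :
    mono a b S * mono a b T = mono a b (S + T) := by
  rw [mono, mono, mono, Ideal.span_mul_span']
  congr 1
  ext x
  constructor
  · rintro ⟨_, ⟨⟨u, v⟩, h1, rfl⟩, _, ⟨⟨u', v'⟩, h2, rfl⟩, rfl⟩
    exact ⟨(u + u', v + v'), ⟨_, h1, _, h2, rfl⟩, by simp only; ring⟩
  · rintro ⟨_, ⟨⟨u, v⟩, h1, ⟨u', v'⟩, h2, rfl⟩, rfl⟩
    exact ⟨_, ⟨_, h1, rfl⟩, _, ⟨_, h2, rfl⟩, by simp only [Prod.mk_add_mk]; ring⟩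

/-- exponents of the generators of `I ^ n`, with `p = r + 2` -/
def ES (r n : ℕ) : Set (ℕ × ℕ) :=
  {q | ∃ i j k, i + j + k = n ∧ q = ((r + 2) * i + 2 * k, (r + 2) * j + r * k)}

/-- exponents of the generators of `J * I ^ n` -/
def JS (r n : ℕ) : Set (ℕ × ℕ) :=
  {q | ∃ i j k, i + j + k = n + 1 ∧ 1 ≤ i + j ∧
    q = ((r + 2) * i + 2 * k, (r + 2) * j + r * k)}

/-- exponents of the generators of `x₁ * I ^ n` -/
def XS (r n : ℕ) : Set (ℕ × ℕ) :=
  {q | ∃ i j k, i + j + k = n ∧ q = ((r + 2) * (i + 1) + 2 * k, (r + 2) * j + r * k)}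

lemma J_eq (a b : R) (r : ℕ) :
    Ideal.span {a ^ (r + 2), b ^ (r + 2)} = mono a b {(r + 2, 0), (0, r + 2)} := by
  rw [mono, Set.image_pair]; simp

lemma I_eq (a b : R) (r : ℕ) :
    Ideal.span {a ^ (r + 2), b ^ (r + 2), a ^ 2 * b ^ r}
      = mono a b {(r + 2, 0), (0, r + 2), (2, r)} := by
  rw [mono, Set.image_insert_eq, Set.image_pair]; simp

open Pointwise in
lemma Ipow_eq (a b : R) (r n : ℕ) :
    Ideal.span {a ^ (r + 2), b ^ (r + 2), a ^ 2 * b ^ r} ^ n = mono a b (ES r n) := by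
  induction n with
  | zero =>
    rw [pow_zero, Ideal.one_eq_top, eq_comm, Ideal.eq_top_iff_one]
    simpa using mono_mem (a := a) (b := b) (S := ES r 0) (u := 0) (v := 0) ⟨0, 0, 0, by simp⟩
  | succ n ih =>
    rw [pow_succ, ih, I_eq, mono_mul]
    congr 1
    ext q
    constructor
    · rintro ⟨_, ⟨i, j, k, h, rfl⟩, _, (rfl | rfl | rfl), rfl⟩
      · exact ⟨i + 1, j, k, by omega, by ext <;> simp <;> ring⟩
      · exact ⟨i, j + 1, k, by omega, by ext <;> simp <;> ring⟩
      · exact ⟨i, j, k + 1, by omega, by ext <;> simp <;> ring⟩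
    · rintro ⟨i, j, k, h, rfl⟩
      rcases i with _ | i
      · rcases j with _ | j
        · rcases k with _ | k
          · omega
          · exact ⟨_, ⟨0, 0, k, by omega, rfl⟩, (2, r), by simp, by ext <;> simp <;> ring⟩
        · exact ⟨_, ⟨0, j, k, by omega, rfl⟩, (0, r + 2), by simp, by ext <;> simp; ring⟩
      · exact ⟨_, ⟨i, j, k, by omega, rfl⟩, (r + 2, 0), by simp, by ext <;> simp; ring⟩

open Pointwise in
lemma JI_eq (a b : R) (r n : ℕ) :
    Ideal.span {a ^ (r + 2), b ^ (r + 2)} *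
      Ideal.span {a ^ (r + 2), b ^ (r + 2), a ^ 2 * b ^ r} ^ n = mono a b (JS r n) := by
  rw [Ipow_eq, J_eq, mono_mul]
  congr 1
  ext q
  constructor
  · rintro ⟨_, (rfl | rfl), _, ⟨i, j, k, h, rfl⟩, rfl⟩
    · exact ⟨i + 1, j, k, by omega, by omega, by ext <;> simp; ring⟩
    · exact ⟨i, j + 1, k, by omega, by omega, by ext <;> simp; ring⟩
  · rintro ⟨i, j, k, h, h', rfl⟩
    rcases i with _ | i
    · rcases j with _ | j
      · omega
      · exact ⟨(0, r + 2), by simp, _, ⟨0, j, k, by omega, rfl⟩, by ext <;> simp; ring⟩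
    · exact ⟨(r + 2, 0), by simp, _, ⟨i, j, k, by omega, rfl⟩, by ext <;> simp; ring⟩

open Pointwise in
lemma XI_eq (a b : R) (r n : ℕ) :
    Ideal.span {a ^ (r + 2)} *
      Ideal.span {a ^ (r + 2), b ^ (r + 2), a ^ 2 * b ^ r} ^ n = mono a b (XS r n) := by
  have : Ideal.span {a ^ (r + 2)} = mono a b {(r + 2, 0)} := by rw [mono, Set.image_singleton]; simp
  rw [Ipow_eq, this, mono_mul]
  congr 1
  ext q
  constructor
  · rintro ⟨_, rfl, _, ⟨i, j, k, h, rfl⟩, rfl⟩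
    exact ⟨i, j, k, by omega, by ext <;> simp; ring⟩
  · rintro ⟨i, j, k, h, rfl⟩
    exact ⟨(r + 2, 0), rfl, _, ⟨i, j, k, by omega, rfl⟩, by ext <;> simp; ring⟩

lemma ypow (a b : R) (r n : ℕ) :
    (a ^ 2 * b ^ r) ^ n = a ^ (2 * n) * b ^ (r * n) := by
  rw [mul_pow, ← pow_mul, ← pow_mul]

lemma GoodPair.colon_le {a b : R} (h : GoodPair a b) {S : Set (ℕ × ℕ)} {U V g k : ℕ}
    (hS : ∀ u v, (u, v) ∈ S → U + g ≤ u ∨ V + k ≤ v) :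
    (mono a b S).colon (Ideal.span {a ^ U * b ^ V}) ≤ Ideal.span {a ^ g, b ^ k} := by
  intro c hc
  rw [Ideal.mem_colon_span_singleton] at hc
  apply h.colon (u := U) (v := V)
  refine mono_le ?_ hc
  intro u v huv
  rcases hS u v huv with h1 | h1
  · exact Ideal.mul_mem_right _ _ (Ideal.mem_of_dvd _ (pow_dvd_pow a h1)
      (Ideal.subset_span (by simp)))
  · exact Ideal.mul_mem_left _ _ (Ideal.mem_of_dvd _ (pow_dvd_pow b h1)
      (Ideal.subset_span (by simp)))

lemma le_colon' {a b : R} {S : Set (ℕ × ℕ)} {U V g k u v u' v' : ℕ}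
    (h1 : (u, v) ∈ S) (h1u : u ≤ U + g) (h1v : v ≤ V)
    (h2 : (u', v') ∈ S) (h2u : u' ≤ U) (h2v : v' ≤ V + k) :
    Ideal.span {a ^ g, b ^ k} ≤ (mono a b S).colon (Ideal.span {a ^ U * b ^ V}) := by
  rw [Ideal.span_le]
  rintro x (rfl | rfl)
  · rw [SetLike.mem_coe, Ideal.mem_colon_span_singleton]
    have := mono_mem' (a := a) (b := b) h1 h1u h1v
    convert this using 1; ring
  · rw [SetLike.mem_coe, Ideal.mem_colon_span_singleton]
    have := mono_mem' (a := a) (b := b) h2 h2u h2v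
    convert this using 1; ring

lemma JS_gap {r n u v : ℕ} (hodd : Odd r) (hn : n ≤ r) (h : (u, v) ∈ JS r n) :
    2 * (n + 1) + 1 ≤ u ∨ r * (n + 1) + 1 ≤ v := by
  obtain ⟨i, j, k, hs, h1, h2⟩ := h
  obtain ⟨rfl, rfl⟩ := Prod.mk.inj h2
  by_contra! hcon
  obtain ⟨c1, c2⟩ := hcon
  obtain ⟨q, rfl⟩ := hodd
  rw [← hs] at c1 c2
  have e1 : (2 * q + 1) * i ≤ 2 * j := by nlinarith
  have e2 : 2 * j ≤ (2 * q + 1) * i := by nlinarith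
  have e3 : (2 * q + 1) * i = 2 * j := le_antisymm e1 e2
  have hi : Even i := by
    have : Even ((2 * q + 1) * i) := ⟨j, by omega⟩
    rcases Nat.even_mul.mp this with h | h
    · exact absurd h (by simp)
    · exact h
  obtain ⟨w, rfl⟩ := hi
  rcases w with _ | w
  · omega
  · have : j = (2 * q + 1) * (w + 1) := by nlinarith
    have : 2 * q + 1 ≤ j := by nlinarith
    omega

lemma JS_gap1 {r n u v : ℕ} (hn : 2 * n + 1 ≤ r) (h : (u, v) ∈ JS r n) :
    2 * (n + 1) + (r - 2 * n) ≤ u ∨ r * (n + 1) + 2 ≤ v := by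
  obtain ⟨i, j, k, hs, h1, h2⟩ := h
  obtain ⟨rfl, rfl⟩ := Prod.mk.inj h2
  rcases i with _ | i
  · right
    rw [← hs]; nlinarith
  · left
    have : (r + 2) * (i + 1) = (r + 2) * i + r + 2 := by ring
    omega

lemma part1a {a b : R} (h : GoodPair a b) {r n : ℕ} (hn : 2 * n + 1 ≤ r) :
    (mono a b (JS r n)).colon (Ideal.span {a ^ (2 * (n + 1)) * b ^ (r * (n + 1))})
      = Ideal.span {a ^ (r - 2 * n), b ^ 2} := by
  apply le_antisymm (h.colon_le fun u v huv => JS_gap1 hn huv)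
  refine le_colon' (u := (r + 2) * 1 + 2 * 0) (v := (r + 2) * n + r * 0)
    (u' := (r + 2) * 0 + 2 * n) (v' := (r + 2) * 1 + r * n)
    ⟨1, n, 0, by omega, by omega, rfl⟩ ?_ ?_ ⟨0, 1, n, by omega, by omega, rfl⟩ ?_ ?_
  · omega
  · nlinarith
  · omega
  · nlinarith

lemma part1b {a b : R} (h : GoodPair a b) {r n : ℕ} (hodd : Odd r) (hn : n ≤ r)
    (hn' : r + 1 ≤ 2 * n) :
    (mono a b (JS r n)).colon (Ideal.span {a ^ (2 * (n + 1)) * b ^ (r * (n + 1))})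
      = Ideal.span {a, b} := by
  have e : Ideal.span {a, b} = Ideal.span {a ^ 1, b ^ 1} := by simp
  rw [e]
  apply le_antisymm (h.colon_le fun u v huv => JS_gap hodd hn huv)
  obtain ⟨q, rfl⟩ := hodd
  obtain ⟨w, rfl⟩ : ∃ w, n = q + 1 + w := ⟨n - (q + 1), by omega⟩
  refine le_colon' (u := (2 * q + 1 + 2) * 1 + 2 * (w + 1))
    (v := (2 * q + 1 + 2) * q + (2 * q + 1) * (w + 1))
    (u' := (2 * q + 1 + 2) * 1 + 2 * w) (v' := (2 * q + 1 + 2) * (q + 1) + (2 * q + 1) * w)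
    ⟨1, q, w + 1, by omega, by omega, rfl⟩ ?_ ?_ ⟨1, q + 1, w, by omega, by omega, rfl⟩ ?_ ?_
  all_goals nlinarith

lemma part1c {a b : R} {r n : ℕ} (hn : r + 1 ≤ n) :
    a ^ (2 * (n + 1)) * b ^ (r * (n + 1)) ∈ mono a b (JS r n) := by
  obtain ⟨w, rfl⟩ : ∃ w, n = r + 1 + w := ⟨n - (r + 1), by omega⟩
  refine mono_mem ⟨2, r, w, by omega, by omega, ?_⟩
  ext <;> simp <;> ring

lemma mono_part2 {a b : R} (h : GoodPair a b) {S : Set (ℕ × ℕ)} {d M s : ℕ} {z : R}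
    (hS : ∀ u v, (u, v) ∈ S → u + v = d) (hs : (s, d - s) ∈ S) (hsM : s ≤ M)
    (hz : z ∈ mono a b S) (hzM : a ^ M ∣ z) :
    ∀ t ≤ s, z ∈ mono a b {q | q ∈ S ∧ t ≤ q.1} := by
  intro t
  induction t with
  | zero => intro _; simpa using hz
  | succ t ih =>
    intro ht
    have h1 := ih (by omega)
    have hex : ∃ e, (e, d - e) ∈ S ∧ t + 1 ≤ e := ⟨s, hs, ht⟩
    classical
    obtain ⟨e, ⟨he, hte⟩, hmin⟩ : ∃ e, ((e, d - e) ∈ S ∧ t + 1 ≤ e) ∧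
        ∀ e', ((e', d - e') ∈ S ∧ t + 1 ≤ e') → e ≤ e' :=
      ⟨Nat.find hex, Nat.find_spec hex, fun e' h => Nat.find_min' hex h⟩
    have hes : e ≤ s := hmin s ⟨hs, ht⟩
    have h2 : mono a b {q | q ∈ S ∧ t ≤ q.1} ≤
        Ideal.span {a ^ t * b ^ (d - t)} ⊔ mono a b {q | q ∈ S ∧ t + 1 ≤ q.1} := by
      apply mono_le
      rintro u v ⟨huv, htu⟩
      have := hS u v huv
      simp only at htu
      rcases Nat.eq_or_lt_of_le htu with rfl | hlt
      · apply Ideal.mem_sup_left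
        have : v = d - t := by omega
        subst this
        exact Ideal.mem_span_singleton_self _
      · exact Ideal.mem_sup_right (mono_mem ⟨huv, hlt⟩)
    obtain ⟨x, hx, w, hw, rfl⟩ := Submodule.mem_sup.mp (h2 h1)
    obtain ⟨c, rfl⟩ := Ideal.mem_span_singleton'.mp hx
    have h3 : a ^ e ∣ w := by
      rw [← Ideal.mem_span_singleton]
      refine mono_le ?_ hw
      rintro u v ⟨huv, htu⟩
      rw [Ideal.mem_span_singleton]
      have := hS u v huv
      have hv : v = d - u := by omega
      exact Dvd.dvd.mul_right (pow_dvd_pow a (hmin u ⟨hv ▸ huv, htu⟩)) _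
    have h4 : a ^ e ∣ c * (a ^ t * b ^ (d - t)) :=
      (dvd_add_left h3).mp (dvd_trans (pow_dvd_pow a (hes.trans hsM)) hzM)
    have h5 : a ^ e ∣ c * a ^ t := h.dvd e (d - t) _ (by rwa [mul_assoc])
    obtain ⟨c', hc'⟩ := h5
    have hed := hS _ _ he
    refine Ideal.add_mem _ ?_ hw
    have h6 : c * (a ^ t * b ^ (d - t)) = c' * (a ^ e * b ^ (d - t)) := by
      rw [← mul_assoc, hc']; ring
    rw [h6]
    exact Ideal.mul_mem_left _ _ (mono_mem' (u := e) (v := d - e) ⟨he, hte⟩ le_rfl (by omega))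

lemma part2 {a b : R} (h : GoodPair a b) {r N : ℕ} (hr : 1 ≤ r) :
    (mono a b (XS r (N + 1))).colon (Ideal.span {b ^ (r + 2)}) ⊓ mono a b (ES r (N + 1))
      = mono a b (XS r N) := by
  have hXE : mono a b (XS r N) ≤ mono a b (ES r (N + 1)) := by
    apply mono_mono
    rintro _ ⟨i, j, k, hs, rfl⟩
    exact ⟨i + 1, j, k, by omega, rfl⟩
  apply le_antisymm
  · rintro z ⟨hz1, hz2⟩
    rw [SetLike.mem_coe, Ideal.mem_colon_span_singleton] at hz1
    rw [SetLike.mem_coe] at hz2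
    have h1 : mono a b (XS r (N + 1)) ≤ mono a b (XS r N) * Ideal.span {b ^ (r + 2)} ⊔
        Ideal.span {a ^ (r + 2 + 2 * (N + 1))} := by
      apply mono_le
      rintro u v ⟨i, j, k, hs, h2⟩
      obtain ⟨rfl, rfl⟩ := Prod.mk.inj h2
      rcases j with _ | j
      · apply Ideal.mem_sup_right
        rw [Ideal.mem_span_singleton]
        apply Dvd.dvd.mul_right
        apply pow_dvd_pow
        nlinarith [Nat.zero_le (r * i)]
      · apply Ideal.mem_sup_left
        have := Ideal.mul_mem_mul
          (mono_mem (a := a) (b := b) (S := XS r N) ⟨i, j, k, by omega, rfl⟩)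
          (Ideal.mem_span_singleton_self (b ^ (r + 2)))
        convert this using 1; ring
    obtain ⟨x, hx, w, hw, hxw⟩ := Submodule.mem_sup.mp (h1 hz1)
    obtain ⟨x, hx', rfl⟩ := Ideal.mem_mul_span_singleton.mp hx
    have hd : a ^ (r + 2 + 2 * (N + 1)) ∣ z - x := by
      apply h.dvd _ (r + 2)
      rw [Ideal.mem_span_singleton] at hw
      convert hw using 1
      linear_combination -hxw
    have h2 := mono_part2 h (S := ES r (N + 1)) (d := (r + 2) * (N + 1))
      (M := r + 2 + 2 * (N + 1)) (s := r + 2 + 2 * N) (z := z - x) ?_ ?_ (by omega)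
      (Ideal.sub_mem _ hz2 (hXE hx')) hd _ le_rfl
    · have h3 : z - x ∈ mono a b (XS r N) := by
        refine mono_mono ?_ h2
        rintro _ ⟨⟨i, j, k, hs, rfl⟩, hle⟩
        simp only at hle
        rcases i with _ | i
        · omega
        · exact ⟨i, j, k, by omega, rfl⟩
      simpa using Ideal.add_mem _ h3 hx'
    · rintro u v ⟨i, j, k, hs, h2⟩
      obtain ⟨rfl, rfl⟩ := Prod.mk.inj h2
      rw [← hs]; ring
    · refine ⟨1, 0, N, by omega, ?_⟩
      have : (r + 2) * (N + 1) = (r + 2 + 2 * N) + r * N := by ring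
      ext
      · simp
      · simp only; omega
  · refine le_inf ?_ hXE
    intro z hz
    rw [Ideal.mem_colon_span_singleton]
    have h1 := Ideal.mul_mem_mul hz (Ideal.mem_span_singleton_self (b ^ (r + 2)))
    refine ?_
    have h2 : mono a b (XS r N) * Ideal.span {b ^ (r + 2)} ≤ mono a b (XS r (N + 1)) := by
      rw [mul_comm, Ideal.span_singleton_mul_le_iff]
      intro y hy
      have : mono a b (XS r N) ≤ (mono a b (XS r (N + 1))).colon (Ideal.span {b ^ (r + 2)}) := by
        apply mono_le
        rintro u v ⟨i, j, k, hs, h2⟩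
        obtain ⟨rfl, rfl⟩ := Prod.mk.inj h2
        rw [Ideal.mem_colon_span_singleton]
        have := mono_mem (a := a) (b := b) (S := XS r (N + 1)) ⟨i, j + 1, k, by omega, rfl⟩
        convert this using 1; ring
      have := Ideal.mem_colon_span_singleton.mp (this hy)
      rwa [mul_comm]
    exact h2 h1

/-- the generators -/
def gens (a b : R) (r : ℕ) : Fin 3 → R := ![a ^ (r + 2), b ^ (r + 2), a ^ 2 * b ^ r]

/-- exponent of `a` -/
def eS (r : ℕ) (s : Fin 3 →₀ ℕ) : ℕ := (r + 2) * s 0 + 2 * s 2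

/-- exponent of `b` -/
def fS (r : ℕ) (s : Fin 3 →₀ ℕ) : ℕ := (r + 2) * s 1 + r * s 2

lemma ef_sum (r : ℕ) (s : Fin 3 →₀ ℕ) : eS r s + fS r s = (r + 2) * s.degree := by
  simp only [eS, fS, Finsupp.degree_eq_sum, Fin.sum_univ_three]; ring

lemma rees_monomial (a b : R) (r : ℕ) (s : Fin 3 →₀ ℕ) (c : R) :
    reesPres (gens a b r) (monomial s c)
      = Polynomial.monomial s.degree (c * (a ^ eS r s * b ^ fS r s)) := by
  rw [reesPres, aeval_monomial, Finsupp.prod_fintype _ _ (by simp), Fin.prod_univ_three,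
    Finsupp.degree_eq_sum, Fin.sum_univ_three, ← Polynomial.C_mul_X_pow_eq_monomial]
  simp only [gens, eS, fS, Matrix.cons_val_zero, Matrix.cons_val_one, Matrix.cons_val,
    Polynomial.algebraMap_eq, map_mul, map_pow]
  ring

/-- explicit monomials -/
noncomputable def M3 (i j k : ℕ) : MvPolynomial (Fin 3) R := X 0 ^ i * X 1 ^ j * X 2 ^ k

lemma rees_M3 (a b : R) (r i j k : ℕ) :
    reesPres (gens a b r) (M3 i j k)
      = Polynomial.C (a ^ ((r + 2) * i + 2 * k) * b ^ ((r + 2) * j + r * k))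
        * Polynomial.X ^ (i + j + k) := by
  simp only [M3, reesPres, map_mul, map_pow, aeval_X, gens, Matrix.cons_val_zero,
    Matrix.cons_val_one, Matrix.cons_val]
  ring

lemma M3_hom (i j k : ℕ) : (M3 i j k : MvPolynomial (Fin 3) R).IsHomogeneous (i + j + k) := by
  refine ((?_ : IsHomogeneous _ _).mul ?_).mul ?_
  · simpa using (isHomogeneous_X R (0 : Fin 3)).pow i
  · simpa using (isHomogeneous_X R (1 : Fin 3)).pow j
  · simpa using (isHomogeneous_X R (2 : Fin 3)).pow k

lemma bin_ker (a b : R) (r i j k i' j' k' D : ℕ) (hs : i + j + k = i' + j' + k')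
    (hD : (r + 2) * i + 2 * k = (r + 2) * i' + 2 * k' + D) :
    C (b ^ D) * M3 i j k - C (a ^ D) * M3 i' j' k' ∈ presKer (gens a b r) := by
  have hf : (r + 2) * j' + r * k' = (r + 2) * j + r * k + D := by
    have h1 : (r + 2) * (i + j + k) = (r + 2) * (i' + j' + k') := by rw [hs]
    nlinarith
  have hC : ∀ x : R, reesPres (gens a b r) (C x) = Polynomial.C x := fun x => by
    simp [reesPres]
  rw [presKer, RingHom.mem_ker, map_sub, map_mul, map_mul, hC, hC, rees_M3, rees_M3, hf, hD, hs]
  simp only [map_mul, map_pow]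
  ring

lemma bin_mem_of_le (a b : R) (r N i j k i' j' k' D : ℕ) (hs : i + j + k = i' + j' + k')
    (hD : (r + 2) * i + 2 * k = (r + 2) * i' + 2 * k' + D) (hN : i + j + k ≤ N) :
    C (b ^ D) * M3 i j k - C (a ^ D) * M3 i' j' k' ∈ presKerLe (gens a b r) N := by
  apply Ideal.subset_span
  refine ⟨bin_ker a b r i j k i' j' k' D hs hD, _, hN, ?_⟩
  apply IsHomogeneous.sub
  · simpa using (isHomogeneous_C (Fin 3) (b ^ D)).mul (M3_hom (R := R) i j k)
  · rw [hs]; simpa using (isHomogeneous_C (Fin 3) (a ^ D)).mul (M3_hom (R := R) i' j' k')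

lemma bin_trans {Q : Ideal (MvPolynomial (Fin 3) R)} {a b : R} {F G H : MvPolynomial (Fin 3) R}
    {D E T : ℕ} (h1 : C (b ^ D) * F - C (a ^ D) * G ∈ Q)
    (h2 : C (b ^ E) * G - C (a ^ E) * H ∈ Q) (hT : T = D + E) :
    C (b ^ T) * F - C (a ^ T) * H ∈ Q := by
  subst hT
  have := Q.add_mem (Q.mul_mem_left (C (b ^ E)) h1) (Q.mul_mem_left (C (a ^ D)) h2)
  convert this using 1
  simp only [map_pow]; ring

lemma bin_mem (a b : R) (r : ℕ) (hr : 1 ≤ r) : ∀ n i j k i' j' k' D : ℕ, i + j + k = n →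
    i' + j' + k' = n → (r + 2) * i + 2 * k = (r + 2) * i' + 2 * k' + D →
    C (b ^ D) * M3 i j k - C (a ^ D) * M3 i' j' k' ∈ presKerLe (gens a b r) (r + 2) := by
  intro n
  induction n with
  | zero =>
    intro i j k i' j' k' D h1 h2 hD
    exact bin_mem_of_le a b r _ _ _ _ _ _ _ _ (by omega) hD (by omega)
  | succ n ih =>
    intro i j k i' j' k' D h1 h2 hD
    by_cases hn : n + 1 ≤ r + 2
    · exact bin_mem_of_le a b r _ _ _ _ _ _ _ _ (by omega) hD (by omega)
    -- common variable
    have hcom : ∀ i j k i' j' k' D : ℕ, i + j + k = n + 1 →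
        i' + j' + k' = n + 1 → (r + 2) * i + 2 * k = (r + 2) * i' + 2 * k' + D →
        (1 ≤ i ∧ 1 ≤ i' ∨ 1 ≤ j ∧ 1 ≤ j' ∨ 1 ≤ k ∧ 1 ≤ k') →
        C (b ^ D) * M3 i j k - C (a ^ D) * M3 i' j' k' ∈ presKerLe (gens a b r) (r + 2) := by
      intro i j k i' j' k' D h1 h2 hD hc
      rcases hc with ⟨c1, c2⟩ | ⟨c1, c2⟩ | ⟨c1, c2⟩
      · obtain ⟨i, rfl⟩ := Nat.exists_eq_add_of_le' c1
        obtain ⟨i', rfl⟩ := Nat.exists_eq_add_of_le' c2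
        have := Ideal.mul_mem_left _ (X 0) (ih i j k i' j' k' D (by omega) (by omega)
          (by linarith))
        convert this using 1
        simp only [M3]; ring
      · obtain ⟨j, rfl⟩ := Nat.exists_eq_add_of_le' c1
        obtain ⟨j', rfl⟩ := Nat.exists_eq_add_of_le' c2
        have := Ideal.mul_mem_left _ (X 1) (ih i j k i' j' k' D (by omega) (by omega)
          (by linarith))
        convert this using 1
        simp only [M3]; ring
      · obtain ⟨k, rfl⟩ := Nat.exists_eq_add_of_le' c1
        obtain ⟨k', rfl⟩ := Nat.exists_eq_add_of_le' c2
        have := Ideal.mul_mem_left _ (X 2) (ih i j k i' j' k' D (by omega) (by omega)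
          (by linarith))
        convert this using 1
        simp only [M3]; ring
    -- passing through an intermediate monomial
    have hvia : ∀ u v w : ℕ, u + v + w = n + 1 →
        (r + 2) * i' + 2 * k' ≤ (r + 2) * u + 2 * w →
        (r + 2) * u + 2 * w ≤ (r + 2) * i + 2 * k →
        (1 ≤ i ∧ 1 ≤ u ∨ 1 ≤ j ∧ 1 ≤ v ∨ 1 ≤ k ∧ 1 ≤ w) →
        (1 ≤ u ∧ 1 ≤ i' ∨ 1 ≤ v ∧ 1 ≤ j' ∨ 1 ≤ w ∧ 1 ≤ k') →
        C (b ^ D) * M3 i j k - C (a ^ D) * M3 i' j' k' ∈ presKerLe (gens a b r) (r + 2) := by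
      intro u v w hs hl hu c1 c2
      obtain ⟨E, hE⟩ := Nat.exists_eq_add_of_le hl
      obtain ⟨E', hE'⟩ := Nat.exists_eq_add_of_le hu
      exact bin_trans (hcom i j k u v w E' h1 hs hE' c1) (hcom u v w i' j' k' E hs h2 hE c2)
        (by omega)
    by_cases hc : (1 ≤ i ∧ 1 ≤ i' ∨ 1 ≤ j ∧ 1 ≤ j' ∨ 1 ≤ k ∧ 1 ≤ k')
    · exact hcom i j k i' j' k' D h1 h2 hD hc
    obtain ⟨w, hw⟩ : ∃ w, n = r + 2 + w := ⟨n - (r + 2), by omega⟩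
    have hY : (r + 2) * 2 + 2 * (w + 1) = 2 * (n + 1) := by omega
    -- `Y ^ (n+1)` on one side
    by_cases c1 : i = 0 ∧ j = 0
    · obtain ⟨rfl, rfl⟩ := c1
      refine hvia 2 r (w + 1) (by omega) ?_ ?_ (by omega) (by omega)
      · have : k = n + 1 := by omega
        subst this; omega
      · have : k = n + 1 := by omega
        subst this; omega
    by_cases c2 : i' = 0 ∧ j' = 0
    · obtain ⟨rfl, rfl⟩ := c2
      refine hvia 2 r (w + 1) (by omega) ?_ ?_ (by omega) (by omega)
      · have : k' = n + 1 := by omega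
        subst this; omega
      · have : k' = n + 1 := by omega
        subst this; omega
    have hrn : 2 * (n + 1) ≤ (r + 2) * n := by nlinarith
    by_cases c3 : j = 0 ∧ k = 0
    · -- `X₁ ^ (n+1)` on top
      obtain ⟨rfl, rfl⟩ := c3
      have hi : i = n + 1 := by omega
      subst hi
      have hi' : i' = 0 := by omega
      subst hi'
      refine hvia n 1 0 (by omega) ?_ ?_ (by omega) (by omega)
      · omega
      · nlinarith
    by_cases c4 : i' = 0 ∧ k' = 0
    · obtain ⟨rfl, rfl⟩ := c4
      by_cases hk : 1 ≤ k
      · exact hvia 0 n 1 (by omega) (by omega) (by nlinarith) (by omega) (by omega)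
      · exact hvia 1 n 0 (by omega) (by omega)
          (by have hi : 1 ≤ i := by omega
              nlinarith) (by omega) (by omega)
    exfalso
    by_cases c5 : j' = 0 ∧ k' = 0
    · -- `X₁ ^ (n+1)` at the bottom
      obtain ⟨rfl, rfl⟩ := c5
      have hi' : i' = n + 1 := by omega
      subst hi'
      have hi : i = 0 := by omega
      subst hi
      nlinarith
    by_cases c6 : i = 0 ∧ k = 0
    · obtain ⟨rfl, rfl⟩ := c6
      have hp : 0 < (r + 2) * i' + 2 * k' := by
        rcases Nat.eq_zero_or_pos i' with h | h
        · subst h; omega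
        · have := Nat.mul_pos (show 0 < r + 2 by omega) h
          omega
      omega
    omega

lemma M3_eq (s : Fin 3 →₀ ℕ) (c : R) : monomial s c = C c * M3 (s 0) (s 1) (s 2) := by
  rw [monomial_eq, Finsupp.prod_fintype _ _ (by simp), Fin.prod_univ_three]; rfl

lemma ker_comp {a b : R} {r : ℕ} {F : MvPolynomial (Fin 3) R} (hF : F ∈ presKer (gens a b r))
    (n : ℕ) : ∑ s ∈ F.support with s.degree = n, F.coeff s * (a ^ eS r s * b ^ fS r s) = 0 := by
  rw [presKer, RingHom.mem_ker, F.as_sum, map_sum] at hF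
  have h1 := congrArg (fun P => Polynomial.coeff P n) hF
  simp only [Polynomial.finsetSum_coeff, Polynomial.coeff_zero] at h1
  rw [Finset.sum_filter]
  refine Eq.trans ?_ h1
  apply Finset.sum_congr rfl
  intro s _
  rw [rees_monomial, Polynomial.coeff_monomial]

lemma sum_mem_ker {a b : R} (h : GoodPair a b) {r : ℕ} (hr : 1 ≤ r) (n : ℕ)
    (T : Finset (Fin 3 →₀ ℕ)) : ∀ (_ : ∀ s ∈ T, s.degree = n) (c : (Fin 3 →₀ ℕ) → R),
      ∑ s ∈ T, c s * (a ^ eS r s * b ^ fS r s) = 0 →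
      ∑ s ∈ T, monomial s (c s) ∈ presKerLe (gens a b r) (r + 2) := by
  classical
  induction T using Finset.induction_on_max_value (eS r) with
  | empty => intro _ c _; simp
  | insert m T hm hmax ih =>
    intro hdeg c hc
    rw [Finset.sum_insert hm] at hc ⊢
    have hdm := hdeg m (Finset.mem_insert_self _ _)
    have hdT : ∀ s ∈ T, s.degree = n := fun s hs => hdeg s (Finset.mem_insert_of_mem hs)
    rcases T.eq_empty_or_nonempty with rfl | hT
    · rw [Finset.sum_empty, add_zero] at hc
      have h1 : c m * b ^ fS r m = 0 := h.apow (eS r m) _ (by rw [← hc]; ring)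
      have h2 : c m = 0 := h.symm.apow (fS r m) _ (by rw [← h1]; ring)
      simp [h2]
    · obtain ⟨m', hm', hmax'⟩ := Finset.exists_max_image T (eS r) hT
      obtain ⟨D, hD⟩ := Nat.exists_eq_add_of_le (hmax m' hm')
      have e1 := ef_sum r m
      have e2 := ef_sum r m'
      rw [hdm] at e1
      rw [hdT m' hm'] at e2
      have hf : fS r m' = fS r m + D := by omega
      have hdvd : b ^ (fS r m + D) ∣ ∑ s ∈ T, c s * (a ^ eS r s * b ^ fS r s) := by
        apply Finset.dvd_sum
        intro s hs
        have e3 := ef_sum r s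
        rw [hdT s hs] at e3
        have := hmax' s hs
        exact Dvd.dvd.mul_left (Dvd.dvd.mul_left (pow_dvd_pow b (by omega)) _) _
      have hdvd2 : b ^ (fS r m + D) ∣ (c m * b ^ fS r m) * a ^ eS r m := by
        obtain ⟨w, hw⟩ := hdvd
        exact ⟨-w, by rw [hw] at hc; linear_combination hc⟩
      obtain ⟨c', hc'⟩ := h.symm.dvd _ _ _ hdvd2
      have hcm : c m = b ^ D * c' := h.symm.acancel (fS r m) (by
        rw [pow_add] at hc'; linear_combination hc')
      have hB := bin_mem a b r hr n (m 0) (m 1) (m 2) (m' 0) (m' 1) (m' 2) D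
        (by rw [← hdm, Finsupp.degree_eq_sum, Fin.sum_univ_three])
        (by rw [← hdT m' hm', Finsupp.degree_eq_sum, Fin.sum_univ_three]) hD
      have hnew := ih hdT (fun s => c s + if s = m' then a ^ D * c' else 0) (by
        simp only [add_mul, Finset.sum_add_distrib, ite_mul, zero_mul, Finset.sum_ite_eq', hm',
          if_true]
        rw [← hc, hcm, hD, hf]; ring)
      have := Ideal.add_mem _ (Ideal.mul_mem_left _ (C c') hB) hnew
      convert this using 1
      simp only [map_add, Finset.sum_add_distrib]
      have e4 : ∑ s ∈ T, monomial s (if s = m' then a ^ D * c' else 0)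
          = monomial m' (a ^ D * c') := by
        rw [Finset.sum_eq_single m']
        · simp
        · intro s _ hne; simp [hne]
        · intro hne; exact absurd hm' hne
      rw [e4, M3_eq m, M3_eq m', hcm]
      simp only [map_mul]; ring

lemma ker_le {a b : R} (h : GoodPair a b) {r : ℕ} (hr : 1 ≤ r) :
    presKer (gens a b r) ≤ presKerLe (gens a b r) (r + 2) := by
  intro F hF
  rw [← sum_homogeneousComponent F]
  apply Ideal.sum_mem
  intro n _
  rw [homogeneousComponent_apply]
  exact sum_mem_ker h hr n _ (fun s hs => (Finset.mem_filter.mp hs).2) _ (ker_comp hF n)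

lemma le_ker (g : Fin 3 → R) (N : ℕ) : presKerLe g N ≤ presKer g :=
  Ideal.span_le.mpr fun _ hF => hF.1

lemma eS_inj {r : ℕ} (hodd : Odd r) {n : ℕ} (hn : n < r + 2) {s t : Fin 3 →₀ ℕ}
    (hs : s.degree = n) (ht : t.degree = n) (he : eS r s = eS r t) : s = t := by
  rw [Finsupp.degree_eq_sum, Fin.sum_univ_three] at hs ht
  simp only [eS] at he
  obtain ⟨q, rfl⟩ := hodd
  have key : ∀ i k i' k' : ℕ, k' < 2 * q + 1 + 2 →
      (2 * q + 1 + 2) * i + 2 * k = (2 * q + 1 + 2) * i' + 2 * k' → i ≤ i' := by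
    intro i k i' k' hk he
    by_contra! hlt
    obtain ⟨w, rfl⟩ := Nat.exists_eq_add_of_lt hlt
    rcases w with _ | w
    · have : (2 * q + 1 + 2) * (i' + 0 + 1) = (2 * q + 1 + 2) * i' + (2 * q + 1 + 2) := by ring
      omega
    · nlinarith
  have h0 : s 0 = t 0 := le_antisymm (key _ _ _ _ (by omega) he) (key _ _ _ _ (by omega) he.symm)
  rw [h0] at he
  ext x
  fin_cases x
  · exact h0
  · simp only [Fin.mk_one]; omega
  · simp only [Fin.reduceFinMk]; omega

lemma coeff_mem {a b : R} (h : GoodPair a b) {r : ℕ} (hodd : Odd r) {n : ℕ} (hn : n < r + 2)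
    {F : MvPolynomial (Fin 3) R} (hF : F ∈ presKer (gens a b r)) (hh : F.IsHomogeneous n)
    (s : Fin 3 →₀ ℕ) : F.coeff s ∈ Ideal.span {a, b} := by
  classical
  by_cases hs : s ∈ F.support
  swap
  · rw [notMem_support_iff.mp hs]; exact Ideal.zero_mem _
  have hdeg : ∀ t ∈ F.support, t.degree = n := by
    intro t ht
    have := hh (mem_support_iff.mp ht)
    rw [Finsupp.degree_eq_weight_one]; exact this
  have h1 := ker_comp hF n
  rw [Finset.filter_true_of_mem hdeg, ← Finset.add_sum_erase _ _ hs] at h1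
  have e : Ideal.span {a, b} = Ideal.span {a ^ 1, b ^ 1} := by simp
  rw [e]
  apply h.colon (u := eS r s) (v := fS r s)
  rw [eq_neg_of_add_eq_zero_left h1]
  apply neg_mem
  apply Ideal.sum_mem
  intro t ht
  apply Ideal.mul_mem_left
  obtain ⟨hne, ht⟩ := Finset.mem_erase.mp ht
  have hne' : eS r t ≠ eS r s := fun he => hne (eS_inj hodd hn (hdeg t ht) (hdeg s hs) he)
  have e1 := ef_sum r s
  have e2 := ef_sum r t
  rw [hdeg s hs] at e1
  rw [hdeg t ht] at e2
  rcases Nat.lt_or_gt_of_ne hne' with h2 | h2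
  · exact Ideal.mul_mem_left _ _ (Ideal.mem_of_dvd _ (pow_dvd_pow b (show fS r s + 1 ≤ fS r t by omega))
      (Ideal.subset_span (by simp)))
  · exact Ideal.mul_mem_right _ _ (Ideal.mem_of_dvd _ (pow_dvd_pow a (show eS r s + 1 ≤ eS r t by omega))
      (Ideal.subset_span (by simp)))

lemma rt_lower {a b : R} (h : GoodPair a b) (hne : Ideal.span {a, b} ≠ ⊤) {r : ℕ} (hodd : Odd r)
    {N : ℕ} (hN : presKer (gens a b r) = presKerLe (gens a b r) N) : r + 2 ≤ N := by
  by_contra! hlt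
  have h1 : presKer (gens a b r) ≤ Ideal.map C (Ideal.span {a, b}) := by
    rw [hN, presKerLe, Ideal.span_le]
    rintro F ⟨hF, k, hk, hh⟩
    exact mem_map_C_iff.mpr (coeff_mem h hodd (by omega) hF hh)
  have h2 := bin_ker a b r 0 0 (r + 2) 2 r 0 0 (by omega) (by omega)
  have h3 := mem_map_C_iff.mp (h1 h2) (Finsupp.single 2 (r + 2))
  apply hne
  rw [Ideal.eq_top_iff_one]
  convert h3 using 1
  have e1 : (M3 0 0 (r + 2) : MvPolynomial (Fin 3) R) = monomial (Finsupp.single 2 (r + 2)) 1 := by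
    rw [M3_eq]; simp
  have e2 : (M3 2 r 0 : MvPolynomial (Fin 3) R)
      = monomial (Finsupp.single 0 2 + Finsupp.single 1 r) 1 := by
    rw [M3_eq]; simp
  rw [e1, e2]
  have e3 : (Finsupp.single (0 : Fin 3) 2 + Finsupp.single 1 r) ≠ Finsupp.single 2 (r + 2) := by
    intro he
    have := DFunLike.congr_fun he 0
    simp at this
  rw [pow_zero, pow_zero, C_1, one_mul, one_mul, coeff_sub, coeff_monomial, coeff_monomial,
    if_pos rfl, if_neg e3, sub_zero]

lemma part3 {a b : R} (h : GoodPair a b) (hne : Ideal.span {a, b} ≠ ⊤) {r : ℕ} (hodd : Odd r)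
    (hr : 1 ≤ r) :
    IsLeast {N : ℕ | 1 ≤ N ∧ presKer (gens a b r) = presKerLe (gens a b r) N} (r + 2) :=
  ⟨⟨by omega, le_antisymm (ker_le h hr) (le_ker _ _)⟩, fun _ hN => rt_lower h hne hodd hN.2⟩

lemma I_le_J {a b : R} {r : ℕ} :
    Ideal.span {a ^ (r + 2), b ^ (r + 2), a ^ 2 * b ^ r} ^ (r + 1 + 1)
      = Ideal.span {a ^ (r + 2), b ^ (r + 2)} *
        Ideal.span {a ^ (r + 2), b ^ (r + 2), a ^ 2 * b ^ r} ^ (r + 1) := by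
  apply le_antisymm
  · rw [JI_eq, Ipow_eq]
    apply mono_le
    rintro u v ⟨i, j, k, hs, h2⟩
    obtain ⟨rfl, rfl⟩ := Prod.mk.inj h2
    by_cases hij : 1 ≤ i + j
    · exact mono_mem ⟨i, j, k, hs, hij, rfl⟩
    · have hi : i = 0 := by omega
      have hj : j = 0 := by omega
      subst hi hj
      have hk : k = r + 1 + 1 := by omega
      subst hk
      simpa using part1c (a := a) (b := b) (r := r) (n := r + 1) le_rfl
  · rw [JI_eq, Ipow_eq]
    apply mono_mono
    rintro _ ⟨i, j, k, hs, _, rfl⟩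
    exact ⟨i, j, k, hs, rfl⟩

lemma red_least {a b : R} (h : GoodPair a b) (hne : Ideal.span {a, b} ≠ ⊤) {r : ℕ}
    (hodd : Odd r) :
    IsLeast {k : ℕ | Ideal.span {a ^ (r + 2), b ^ (r + 2), a ^ 2 * b ^ r} ^ (k + 1)
      = Ideal.span {a ^ (r + 2), b ^ (r + 2)} *
        Ideal.span {a ^ (r + 2), b ^ (r + 2), a ^ 2 * b ^ r} ^ k} (r + 1) := by
  refine ⟨I_le_J, ?_⟩
  intro k hk
  by_contra! hlt
  apply hne
  have h1 : (a ^ 2 * b ^ r) ^ (k + 1) ∈ mono a b (JS r k) := by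
    rw [← JI_eq, ← hk.out]
    exact Ideal.pow_mem_pow (Ideal.subset_span (by simp)) _
  rw [ypow] at h1
  have h2 := h.colon_le (S := JS r k) (g := 1) (k := 1)
    (fun u v huv => JS_gap hodd (by omega) huv)
  rw [pow_one, pow_one] at h2
  rw [Ideal.eq_top_iff_one]
  apply h2
  rw [Ideal.mem_colon_span_singleton, one_mul]
  exact h1

end Helpers

/-- Let `a,b` be a regular sequence in a Noetherian local ring, `p ≥ 5` odd,
`x₁ = aᵖ`, `x₂ = bᵖ`, `y = a²bᵖ⁻²`, `J = (x₁,x₂)`, `I = (x₁,x₂,y)`.  Then the colon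
ideals `(JIⁿ : yⁿ⁺¹)` are as described (in particular `J` is a reduction of `I` with
reduction number `p − 1`), `((x₁Iⁿ⁻¹ : x₂) ∩ Iⁿ⁻¹)/(x₁Iⁿ⁻²) = 0` for all `n ≥ 2`,
and `rt(I) = p`. -/
theorem statement8 {R : Type*} [CommRing R] [IsNoetherianRing R] [IsLocalRing R]
    (a b : R) (hreg : RingTheory.Sequence.IsRegular R [a, b])
    (p : ℕ) (hp : 5 ≤ p) (hodd : Odd p)
    (J I : Ideal R)
    (hJ : J = Ideal.span {a ^ p, b ^ p})
    (hI : I = Ideal.span {a ^ p, b ^ p, a ^ 2 * b ^ (p - 2)}) :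
    -- (i)
    ((∀ n : ℕ, 1 ≤ n → n ≤ (p - 3) / 2 →
        (J * I ^ n).colon (Ideal.span {(a ^ 2 * b ^ (p - 2)) ^ (n + 1)})
          = Ideal.span {a ^ (p - 2 * n - 2), b ^ 2}) ∧
      (∀ n : ℕ, (p - 1) / 2 ≤ n → n ≤ p - 2 →
        (J * I ^ n).colon (Ideal.span {(a ^ 2 * b ^ (p - 2)) ^ (n + 1)})
          = Ideal.span {a, b}) ∧
      (∀ n : ℕ, p - 1 ≤ n →
        (J * I ^ n).colon (Ideal.span {(a ^ 2 * b ^ (p - 2)) ^ (n + 1)}) = ⊤) ∧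
      IsLeast {k : ℕ | I ^ (k + 1) = J * I ^ k} (p - 1)) ∧
    -- (ii)
    (∀ n : ℕ, 2 ≤ n →
      (Ideal.span {a ^ p} * I ^ (n - 1)).colon (Ideal.span {b ^ p}) ⊓ I ^ (n - 1)
        = Ideal.span {a ^ p} * I ^ (n - 2)) ∧
    -- (iii)
    IsLeast {N : ℕ | 1 ≤ N ∧
      presKer ![a ^ p, b ^ p, a ^ 2 * b ^ (p - 2)]
        = presKerLe ![a ^ p, b ^ p, a ^ 2 * b ^ (p - 2)] N} p := by
  have hgood := reg_good a b hreg
  have hne := reg_ne_top a b hreg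
  obtain ⟨r, rfl⟩ : ∃ r, p = r + 2 := ⟨p - 2, by omega⟩
  have hr : Odd r := by
    obtain ⟨q, hq⟩ := hodd
    exact ⟨q - 1, by omega⟩
  have e1 : r + 2 - 2 = r := by omega
  have e2 : r + 2 - 1 = r + 1 := by omega
  rw [e1] at hI
  rw [e1, e2]
  subst hJ hI
  refine ⟨⟨?_, ?_, ?_, red_least hgood hne hr⟩, ?_, part3 hgood hne hr (by omega)⟩
  · intro n h1 h2
    have e3 : r + 2 - 2 * n - 2 = r - 2 * n := by omega
    rw [JI_eq, ypow, e3]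
    exact part1a hgood (by omega)
  · intro n h1 h2
    rw [JI_eq, ypow]
    obtain ⟨q, hq⟩ := hr
    exact part1b hgood ⟨q, hq⟩ h2 (by omega)
  · intro n h1
    rw [JI_eq, ypow, Ideal.eq_top_iff_one, Ideal.mem_colon_span_singleton, one_mul]
    exact part1c h1
  · intro n h1
    obtain ⟨N, rfl⟩ : ∃ N, n = N + 2 := ⟨n - 2, by omega⟩
    have e3 : N + 2 - 1 = N + 1 := by omega
    have e4 : N + 2 - 2 = N := by omega
    rw [e3, e4, XI_eq, XI_eq, Ipow_eq]
    exact part2 hgood (by omega)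
end

section
/- Let (R,m) be a two-dimensional regular local ring and let p ≥ 2 be an integer. Then rt(m^p) = 2, and there are exactly binomial(p,2) equations of degree 2 in a minimal homogeneous generating set of the ideal of equations Q of the Rees algebra R(m^p), presented with respect to the generators x^p, x^{p-1}y, …, xy^{p-1}, y^p of m^p, where x,y is a regular system of parameters of R. -/
open MvPolynomial

section Defs

variable {R : Type*} [CommRing R]

/-- `Q_n`, the `R`-module of homogeneous equations of degree `n`. -/
noncomputable def presKerHomog {m : ℕ} (g : Fin m → R) (n : ℕ) :
    Submodule R (MvPolynomial (Fin m) R) :=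
  homogeneousSubmodule (Fin m) R n ⊓ (presKer g).restrictScalars R

/-- `(Q/Q⟨n-1⟩)_n`, the degree-`n` part of `Q/Q⟨n-1⟩`. -/
abbrev presE {m : ℕ} (g : Fin m → R) (n : ℕ) :=
  presKerHomog g n ⧸
    Submodule.comap (presKerHomog g n).subtype ((presKerLe g (n - 1)).restrictScalars R)

end Defs

section reg
variable {R : Type*} [CommRing R] [IsNoetherianRing R] [IsLocalRing R]

theorem aux_pow_notMem (hdim : ringKrullDim R = (2 : WithBot (WithTop ℕ)))
    (x y : R) (hm : IsLocalRing.maximalIdeal R = Ideal.span {x, y}) (k : ℕ) :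
    y ^ k ∉ Ideal.span {x} := by
  intro h
  have hx : x ∈ IsLocalRing.maximalIdeal R := by
    rw [hm]; exact Ideal.subset_span (by simp)
  have hmin : IsLocalRing.maximalIdeal R ∈ (Ideal.span {x}).minimalPrimes := by
    refine ⟨⟨inferInstance, ?_⟩, ?_⟩
    · rw [Ideal.span_singleton_le_iff_mem]; exact hx
    · rintro q ⟨hq, hxq⟩ _
      rw [hm, Ideal.span_le]
      rintro z (rfl | rfl)
      · exact hxq (Ideal.mem_span_singleton_self _)
      · exact hq.mem_of_pow_mem _ (hxq h)
  have h1 : (IsLocalRing.maximalIdeal R).height ≤ 1 :=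
    Ideal.height_le_one_of_isPrincipal_of_mem_minimalPrimes _ _ hmin
  have h2 := IsLocalRing.maximalIdeal_height_eq_ringKrullDim (R := R)
  rw [hdim] at h2
  have h3 : (IsLocalRing.maximalIdeal R).height = 2 := WithBot.coe_inj.mp (h2.trans rfl)
  rw [h3] at h1
  exact absurd h1 (by decide)

theorem aux_prime (hdim : ringKrullDim R = (2 : WithBot (WithTop ℕ)))
    (x y : R) (hm : IsLocalRing.maximalIdeal R = Ideal.span {x, y}) :
    (Ideal.span {x}).IsPrime := by
  have hk := aux_pow_notMem hdim x y hm
  have hne : Ideal.span {x} ≠ ⊤ := by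
    intro h; exact hk 0 (by rw [h]; trivial)
  have : Nontrivial (R ⧸ Ideal.span {x}) := Ideal.Quotient.nontrivial_iff.mpr hne
  have : IsLocalRing (R ⧸ Ideal.span {x}) :=
    IsLocalRing.of_surjective' (Ideal.Quotient.mk _) Ideal.Quotient.mk_surjective
  set π := Ideal.Quotient.mk (Ideal.span {x}) with hπ
  have hmax : Ideal.span {π y} ≠ ⊤ := by
    intro h
    rw [Ideal.span_singleton_eq_top] at h
    have : IsLocalHom π := IsLocalHom.of_surjective _ Ideal.Quotient.mk_surjective
    have h2 := (isUnit_map_iff π y).mp h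
    have : y ∈ IsLocalRing.maximalIdeal R := by
      rw [hm]; exact Ideal.subset_span (by simp)
    exact this h2
  have key : ∀ a : R ⧸ Ideal.span {x}, a ≠ 0 → ∃ n u, IsUnit u ∧ a = u * π y ^ n := by
    intro a ha
    have hinf := Ideal.iInf_pow_eq_bot_of_isLocalRing (Ideal.span {π y}) hmax
    have : ∃ n, a ∉ Ideal.span {π y} ^ n := by
      by_contra! hc
      apply ha
      rw [← Ideal.mem_bot, ← hinf, Ideal.mem_iInf]
      exact hc
    classical
    have hs := Nat.find_spec this
    have hmn := fun m => Nat.find_min this (m := m)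
    obtain ⟨n, hn⟩ : ∃ n, Nat.find this = n + 1 := by
      refine Nat.exists_eq_succ_of_ne_zero fun h0 => hs ?_
      rw [h0]; simp
    rw [hn] at hs
    have h1 := hmn n (by omega)
    rw [not_not, Ideal.span_singleton_pow, Ideal.mem_span_singleton] at h1
    obtain ⟨u, rfl⟩ := h1
    refine ⟨n, u, ?_, mul_comm _ _⟩
    by_contra hu
    apply hs
    obtain ⟨v, rfl⟩ := Ideal.Quotient.mk_surjective u
    have hv : v ∈ IsLocalRing.maximalIdeal R := fun h => hu (h.map π)
    rw [hm, Ideal.mem_span_pair] at hv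
    obtain ⟨c, d, rfl⟩ := hv
    have hx0 : π x = 0 := Ideal.Quotient.eq_zero_iff_mem.mpr (Ideal.mem_span_singleton_self _)
    rw [Ideal.span_singleton_pow, Ideal.mem_span_singleton]
    refine ⟨π d, ?_⟩
    change π y ^ n * π (c * x + d * y) = _
    simp only [map_add, map_mul, hx0]
    ring
  rw [← Ideal.Quotient.isDomain_iff_prime]
  have : NoZeroDivisors (R ⧸ Ideal.span {x}) := by
    constructor
    intro a b hab
    by_contra! hc
    obtain ⟨n, u, hu, rfl⟩ := key a hc.1
    obtain ⟨m, v, hv, rfl⟩ := key b hc.2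
    have h0 : (u * v) * π y ^ (n + m) = 0 := by rw [← hab]; ring
    have := (hu.mul hv).mul_right_eq_zero.mp h0
    rw [← map_pow] at this
    exact hk _ (Ideal.Quotient.eq_zero_iff_mem.mp this)
  exact NoZeroDivisors.to_isDomain _

theorem aux_domain (hdim : ringKrullDim R = (2 : WithBot (WithTop ℕ)))
    (x y : R) (hm : IsLocalRing.maximalIdeal R = Ideal.span {x, y}) : IsDomain R := by
  have hk (k : ℕ) : IsLocalRing.maximalIdeal R = Ideal.span {x + y ^ (k+1), y} := by
    rw [hm]
    apply le_antisymm <;> rw [Ideal.span_le] <;> rintro z (rfl | rfl)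
    · exact Ideal.mem_span_pair.mpr ⟨1, - y ^ k, by ring⟩
    · exact Ideal.subset_span (by simp)
    · exact Ideal.mem_span_pair.mpr ⟨1, y ^ k, by ring⟩
    · exact Ideal.subset_span (by simp)
  have hy : y ∈ IsLocalRing.maximalIdeal R := by
    rw [hm]; exact Ideal.subset_span (by simp)
  have hpr (k : ℕ) := aux_prime hdim _ _ (hk k)
  have hno (k : ℕ) := aux_pow_notMem hdim _ _ (hk k)
  have hlt : ∀ i j : ℕ, i < j → Ideal.span {x + y ^ (i+1)} ≠ Ideal.span {x + y ^ (j+1)} := by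
    intro i j hij h
    have h1 : x + y ^ (j+1) ∈ Ideal.span {x + y ^ (i+1)} := by
      rw [h]; exact Ideal.mem_span_singleton_self _
    have h2 := Ideal.sub_mem _ (Ideal.mem_span_singleton_self (x + y ^ (i+1))) h1
    obtain ⟨d, rfl⟩ := Nat.exists_eq_add_of_lt hij
    have h3 : x + y ^ (i+1) - (x + y ^ (i+d+1+1)) = (1 - y ^ (d+1)) * y ^ (i+1) := by ring
    rw [h3] at h2
    have hu : IsUnit (1 - y ^ (d+1)) := by
      apply IsLocalRing.isUnit_one_sub_self_of_mem_nonunits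
      exact (Ideal.pow_mem_of_mem _ hy _ (Nat.succ_pos d))
    exact hno i (i+1) ((Ideal.unit_mul_mem_iff_mem _ hu).mp h2)
  have hinj : Function.Injective (fun k : ℕ => Ideal.span {x + y ^ (k+1)}) := by
    intro i j h
    by_contra hne
    rcases lt_or_gt_of_ne hne with h' | h'
    · exact hlt _ _ h' h
    · exact hlt _ _ h' h.symm
  have : ∃ k : ℕ, Ideal.span {x + y ^ (k+1)} ∉ minimalPrimes R := by
    by_contra! hc
    exact Set.infinite_of_injective_forall_mem hinj hc (minimalPrimes.finite_of_isNoetherianRing R)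
  obtain ⟨k, hkm⟩ := this
  have := hpr k
  obtain ⟨q, hq, hqle⟩ := Ideal.exists_minimalPrimes_le (I := (⊥ : Ideal R)) (J := Ideal.span {x + y ^ (k+1)}) bot_le
  have hqp : q.IsPrime := hq.1.1
  have hz : x + y ^ (k+1) ∉ q := by
    intro h
    apply hkm
    have : q = Ideal.span {x + y ^ (k+1)} := le_antisymm hqle (by rwa [Ideal.span_singleton_le_iff_mem])
    rw [← this]; exact hq
  have hq0 : q = ⊥ := by
    apply Submodule.eq_bot_of_le_smul_of_le_jacobson_bot (IsLocalRing.maximalIdeal R) q (IsNoetherian.noetherian q)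
    · intro a ha
      obtain ⟨b, rfl⟩ := Ideal.mem_span_singleton.mp (hqle ha)
      have hb := (hqp.mem_or_mem ha).resolve_left hz
      refine Submodule.smul_mem_smul ?_ hb
      rw [hk k]; exact Ideal.subset_span (by simp)
    · rw [IsLocalRing.jacobson_eq_maximalIdeal _ bot_ne_top]
  subst hq0
  exact (IsDomain.of_bot_isPrime R)
end reg

section core
variable {R : Type*} [CommRing R]

theorem aux_core (x y : R) (hx : ∀ a, x * a = 0 → a = 0) (hxy : ∀ a k, x ∣ a * y ^ k → x ∣ a)
    {V : Type*} [AddCommGroup V] [Module R V] (N : Submodule R V) (M : ℕ → V) (K : ℕ) :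
    ∀ (c : ℕ → R), (∀ w < K, y • M w - x • M (w + 1) ∈ N) →
      ∑ w ∈ Finset.range (K + 1), c w * (x ^ (K - w) * y ^ w) = 0 →
      ∑ w ∈ Finset.range (K + 1), c w • M w ∈ N := by
  induction K with
  | zero =>
    intro c _ h
    have h0 : c 0 = 0 := by simpa using h
    simp [h0]
  | succ K ih =>
    intro c hM h
    rw [Finset.sum_range_succ] at h
    have e1 : ∑ w ∈ Finset.range (K + 1), c w * (x ^ (K + 1 - w) * y ^ w)
        = x * ∑ w ∈ Finset.range (K + 1), c w * (x ^ (K - w) * y ^ w) := by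
      rw [Finset.mul_sum]
      refine Finset.sum_congr rfl fun w hw => ?_
      have hw' := Finset.mem_range.mp hw
      rw [show K + 1 - w = (K - w) + 1 by omega]; ring
    rw [e1] at h
    have hd : x ∣ c (K + 1) := by
      refine hxy _ (K + 1) ⟨- ∑ w ∈ Finset.range (K + 1), c w * (x ^ (K - w) * y ^ w), ?_⟩
      simp only [Nat.sub_self, pow_zero, one_mul] at h
      linear_combination h
    obtain ⟨d, hd⟩ := hd
    have h2 := ih (fun w => c w + if w = K then d * y else 0) (fun w hw => hM w (by omega)) ?_
    · have h3 := N.sub_mem h2 (N.smul_mem d (hM K (by omega)))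
      rw [Finset.sum_range_succ, hd]
      convert h3 using 1
      simp only [add_smul, Finset.sum_add_distrib, ite_smul, zero_smul, Finset.sum_ite_eq',
        Finset.mem_range, Nat.lt_succ_self, if_true, smul_sub, smul_smul, mul_comm x d]
      abel
    · apply hx
      simp only [add_mul, Finset.sum_add_distrib, ite_mul, zero_mul, Finset.sum_ite_eq',
        Finset.mem_range, Nat.lt_succ_self, if_true]
      simp only [Nat.sub_self, pow_zero, one_mul, hd] at h ⊢
      linear_combination h

variable (R) in
noncomputable def TT (p i : ℕ) : MvPolynomial (Fin (p + 1)) R :=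
  if h : i < p + 1 then X ⟨i, h⟩ else 0

variable (R) in
noncomputable def MM (p : ℕ) : ℕ → ℕ → MvPolynomial (Fin (p + 1)) R
  | 0, _ => 1
  | n + 1, w => if w ≤ p then TT R p 0 ^ n * TT R p w else TT R p p * MM p n (w - p)

theorem TT_hom (p i : ℕ) : (TT R p i).IsHomogeneous 1 := by
  unfold TT
  split_ifs
  · exact isHomogeneous_X _ _
  · exact isHomogeneous_zero _ _ _

theorem MM_hom (p n w : ℕ) : (MM R p n w).IsHomogeneous n := by
  induction n generalizing w with
  | zero => simpa [MM] using isHomogeneous_one _ _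
  | succ n ih =>
    unfold MM
    split_ifs
    · simpa using ((TT_hom p 0).pow n).mul (TT_hom (R := R) p w)
    · have := (TT_hom (R := R) p p).mul (ih (w - p))
      rwa [show 1 + n = n + 1 from add_comm _ _] at this

/-- the generators -/
abbrev GG (x y : R) (p : ℕ) : Fin (p + 1) → R := fun i => x ^ (p - (i : ℕ)) * y ^ (i : ℕ)

theorem rees_TT (x y : R) (p i : ℕ) (hi : i ≤ p) :
    reesPres (GG x y p) (TT R p i) = Polynomial.C (x ^ (p - i) * y ^ i) * Polynomial.X := by
  have : i < p + 1 := by omega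
  simp [reesPres, TT, this]

theorem rees_MM (x y : R) (p n w : ℕ) (hw : w ≤ n * p) :
    reesPres (GG x y p) (MM R p n w)
      = Polynomial.C (x ^ (n * p - w) * y ^ w) * Polynomial.X ^ n := by
  induction n generalizing w with
  | zero =>
    obtain rfl : w = 0 := by omega
    simp [MM]
  | succ n ih =>
    rw [add_mul, one_mul] at hw ⊢
    unfold MM
    split_ifs with h
    · rw [map_mul, map_pow, rees_TT _ _ _ _ h, rees_TT _ _ _ _ (Nat.zero_le _)]
      rw [show n * p + p - w = p * n + (p - w) by rw [mul_comm]; omega, pow_add, pow_mul]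
      simp only [map_mul, map_pow, Nat.sub_zero, pow_zero, mul_one]
      ring
    · rw [map_mul, rees_TT _ _ _ _ le_rfl, ih _ (by omega)]
      rw [show n * p - (w - p) = n * p + p - w by omega]
      have : y ^ w = y ^ p * y ^ (w - p) := by rw [← pow_add]; congr 1; omega
      rw [this]
      simp only [map_mul, map_pow, Nat.sub_self, pow_zero, one_mul]
      ring

theorem MM_lin (x y : R) (p : ℕ) (hp : 1 ≤ p) (L : Ideal (MvPolynomial (Fin (p + 1)) R))
    (hL : ∀ w < p, y • TT R p w - x • TT R p (w + 1) ∈ L) (n w : ℕ) (hw : w < n * p) :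
    y • MM R p n w - x • MM R p n (w + 1) ∈ L := by
  induction n generalizing w with
  | zero => omega
  | succ n ih =>
    rw [add_mul, one_mul] at hw
    unfold MM
    rcases lt_trichotomy w p with h | h | h
    · rw [if_pos h.le, if_pos (show w + 1 ≤ p from h)]
      convert L.mul_mem_left (TT R p 0 ^ n) (hL w h) using 1
      simp only [smul_eq_C_mul]; ring
    · subst h
      rw [if_pos le_rfl, if_neg (by omega)]
      obtain ⟨m, rfl⟩ : ∃ m, n = m + 1 := ⟨n - 1, by rcases n with _ | n <;> omega⟩
      rw [show w + 1 - w = 1 by omega]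
      unfold MM
      rw [if_pos hp]
      convert L.mul_mem_left (TT R w 0 ^ m * TT R w w) (hL 0 (by omega)) using 1
      simp only [smul_eq_C_mul]; ring
    · rw [if_neg (by omega), if_neg (by omega)]
      convert L.mul_mem_left (TT R p p) (ih (w - p) (by omega)) using 1
      rw [show w + 1 - p = w - p + 1 by omega]
      simp only [smul_eq_C_mul]; ring

theorem MM_mul (p : ℕ) (L : Ideal (MvPolynomial (Fin (p + 1)) R))
    (hL : ∀ i j, i ≤ p → j ≤ p → TT R p i * TT R p j - MM R p 2 (i + j) ∈ L)
    (n i w : ℕ) (hi : i ≤ p) (hw : w ≤ n * p) :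
    TT R p i * MM R p n w - MM R p (n + 1) (i + w) ∈ L := by
  induction n generalizing w with
  | zero =>
    obtain rfl : w = 0 := by omega
    simp [MM, hi]
  | succ n ih =>
    rw [add_mul, one_mul] at hw
    by_cases h : w ≤ p
    · have h1 : MM R p (n + 1 + 1) (i + w) = TT R p 0 ^ n * MM R p 2 (i + w) := by
        by_cases h2 : i + w ≤ p
        · simp only [MM, h2, if_true]; ring
        · have h3 : i + w - p ≤ p := by omega
          simp only [MM, h2, h3, if_true, if_false]; ring
      have h4 : MM R p (n + 1) w = TT R p 0 ^ n * TT R p w := by simp only [MM, h, if_true]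
      rw [h1, h4]
      convert L.mul_mem_left (TT R p 0 ^ n) (hL i w hi h) using 1
      ring
    · have h1 : MM R p (n + 1 + 1) (i + w) = TT R p p * MM R p (n + 1) (i + (w - p)) := by
        rw [show i + (w - p) = i + w - p by omega]
        rw [MM, if_neg (by omega)]
      have h4 : MM R p (n + 1) w = TT R p p * MM R p n (w - p) := by rw [MM, if_neg h]
      rw [h1, h4]
      convert L.mul_mem_left (TT R p p) (ih (w - p) (by omega)) using 1
      ring

theorem hom_one (p : ℕ) : homogeneousSubmodule (Fin (p + 1)) R 1
    = Submodule.span R (TT R p '' Finset.range (p + 1)) := by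
  rw [homogeneousSubmodule_one_eq_span_X]
  congr 1
  ext f
  simp only [Set.mem_range, Set.mem_image, Finset.coe_range, Set.mem_Iio]
  constructor
  · rintro ⟨i, rfl⟩
    exact ⟨i, i.2, by simp [TT, i.2]⟩
  · rintro ⟨i, hi, rfl⟩
    exact ⟨⟨i, hi⟩, by simp [TT, hi]⟩

theorem aux_conclude (x y : R) (hx : ∀ a, x * a = 0 → a = 0)
    (hxy : ∀ a k, x ∣ a * y ^ k → x ∣ a) (p n : ℕ)
    (N : Submodule R (MvPolynomial (Fin (p + 1)) R))
    (hN : N ≤ (presKer (GG x y p)).restrictScalars R)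
    (hlin : ∀ w < n * p, y • MM R p n w - x • MM R p n (w + 1) ∈ N)
    (F : MvPolynomial (Fin (p + 1)) R) (hF : F ∈ presKer (GG x y p))
    (hFN : F ∈ N ⊔ Submodule.span R (MM R p n '' Finset.range (n * p + 1))) : F ∈ N := by
  obtain ⟨a, ha, b, hb, rfl⟩ := Submodule.mem_sup.mp hFN
  refine N.add_mem ha ?_
  obtain ⟨c, rfl⟩ := (Submodule.mem_span_image_finset_iff_exists_fun' R).mp hb
  apply aux_core x y hx hxy N _ _ c hlin
  have h1 : ∑ i ∈ Finset.range (n * p + 1), c i • MM R p n i ∈ presKer (GG x y p) :=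
    ((presKer (GG x y p)).add_mem_iff_right (hN ha)).mp hF
  rw [presKer, RingHom.mem_ker, map_sum] at h1
  have h2 : ∑ w ∈ Finset.range (n * p + 1),
      Polynomial.C (c w * (x ^ (n * p - w) * y ^ w)) * Polynomial.X ^ n = 0 := by
    rw [← h1]
    refine Finset.sum_congr rfl fun w hw => ?_
    have := rees_MM x y p n w (by have := Finset.mem_range.mp hw; omega)
    simp only [map_smul, this, Polynomial.smul_eq_C_mul, map_mul, mul_assoc]
  rw [← Finset.sum_mul, ← map_sum] at h2
  have := congrArg (fun f => Polynomial.coeff f n) h2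
  simpa only [Polynomial.coeff_C_mul, Polynomial.coeff_X_pow_self, mul_one,
    Polynomial.coeff_zero] using this

theorem hom_le_sup (p : ℕ) (L : Ideal (MvPolynomial (Fin (p + 1)) R))
    (hL : ∀ i j, i ≤ p → j ≤ p → TT R p i * TT R p j - MM R p 2 (i + j) ∈ L) (n : ℕ) :
    homogeneousSubmodule (Fin (p + 1)) R n
      ≤ L.restrictScalars R ⊔ Submodule.span R (MM R p n '' Finset.range (n * p + 1)) := by
  induction n with
  | zero =>
    refine le_trans ?_ le_sup_right
    rw [← homogeneousSubmodule_one_pow, pow_zero, Submodule.one_eq_span]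
    simp [MM]
  | succ n ih =>
    rw [← homogeneousSubmodule_one_pow, pow_succ', homogeneousSubmodule_one_pow]
    refine le_trans (mul_le_mul' le_rfl ih) ?_
    rw [Submodule.mul_sup, sup_le_iff]
    constructor
    · refine le_trans ?_ le_sup_left
      rw [Submodule.mul_le]
      intro a _ b hb
      exact L.mul_mem_left a hb
    · rw [hom_one, Submodule.span_mul_span, Submodule.span_le]
      rintro _ ⟨_, ⟨i, hi, rfl⟩, _, ⟨w, hw, rfl⟩, rfl⟩
      simp only [Finset.coe_range, Set.mem_Iio] at hi hw
      have h1 := MM_mul p L hL n i w (by omega) (by omega)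
      have h2 : MM R p (n + 1) (i + w) ∈
          Submodule.span R (MM R p (n + 1) '' Finset.range ((n + 1) * p + 1)) := by
        refine Submodule.subset_span ⟨_, ?_, rfl⟩
        simp only [Finset.coe_range, Set.mem_Iio, add_mul, one_mul]
        omega
      have h3 := Submodule.add_mem_sup (S := L.restrictScalars R) h1 h2
      simpa using h3

theorem presKerLe_le {m : ℕ} (g : Fin m → R) (d : ℕ) : presKerLe g d ≤ presKer g :=
  Ideal.span_le.mpr fun _ h => h.1

theorem lin_mem (x y : R) (p w : ℕ) (hw : w < p) (d : ℕ) (hd : 1 ≤ d) :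
    y • TT R p w - x • TT R p (w + 1) ∈ presKerLe (GG x y p) d := by
  refine Ideal.subset_span ⟨?_, 1, hd, ?_⟩
  · rw [presKer, RingHom.mem_ker, map_sub, map_smul, map_smul, rees_TT _ _ _ _ hw.le,
      rees_TT _ _ _ (w + 1) hw, show p - w = p - (w + 1) + 1 by omega]
    simp only [Polynomial.smul_eq_C_mul, map_mul, map_pow]
    ring
  · exact ((homogeneousSubmodule _ R 1).sub_mem
      ((homogeneousSubmodule _ R 1).smul_mem y (TT_hom p w))
      ((homogeneousSubmodule _ R 1).smul_mem x (TT_hom p (w + 1))))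

theorem quad_ker (x y : R) (p i j : ℕ) (hi : i ≤ p) (hj : j ≤ p) :
    TT R p i * TT R p j - MM R p 2 (i + j) ∈ presKer (GG x y p) := by
  rw [presKer, RingHom.mem_ker, map_sub, map_mul, rees_TT _ _ _ _ hi,
      rees_TT _ _ _ _ hj, rees_MM _ _ _ _ _ (by omega),
      show 2 * p - (i + j) = (p - i) + (p - j) by omega]
  simp only [map_mul, map_pow]
  ring

theorem quad_hom (p i j : ℕ) : (TT R p i * TT R p j - MM R p 2 (i + j)).IsHomogeneous 2 :=
  (homogeneousSubmodule _ R 2).sub_mem ((TT_hom p i).mul (TT_hom p j)) (MM_hom p 2 _)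

theorem hom_ker_le (x y : R) (hx : ∀ a, x * a = 0 → a = 0)
    (hxy : ∀ a k, x ∣ a * y ^ k → x ∣ a) (p n : ℕ) (hp : 1 ≤ p)
    (F : MvPolynomial (Fin (p + 1)) R) (hF : F ∈ presKer (GG x y p)) (hn : F.IsHomogeneous n) :
    F ∈ presKerLe (GG x y p) 2 := by
  refine aux_conclude x y hx hxy p n ((presKerLe (GG x y p) 2).restrictScalars R)
    (fun _ h => presKerLe_le _ _ h)
    (fun w hw => MM_lin x y p hp _ (fun w hw => lin_mem x y p w hw 2 (by omega)) n w hw) F hF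
    (hom_le_sup p (presKerLe (GG x y p) 2) (fun i j hi hj => ?_) n hn)
  exact Ideal.subset_span ⟨quad_ker x y p i j hi hj, 2, le_rfl, quad_hom p i j⟩

theorem rees_hom {m : ℕ} (g : Fin m → R) (F : MvPolynomial (Fin m) R) (n : ℕ)
    (hF : F.IsHomogeneous n) : ∃ r, reesPres g F = Polynomial.C r * Polynomial.X ^ n := by
  refine ⟨aeval g F, ?_⟩
  induction hF using IsWeightedHomogeneous.induction_on with
  | zero => simp
  | add p q _ _ hp hq => rw [map_add, hp, hq, map_add, map_add, add_mul]
  | monomial d r hr =>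
    have : n = ∑ i ∈ d.support, d i := by
      rw [← hr, ← Finsupp.degree_apply, Finsupp.degree_eq_weight_one, ← Pi.one_def]
    rw [this]
    simp only [reesPres, aeval_monomial, Finsupp.prod, mul_pow, Finset.prod_mul_distrib,
      Finset.prod_pow_eq_pow_sum, map_mul, map_prod, map_pow]
    simp [mul_assoc, Polynomial.algebraMap_eq]

theorem comp_ker {m : ℕ} (g : Fin m → R) (F : MvPolynomial (Fin m) R) (hF : F ∈ presKer g)
    (n : ℕ) : homogeneousComponent n F ∈ presKer g := by
  rw [presKer, RingHom.mem_ker] at hF ⊢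
  choose r hr using fun k => rees_hom g _ k (homogeneousComponent_isHomogeneous k F)
  rw [← sum_homogeneousComponent F, map_sum] at hF
  by_cases hn : n < F.totalDegree + 1
  · have := congrArg (fun f => Polynomial.coeff f n) hF
    simp only [hr, Polynomial.finsetSum_coeff, Polynomial.coeff_C_mul, Polynomial.coeff_X_pow,
      mul_ite, mul_one, mul_zero, Polynomial.coeff_zero, Finset.sum_ite_eq, Finset.mem_range, hn,
      if_true] at this
    simp [hr, this]
  · rw [homogeneousComponent_eq_zero _ _ (by omega), map_zero]

theorem ker_eq (x y : R) (hx : ∀ a, x * a = 0 → a = 0)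
    (hxy : ∀ a k, x ∣ a * y ^ k → x ∣ a) (p : ℕ) (hp : 1 ≤ p) :
    presKer (GG x y p) = presKerLe (GG x y p) 2 := by
  refine le_antisymm (fun F hF => ?_) (presKerLe_le _ _)
  rw [← sum_homogeneousComponent F]
  exact Ideal.sum_mem _ fun n _ => hom_ker_le x y hx hxy p n hp _ (comp_ker _ F hF n)
    (homogeneousComponent_isHomogeneous n F)
end core

section count
variable {R : Type*} [CommRing R]

/-- index set for the quadrics: pairs `a < b < p` -/
abbrev II (p : ℕ) := Σ b : Fin p, Fin (b : ℕ)

theorem card_II (p : ℕ) : Fintype.card (II p) = p.choose 2 := by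
  rw [Fintype.card_sigma]
  simp only [Fintype.card_fin]
  rw [Fin.sum_univ_eq_sum_range (fun i => i), Finset.sum_range_id, Nat.choose_two_right]

variable (R) in
noncomputable def qq (p : ℕ) (s : II p) : MvPolynomial (Fin (p + 1)) R :=
  TT R p ((s.2 : ℕ) + 1) * TT R p (s.1 : ℕ) - MM R p 2 ((s.2 : ℕ) + 1 + (s.1 : ℕ))

theorem qq_mem (x y : R) (p : ℕ) (s : II p) : qq R p s ∈ presKerHomog (GG x y p) 2 :=
  ⟨quad_hom p _ _, quad_ker x y p _ _ (by have := s.1.2; have := s.2.2; omega)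
    (by have := s.1.2; omega)⟩

noncomputable def ee (p : ℕ) (s : II p) : Fin (p + 1) →₀ ℕ :=
  Finsupp.single ⟨(s.2 : ℕ) + 1, by have := s.1.2; have := s.2.2; omega⟩ 1
    + Finsupp.single ⟨(s.1 : ℕ), by have := s.1.2; omega⟩ 1

theorem ee_inj (p : ℕ) : Function.Injective (ee p) := by
  rintro ⟨⟨b, hb⟩, ⟨a, ha⟩⟩ ⟨⟨b', hb'⟩, ⟨a', ha'⟩⟩ h
  simp only [ee] at h
  rw [Finsupp.single_add_single_eq_single_add_single one_ne_zero one_ne_zero] at h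
  simp only [Fin.mk.injEq] at h ha ha'
  obtain ⟨rfl, rfl⟩ : a = a' ∧ b = b' := by omega
  rfl

theorem ee_zero (p : ℕ) (s : II p) : ee p s ⟨0, by omega⟩ = 0 := by
  have := s.1.2; have := s.2.2
  simp only [ee, Finsupp.add_apply, Finsupp.single_apply, Fin.mk.injEq]
  rw [if_neg (by omega), if_neg (by omega), add_zero]

theorem ee_last (p : ℕ) (s : II p) : ee p s ⟨p, by omega⟩ = 0 := by
  have := s.1.2; have := s.2.2
  simp only [ee, Finsupp.add_apply, Finsupp.single_apply, Fin.mk.injEq]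
  rw [if_neg (by omega), if_neg (by omega), add_zero]

theorem coeff_qq (p : ℕ) (s s' : II p) : coeff (ee p s) (qq R p s') = if s' = s then 1 else 0 := by
  classical
  have h0 : coeff (ee p s) (MM R p 2 ((s'.2 : ℕ) + 1 + (s'.1 : ℕ))) = 0 := by
    unfold MM
    split_ifs
    · rw [pow_one, TT, dif_pos (by omega), coeff_X_mul', if_neg]
      exact fun h => Finsupp.mem_support_iff.mp h (ee_zero p s)
    · rw [TT, dif_pos (by omega), coeff_X_mul', if_neg]
      exact fun h => Finsupp.mem_support_iff.mp h (ee_last p s)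
  rw [qq, coeff_sub, h0, sub_zero]
  have h1 : TT R p ((s'.2 : ℕ) + 1) * TT R p (s'.1 : ℕ) = monomial (ee p s') 1 := by
    have := s'.1.2; have := s'.2.2
    rw [TT, TT, dif_pos (by omega), dif_pos (by omega), X, X, monomial_mul, one_mul]
    rfl
  rw [h1, coeff_monomial]
  simp only [(ee_inj p).eq_iff]

theorem le_one_coeff [IsLocalRing R] (x y : R) (hx : ∀ a, x * a = 0 → a = 0)
    (hxy : ∀ a k, x ∣ a * y ^ k → x ∣ a)
    (hxm : x ∈ IsLocalRing.maximalIdeal R) (hym : y ∈ IsLocalRing.maximalIdeal R)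
    (p : ℕ) (hp : 1 ≤ p) :
    presKerLe (GG x y p) 1 ≤ Ideal.map C (IsLocalRing.maximalIdeal R) := by
  refine Ideal.span_le.mpr ?_
  rintro F ⟨hF, k, hk, hFk⟩
  obtain rfl | rfl : k = 0 ∨ k = 1 := by omega
  · have h1 := totalDegree_eq_zero_iff_eq_C.mp (Nat.le_zero.mp hFk.totalDegree_le)
    rw [h1, presKer, RingHom.mem_ker, reesPres, aeval_C, Polynomial.algebraMap_eq,
      Polynomial.C_eq_zero] at hF
    rw [h1, hF, map_zero]
    exact Ideal.zero_mem _
  · set J : Ideal (MvPolynomial (Fin (p + 1)) R) :=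
      Ideal.span {f | ∃ w < p, f = y • TT R p w - x • TT R p (w + 1)} with hJ
    have hJ1 : J ≤ presKer (GG x y p) := by
      refine Ideal.span_le.mpr ?_
      rintro _ ⟨w, hw, rfl⟩
      exact presKerLe_le _ _ (lin_mem x y p w hw 1 le_rfl)
    have hJ2 : J ≤ Ideal.map C (IsLocalRing.maximalIdeal R) := by
      refine Ideal.span_le.mpr ?_
      rintro _ ⟨w, hw, rfl⟩
      simp only [smul_eq_C_mul]
      exact Ideal.sub_mem _ (Ideal.mul_mem_right _ _ (Ideal.mem_map_of_mem _ hym))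
        (Ideal.mul_mem_right _ _ (Ideal.mem_map_of_mem _ hxm))
    refine hJ2 (aux_conclude x y hx hxy p 1 (J.restrictScalars R) (fun _ h => hJ1 h)
      (fun w hw => MM_lin x y p hp J (fun w hw => Ideal.subset_span ⟨w, hw, rfl⟩) 1 w hw) F hF ?_)
    refine Submodule.mem_sup_right ?_
    have h1 : F ∈ homogeneousSubmodule (Fin (p + 1)) R 1 := hFk
    rw [hom_one] at h1
    refine Submodule.span_mono ?_ h1
    rintro _ ⟨i, hi, rfl⟩
    simp only [Finset.coe_range, Set.mem_Iio] at hi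
    refine ⟨i, by simpa using hi, ?_⟩
    simp [MM, show i ≤ p by omega]

theorem quad_span (p i j : ℕ) (hi : i ≤ p) (hj : j ≤ p) :
    TT R p i * TT R p j - MM R p 2 (i + j) ∈ Submodule.span R (Set.range (qq R p)) := by
  wlog hij : i ≤ j generalizing i j
  · rw [mul_comm, add_comm i j]; exact this j i hj hi (by omega)
  rcases Nat.eq_zero_or_pos i with rfl | h0
  · simp [MM, hj]
  rcases Nat.eq_or_lt_of_le hj with rfl | hjp
  · simp [MM, hi, show ¬ (i = 0) by omega, mul_comm]
  · refine Submodule.subset_span ⟨⟨⟨j, hjp⟩, ⟨i - 1, by simp only; omega⟩⟩, ?_⟩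
    simp only [qq, show i - 1 + 1 = i by omega]

theorem hom_two (x y : R) (hx : ∀ a, x * a = 0 → a = 0)
    (hxy : ∀ a k, x ∣ a * y ^ k → x ∣ a) (p : ℕ) (hp : 1 ≤ p)
    (F : MvPolynomial (Fin (p + 1)) R) (hF : F ∈ presKerHomog (GG x y p) 2) :
    F ∈ (presKerLe (GG x y p) 1).restrictScalars R ⊔ Submodule.span R (Set.range (qq R p)) := by
  refine aux_conclude x y hx hxy p 2 _ ?_ ?_ F hF.2 ?_
  · refine sup_le (fun _ h => presKerLe_le _ _ h) (Submodule.span_le.mpr ?_)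
    rintro _ ⟨s, rfl⟩
    exact (qq_mem x y p s).2
  · intro w hw
    exact Submodule.mem_sup_left
      (MM_lin x y p hp (presKerLe (GG x y p) 1) (fun w hw => lin_mem x y p w hw 1 le_rfl) 2 w hw)
  · have h1 : F ∈ homogeneousSubmodule (Fin (p + 1)) R 2 := hF.1
    rw [← homogeneousSubmodule_one_pow, pow_two, hom_one, Submodule.span_mul_span] at h1
    refine Submodule.span_le.mpr ?_ h1
    rintro _ ⟨_, ⟨i, hi, rfl⟩, _, ⟨j, hj, rfl⟩, rfl⟩
    simp only [Finset.coe_range, Set.mem_Iio] at hi hj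
    have h2 := quad_span (R := R) p i j (by omega) (by omega)
    have h3 : MM R p 2 (i + j) ∈
          Submodule.span R (MM R p 2 '' Finset.range (2 * p + 1)) := by
      refine Submodule.subset_span ⟨_, ?_, rfl⟩
      simp only [Finset.coe_range, Set.mem_Iio]
      omega
    have h4 := Submodule.add_mem_sup
      (Submodule.mem_sup_right (S := (presKerLe (GG x y p) 1).restrictScalars R) h2) h3
    simpa using h4

noncomputable def phi0 [IsLocalRing R] (x y : R) (p : ℕ) :
    presKerHomog (GG x y p) 2 →ₗ[R] (II p → IsLocalRing.ResidueField R) :=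
  LinearMap.pi fun s =>
    (Algebra.linearMap R (IsLocalRing.ResidueField R)).comp
      ((lcoeff R (ee p s)).comp (presKerHomog (GG x y p) 2).subtype)

theorem phi0_apply [IsLocalRing R] (x y : R) (p : ℕ) (F : presKerHomog (GG x y p) 2) (s : II p) :
    phi0 x y p F s = IsLocalRing.residue R (coeff (ee p s) F.1) := rfl

theorem count_main [IsLocalRing R] (x y : R) (hx : ∀ a, x * a = 0 → a = 0)
    (hxy : ∀ a k, x ∣ a * y ^ k → x ∣ a)
    (hxm : x ∈ IsLocalRing.maximalIdeal R) (hym : y ∈ IsLocalRing.maximalIdeal R)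
    (p : ℕ) (hp : 1 ≤ p) :
    IsLeast {c : ℕ | ∃ S : Finset (presE (GG x y p) 2),
      S.card = c ∧ Submodule.span R (S : Set (presE (GG x y p) 2)) = ⊤} (p.choose 2) := by
  classical
  have hle := le_one_coeff x y hx hxy hxm hym p hp
  let D := Submodule.comap (presKerHomog (GG x y p) 2).subtype
    ((presKerLe (GG x y p) (2 - 1)).restrictScalars R)
  have hker : D ≤ LinearMap.ker (phi0 x y p) := by
    intro F hF
    rw [LinearMap.mem_ker]
    ext s
    rw [phi0_apply]
    exact (IsLocalRing.residue_eq_zero_iff _).mpr (mem_map_C_iff.mp (hle hF) _)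
  let φ : presE (GG x y p) 2 →ₗ[R] (II p → IsLocalRing.ResidueField R) :=
    Submodule.liftQ D (phi0 x y p) hker
  let qv : II p → presE (GG x y p) 2 := fun s => Submodule.Quotient.mk ⟨qq R p s, qq_mem x y p s⟩
  have hφ : ∀ s, φ (qv s) = Pi.single s 1 := by
    intro s
    ext t
    change phi0 x y p ⟨qq R p s, qq_mem x y p s⟩ t = _
    rw [phi0_apply, coeff_qq, Pi.single_apply]
    by_cases h : s = t
    · simp [h]
    · simp [h, Ne.symm h]
  constructor
  · refine ⟨Finset.univ.image qv, ?_, ?_⟩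
    · rw [Finset.card_image_of_injective, Finset.card_univ, card_II]
      intro s t h
      have h2 : Pi.single (M := fun _ => IsLocalRing.ResidueField R) s 1 = Pi.single t 1 := by
        rw [← hφ, ← hφ, h]
      by_contra hne
      have := congrFun h2 s
      simp [hne] at this
    · rw [eq_top_iff]
      rintro v -
      obtain ⟨F, rfl⟩ := Submodule.Quotient.mk_surjective _ v
      obtain ⟨a, ha, b, hb, hab⟩ := Submodule.mem_sup.mp (hom_two x y hx hxy p hp F.1 F.2)
      obtain ⟨c, rfl⟩ := (Submodule.mem_span_range_iff_exists_fun R).mp hb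
      have h1 : (Submodule.Quotient.mk F : presE (GG x y p) 2) = ∑ s, c s • qv s := by
        have h2 : ∑ s, c s • qv s = (Submodule.Quotient.mk
            (∑ s, c s • (⟨qq R p s, qq_mem x y p s⟩ : presKerHomog (GG x y p) 2)) :
              presE (GG x y p) 2) := by
          rw [← Submodule.mkQ_apply, map_sum]
          rfl
        rw [h2, Submodule.Quotient.eq, Submodule.mem_comap]
        have h3 : (presKerHomog (GG x y p) 2).subtype
          (F - ∑ s, c s • (⟨qq R p s, qq_mem x y p s⟩ : presKerHomog (GG x y p) 2)) = a := by
          rw [map_sub, map_sum]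
          simp only [map_smul, Submodule.subtype_apply]
          rw [← hab]; abel
        rw [h3]
        exact ha
      rw [h1]
      refine Submodule.sum_mem _ fun s _ => Submodule.smul_mem _ _ (Submodule.subset_span ?_)
      simp
  · rintro c ⟨S, rfl, hS⟩
    have htop : Submodule.span (IsLocalRing.ResidueField R)
        ((S.image φ : Finset _) : Set (II p → IsLocalRing.ResidueField R)) = ⊤ := by
      rw [eq_top_iff, ← (Pi.basisFun (IsLocalRing.ResidueField R) (II p)).span_eq,
        Submodule.span_le]
      rintro _ ⟨s, rfl⟩
      rw [Pi.basisFun_apply, ← hφ]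
      have h1 : φ (qv s) ∈ Submodule.map φ (Submodule.span R (S : Set (presE (GG x y p) 2))) := by
        rw [hS]; exact Submodule.mem_map_of_mem trivial
      rw [Submodule.map_span] at h1
      rw [Finset.coe_image]
      exact Submodule.span_le_restrictScalars R (IsLocalRing.ResidueField R) _ h1
    have h2 := finrank_span_finset_le_card (R := IsLocalRing.ResidueField R) (S.image φ)
    rw [Set.finrank, htop, finrank_top, Module.finrank_fintype_fun_eq_card, card_II] at h2
    exact h2.trans Finset.card_image_le
end count

/-- Let `(R,m)` be a two-dimensional regular local ring with regular system of
parameters `x,y` and let `p ≥ 2`.  Present the Rees algebra of `mᵖ` with respect to the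
generators `xᵖ, xᵖ⁻¹y, …, yᵖ`.  Then `rt(mᵖ) = 2` and a minimal homogeneous generating
set of `Q` contains exactly `C(p,2)` equations of degree `2`, i.e. the minimal number of
generators of `(Q/Q⟨1⟩)₂` is `C(p,2)`. -/
theorem statement9 {R : Type*} [CommRing R] [IsNoetherianRing R] [IsLocalRing R]
    (hdim : ringKrullDim R = (2 : WithBot (WithTop ℕ)))
    (x y : R) (hm : IsLocalRing.maximalIdeal R = Ideal.span {x, y})
    (p : ℕ) (hp : 2 ≤ p) :
    IsLeast {N : ℕ | 1 ≤ N ∧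
      presKer (fun i : Fin (p + 1) => x ^ (p - (i : ℕ)) * y ^ (i : ℕ))
        = presKerLe (fun i : Fin (p + 1) => x ^ (p - (i : ℕ)) * y ^ (i : ℕ)) N} 2 ∧
    IsLeast {c : ℕ | ∃ S : Finset (presE (fun i : Fin (p + 1) => x ^ (p - (i : ℕ)) * y ^ (i : ℕ)) 2),
      S.card = c ∧
      Submodule.span R (S : Set (presE (fun i : Fin (p + 1) => x ^ (p - (i : ℕ)) * y ^ (i : ℕ)) 2)) = ⊤}
      (p.choose 2) := by
  have hD := aux_domain hdim x y hm
  have hP := aux_prime hdim x y hm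
  have hk := aux_pow_notMem hdim x y hm
  have hxm : x ∈ IsLocalRing.maximalIdeal R := by
    rw [hm]; exact Ideal.subset_span (by simp)
  have hym : y ∈ IsLocalRing.maximalIdeal R := by
    rw [hm]; exact Ideal.subset_span (by simp)
  have hx0 : x ≠ 0 := by
    rintro rfl
    have hm2 : IsLocalRing.maximalIdeal R = Ideal.span {y, 0} := by rw [hm, Set.pair_comm]
    exact aux_pow_notMem hdim y 0 hm2 1 (by simp)
  have hx : ∀ a, x * a = 0 → a = 0 := fun a h => (mul_eq_zero.mp h).resolve_left hx0
  have hxy : ∀ a k, x ∣ a * y ^ k → x ∣ a := by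
    intro a k h
    rw [← Ideal.mem_span_singleton] at h ⊢
    exact (hP.mem_or_mem h).resolve_right (hk k)
  have hc := count_main x y hx hxy hxm hym p (by omega)
  refine ⟨⟨⟨by omega, ker_eq x y hx hxy p (by omega)⟩, ?_⟩, hc⟩
  rintro N ⟨hN1, hN⟩
  by_contra hlt
  obtain rfl : N = 1 := by omega
  have h0 : p.choose 2 ≤ 0 := by
    refine hc.2 ⟨∅, rfl, ?_⟩
    rw [eq_top_iff]
    rintro v -
    obtain ⟨F, rfl⟩ := Submodule.Quotient.mk_surjective _ v
    have h1 : (Submodule.Quotient.mk F : presE (GG x y p) 2) = 0 := by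
      rw [Submodule.Quotient.mk_eq_zero]
      have h2 := F.2.2
      change F.1 ∈ presKerLe (GG x y p) 1
      rw [← hN]
      exact h2
    rw [h1]
    exact Submodule.zero_mem _
  have := Nat.choose_pos hp
  omega
end
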